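/- arXiv:1804.10841 — 2 statements merged into one kernel-verified Lean document; each statement's English description precedes it below -/
import Mathlib

section
/- In the setting below, for every M > 0 there exists a constant C₀ > 0, depending only on p, c₁, c₂, C_U, u₋, u₊, f and M (and not on T), such that whenever ‖φ(0,·)‖_{L²} + ‖∂ₓφ(0,·)‖_{L²} + ‖∂ₓ²φ(0,·)‖_{L²} + sup_{x∈ℝ}|φ(0,x)| ≤ M, then, setting N := sup_{(t,x)∈[0,T]×ℝ} (1+(∂ₓφ(t,x))²)^{1/2}, for all t ∈ [0,T]: ∫_ℝ (1+(∂ₓφ(t,x))²)^{p−1}·(∂ₓ²φ(t,x))² dx + ∫₀^t ∫_ℝ (1+(∂ₓφ(τ,x))²)^{(p−1)/2}·(∂ₜ∂ₓφ(τ,x))² dx dτ ≤ C₀ · N^{3(1−p)}. -/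
open MeasureTheory Filter Set intervalIntegral


/-- `L²` norm in the space variable. -/
noncomputable def L2norm (g : ℝ → ℝ) : ℝ := (∫ x : ℝ, (g x) ^ 2) ^ ((1 : ℝ) / 2)

namespace EE

/-- Space derivative. -/
noncomputable def Dx (g : ℝ → ℝ → ℝ) : ℝ → ℝ → ℝ := fun t x => deriv (g t) x
/-- Time derivative. -/
noncomputable def Dt (g : ℝ → ℝ → ℝ) : ℝ → ℝ → ℝ := fun t x => deriv (fun s => g s x) t
/-- Joint smoothness. -/
def Sm (g : ℝ → ℝ → ℝ) : Prop := ContDiff ℝ (⊤ : ℕ∞) (fun q : ℝ × ℝ => g q.1 q.2)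

lemma Sm.slice_x {g} (h : Sm g) (t : ℝ) : ContDiff ℝ (⊤ : ℕ∞) (g t) := by
  have : ContDiff ℝ (⊤ : ℕ∞) (fun x : ℝ => ((t, x) : ℝ × ℝ)) := by fun_prop
  exact ContDiff.comp (g := fun q : ℝ × ℝ => g q.1 q.2) h this

lemma Sm.slice_t {g} (h : Sm g) (x : ℝ) : ContDiff ℝ (⊤ : ℕ∞) (fun s => g s x) := by
  have : ContDiff ℝ (⊤ : ℕ∞) (fun t : ℝ => ((t, x) : ℝ × ℝ)) := by fun_prop
  exact ContDiff.comp (g := fun q : ℝ × ℝ => g q.1 q.2) h this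

lemma Sm.hx {g} (h : Sm g) (t x : ℝ) : HasDerivAt (g t) (Dx g t x) x :=
  (((h.slice_x t).differentiable (by simp)) x).hasDerivAt

lemma Sm.ht {g} (h : Sm g) (t x : ℝ) : HasDerivAt (fun s => g s x) (Dt g t x) t :=
  (((h.slice_t x).differentiable (by simp)) t).hasDerivAt

lemma Sm.dx_eq {g} (h : Sm g) (t x : ℝ) :
    Dx g t x = fderiv ℝ (fun q : ℝ × ℝ => g q.1 q.2) (t, x) (0, 1) := by
  have h1 := ((h.differentiable (by simp)) (t, x)).hasFDerivAt
  have h2 : HasDerivAt (fun y : ℝ => ((t, y) : ℝ × ℝ)) (0, 1) x :=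
    (hasDerivAt_const x t).prodMk (hasDerivAt_id x)
  exact (h1.comp_hasDerivAt x h2).deriv

lemma Sm.dt_eq {g} (h : Sm g) (t x : ℝ) :
    Dt g t x = fderiv ℝ (fun q : ℝ × ℝ => g q.1 q.2) (t, x) (1, 0) := by
  have h1 := ((h.differentiable (by simp)) (t, x)).hasFDerivAt
  have h2 : HasDerivAt (fun y : ℝ => ((y, x) : ℝ × ℝ)) (1, 0) t :=
    (hasDerivAt_id t).prodMk (hasDerivAt_const t x)
  exact (h1.comp_hasDerivAt t h2).deriv

lemma Sm.fd {g} (h : Sm g) :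
    ContDiff ℝ (⊤ : ℕ∞) (fderiv ℝ (fun q : ℝ × ℝ => g q.1 q.2)) :=
  ContDiff.fderiv_right h (by simp)

lemma Sm.dx {g} (h : Sm g) : Sm (Dx g) := by
  have : (fun q : ℝ × ℝ => Dx g q.1 q.2) =
      fun q => fderiv ℝ (fun q : ℝ × ℝ => g q.1 q.2) q (0, 1) := by
    funext q; exact h.dx_eq q.1 q.2
  unfold Sm
  rw [this]
  exact h.fd.clm_apply contDiff_const

lemma Sm.dt {g} (h : Sm g) : Sm (Dt g) := by
  have : (fun q : ℝ × ℝ => Dt g q.1 q.2) =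
      fun q => fderiv ℝ (fun q : ℝ × ℝ => g q.1 q.2) q (1, 0) := by
    funext q; exact h.dt_eq q.1 q.2
  unfold Sm
  rw [this]
  exact h.fd.clm_apply contDiff_const

lemma Sm.comm {g} (h : Sm g) (t x : ℝ) : Dt (Dx g) t x = Dx (Dt g) t x := by
  rw [h.dx.dt_eq, h.dt.dx_eq]
  have e1 : (fun q : ℝ × ℝ => Dx g q.1 q.2) =
      fun q => fderiv ℝ (fun q : ℝ × ℝ => g q.1 q.2) q (0, 1) := by
    funext q; exact h.dx_eq q.1 q.2
  have e2 : (fun q : ℝ × ℝ => Dt g q.1 q.2) =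
      fun q => fderiv ℝ (fun q : ℝ × ℝ => g q.1 q.2) q (1, 0) := by
    funext q; exact h.dt_eq q.1 q.2
  rw [e1, e2]
  have hd : DifferentiableAt ℝ (fderiv ℝ (fun q : ℝ × ℝ => g q.1 q.2)) (t, x) :=
    (h.fd.differentiable (by simp)) (t, x)
  rw [fderiv_clm_apply hd (by fun_prop), fderiv_clm_apply hd (by fun_prop)]
  simp
  have hs : IsSymmSndFDerivAt ℝ (fun q : ℝ × ℝ => g q.1 q.2) (t, x) :=
    (ContDiff.contDiffAt h).isSymmSndFDerivAt (by
      rw [minSmoothness_of_isRCLikeNormedField]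
      exact WithTop.coe_le_coe.2 (le_top : (2 : ℕ∞) ≤ ⊤))
  exact hs _ _

lemma Sm.cont {g} (h : Sm g) : Continuous (fun q : ℝ × ℝ => g q.1 q.2) :=
  ContDiff.continuous h

lemma Sm.add {g k} (h : Sm g) (h' : Sm k) : Sm (fun t x => g t x + k t x) :=
  ContDiff.add h h'

lemma Sm.mul {g k} (h : Sm g) (h' : Sm k) : Sm (fun t x => g t x * k t x) :=
  ContDiff.mul h h'

lemma Sm.comp {g} (h : Sm g) {F : ℝ → ℝ} (hF : ContDiff ℝ (⊤ : ℕ∞) F) :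
    Sm (fun t x => F (g t x)) :=
  ContDiff.comp hF h

/-- Bounded on the strip. -/
def Bd (T : ℝ) (g : ℝ → ℝ → ℝ) : Prop := ∃ C : ℝ, 0 ≤ C ∧ ∀ t ∈ Icc (0 : ℝ) T, ∀ x, |g t x| ≤ C
/-- Dominated by `e` on the strip. -/
def Dm (T : ℝ) (e g : ℝ → ℝ → ℝ) : Prop :=
  ∃ C : ℝ, 0 ≤ C ∧ ∀ t ∈ Icc (0 : ℝ) T, ∀ x, |g t x| ≤ C * e t x
/-- Dominated by `e ^ 2` on the strip. -/
def Dm2 (T : ℝ) (e g : ℝ → ℝ → ℝ) : Prop :=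
  ∃ C : ℝ, 0 ≤ C ∧ ∀ t ∈ Icc (0 : ℝ) T, ∀ x, |g t x| ≤ C * e t x ^ 2

section dom
variable {T : ℝ} {e g h : ℝ → ℝ → ℝ}

lemma Bd.add (hg : Bd T g) (hh : Bd T h) : Bd T (fun t x => g t x + h t x) := by
  obtain ⟨C, hC, H⟩ := hg
  obtain ⟨C', hC', H'⟩ := hh
  exact ⟨C + C', by positivity, fun t ht x =>
    (abs_add_le _ _).trans (add_le_add (H t ht x) (H' t ht x))⟩
lemma Bd.mul (hg : Bd T g) (hh : Bd T h) : Bd T (fun t x => g t x * h t x) := by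
  obtain ⟨C, hC, H⟩ := hg
  obtain ⟨C', hC', H'⟩ := hh
  refine ⟨C * C', by positivity, fun t ht x => ?_⟩
  rw [abs_mul]
  exact mul_le_mul (H t ht x) (H' t ht x) (abs_nonneg _) hC
lemma Bd.neg (hg : Bd T g) : Bd T (fun t x => - g t x) := by
  obtain ⟨C, hC, H⟩ := hg
  exact ⟨C, hC, fun t ht x => by rw [abs_neg]; exact H t ht x⟩
lemma Bd.const (c : ℝ) : Bd T (fun _ _ => c) := ⟨|c|, abs_nonneg _, fun _ _ _ => le_rfl⟩
lemma Bd.comp (hg : Bd T g) {F : ℝ → ℝ} (hF : Continuous F) : Bd T (fun t x => F (g t x)) := by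
  obtain ⟨C, hC, H⟩ := hg
  obtain ⟨K, hK⟩ := (isCompact_Icc (a := -C) (b := C)).exists_bound_of_continuousOn hF.continuousOn
  exact ⟨|K|, abs_nonneg _, fun t ht x =>
    (hK _ (abs_le.1 (H t ht x))).trans (le_abs_self K)⟩
lemma Bd.mono (hh : Bd T h) (H : ∀ t ∈ Icc (0:ℝ) T, ∀ x, |g t x| ≤ |h t x|) : Bd T g := by
  obtain ⟨C, hC, H'⟩ := hh
  exact ⟨C, hC, fun t ht x => (H t ht x).trans (H' t ht x)⟩
lemma Bd.congr (hh : Bd T h) (H : ∀ t ∈ Icc (0:ℝ) T, ∀ x, g t x = h t x) : Bd T g :=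
  hh.mono fun t ht x => by rw [H t ht x]

lemma Dm.add (hg : Dm T e g) (hh : Dm T e h) : Dm T e (fun t x => g t x + h t x) := by
  obtain ⟨C, hC, H⟩ := hg
  obtain ⟨C', hC', H'⟩ := hh
  refine ⟨C + C', by positivity, fun t ht x => ?_⟩
  rw [add_mul]
  exact (abs_add_le _ _).trans (add_le_add (H t ht x) (H' t ht x))
lemma Dm.neg (hg : Dm T e g) : Dm T e (fun t x => - g t x) := by
  obtain ⟨C, hC, H⟩ := hg
  exact ⟨C, hC, fun t ht x => by rw [abs_neg]; exact H t ht x⟩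
lemma Dm.mul_bd (hg : Dm T e g) (hh : Bd T h) : Dm T e (fun t x => g t x * h t x) := by
  obtain ⟨C, hC, H⟩ := hg
  obtain ⟨C', hC', H'⟩ := hh
  refine ⟨C * C', by positivity, fun t ht x => ?_⟩
  rw [abs_mul]
  have := mul_le_mul (H t ht x) (H' t ht x) (abs_nonneg _) ((abs_nonneg _).trans (H t ht x))
  nlinarith
lemma Dm.bd_mul (hg : Dm T e g) (hh : Bd T h) : Dm T e (fun t x => h t x * g t x) := by
  have := hg.mul_bd hh
  simpa only [mul_comm] using this
lemma Dm.mono (hh : Dm T e h) (H : ∀ t ∈ Icc (0:ℝ) T, ∀ x, |g t x| ≤ |h t x|) : Dm T e g := by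
  obtain ⟨C, hC, H'⟩ := hh
  exact ⟨C, hC, fun t ht x => (H t ht x).trans (H' t ht x)⟩
lemma Dm.congr (hh : Dm T e h) (H : ∀ t ∈ Icc (0:ℝ) T, ∀ x, g t x = h t x) : Dm T e g :=
  hh.mono fun t ht x => by rw [H t ht x]
lemma Dm.mul (hg : Dm T e g) (hh : Dm T e h) : Dm2 T e (fun t x => g t x * h t x) := by
  obtain ⟨C, hC, H⟩ := hg
  obtain ⟨C', hC', H'⟩ := hh
  refine ⟨C * C', by positivity, fun t ht x => ?_⟩
  rw [abs_mul]
  have := mul_le_mul (H t ht x) (H' t ht x) (abs_nonneg _) ((abs_nonneg _).trans (H t ht x))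
  nlinarith
lemma Dm.sq (hg : Dm T e g) : Dm2 T e (fun t x => g t x ^ 2) := by
  have := hg.mul hg
  simpa only [pow_two] using this
lemma Dm2.add (hg : Dm2 T e g) (hh : Dm2 T e h) : Dm2 T e (fun t x => g t x + h t x) := by
  obtain ⟨C, hC, H⟩ := hg
  obtain ⟨C', hC', H'⟩ := hh
  refine ⟨C + C', by positivity, fun t ht x => ?_⟩
  rw [add_mul]
  exact (abs_add_le _ _).trans (add_le_add (H t ht x) (H' t ht x))
lemma Dm2.neg (hg : Dm2 T e g) : Dm2 T e (fun t x => - g t x) := by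
  obtain ⟨C, hC, H⟩ := hg
  exact ⟨C, hC, fun t ht x => by rw [abs_neg]; exact H t ht x⟩
lemma Dm2.mul_bd (hg : Dm2 T e g) (hh : Bd T h) : Dm2 T e (fun t x => g t x * h t x) := by
  obtain ⟨C, hC, H⟩ := hg
  obtain ⟨C', hC', H'⟩ := hh
  refine ⟨C * C', by positivity, fun t ht x => ?_⟩
  rw [abs_mul]
  have := mul_le_mul (H t ht x) (H' t ht x) (abs_nonneg _) ((abs_nonneg _).trans (H t ht x))
  nlinarith
lemma Dm2.bd_mul (hg : Dm2 T e g) (hh : Bd T h) : Dm2 T e (fun t x => h t x * g t x) := by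
  have := hg.mul_bd hh
  simpa only [mul_comm] using this
lemma Dm2.const_mul (hg : Dm2 T e g) (c : ℝ) : Dm2 T e (fun t x => c * g t x) :=
  hg.bd_mul (Bd.const c)
lemma Dm2.mono (hh : Dm2 T e h) (H : ∀ t ∈ Icc (0:ℝ) T, ∀ x, |g t x| ≤ |h t x|) : Dm2 T e g := by
  obtain ⟨C, hC, H'⟩ := hh
  exact ⟨C, hC, fun t ht x => (H t ht x).trans (H' t ht x)⟩
lemma Dm2.congr (hh : Dm2 T e h) (H : ∀ t ∈ Icc (0:ℝ) T, ∀ x, g t x = h t x) : Dm2 T e g :=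
  hh.mono fun t ht x => by rw [H t ht x]
end dom

/-- `e` is an admissible envelope. -/
structure Env (T : ℝ) (e : ℝ → ℝ → ℝ) : Prop where
  cont : Continuous (fun q : ℝ × ℝ => e q.1 q.2)
  int : ∀ t ∈ Icc (0 : ℝ) T, Integrable (fun x => e t x ^ 2)
  bound : ∃ K : ℝ, ∀ t ∈ Icc (0 : ℝ) T, (∫ x, e t x ^ 2) ≤ K

/-- Space-time integral over `(0,t] × ℝ`. -/
noncomputable def II (g : ℝ → ℝ → ℝ) (t : ℝ) : ℝ :=
  ∫ q in Ioc (0 : ℝ) t ×ˢ (univ : Set ℝ), g q.1 q.2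
/-- Space-time integrability over `(0,t] × ℝ`. -/
def IIn (g : ℝ → ℝ → ℝ) (t : ℝ) : Prop :=
  IntegrableOn (fun q : ℝ × ℝ => g q.1 q.2) (Ioc (0 : ℝ) t ×ˢ (univ : Set ℝ))

lemma slice_cont_x {g : ℝ → ℝ → ℝ} (h : Continuous (fun q : ℝ × ℝ => g q.1 q.2)) (t : ℝ) :
    Continuous (g t) :=
  h.comp (Continuous.prodMk_right t)
lemma slice_cont_t {g : ℝ → ℝ → ℝ} (h : Continuous (fun q : ℝ × ℝ => g q.1 q.2)) (x : ℝ) :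
    Continuous (fun t => g t x) :=
  h.comp (Continuous.prodMk_left x)

lemma Env.iin {T e} (E : Env T e) {t : ℝ} (ht : t ∈ Icc (0 : ℝ) T) :
    IIn (fun t x => e t x ^ 2) t := by
  obtain ⟨K, hK⟩ := E.bound
  have hc : Continuous (fun q : ℝ × ℝ => e q.1 q.2 ^ 2) := E.cont.pow 2
  unfold IIn IntegrableOn
  rw [Measure.volume_eq_prod, ← Measure.prod_restrict, Measure.restrict_univ]
  rw [integrable_prod_iff hc.aestronglyMeasurable]
  have hsub : ∀ {s}, s ∈ Ioc 0 t → s ∈ Icc (0:ℝ) T := fun hs => ⟨hs.1.le, hs.2.trans ht.2⟩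
  constructor
  · filter_upwards [ae_restrict_mem measurableSet_Ioc] with s hs
    exact E.int s (hsub hs)
  · have hm : StronglyMeasurable (fun s : ℝ => ∫ x : ℝ, ‖e s x ^ 2‖) :=
      (hc.norm.stronglyMeasurable).integral_prod_right'
    refine Measure.integrableOn_of_bounded (M := K) (by simp) hm.aestronglyMeasurable ?_
    filter_upwards [ae_restrict_mem measurableSet_Ioc] with s hs
    simp only [Real.norm_eq_abs, abs_pow, sq_abs]
    rw [abs_of_nonneg (integral_nonneg fun x => sq_nonneg _)]
    exact hK s (hsub hs)

lemma Dm2.iin {T e g} (E : Env T e) (hg : Dm2 T e g)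
    (hc : Continuous (fun q : ℝ × ℝ => g q.1 q.2)) {t : ℝ} (ht : t ∈ Icc (0 : ℝ) T) : IIn g t := by
  obtain ⟨C, hC, H⟩ := hg
  refine Integrable.mono' ((E.iin ht).const_mul C) hc.aestronglyMeasurable ?_
  filter_upwards [ae_restrict_mem (measurableSet_Ioc.prod MeasurableSet.univ)] with q hq
  exact H q.1 ⟨hq.1.1.le, hq.1.2.trans ht.2⟩ q.2

lemma Dm2.int {T e g} (E : Env T e) (hg : Dm2 T e g)
    (hc : Continuous (fun q : ℝ × ℝ => g q.1 q.2)) {t : ℝ} (ht : t ∈ Icc (0 : ℝ) T) :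
    Integrable (g t) := by
  obtain ⟨C, hC, H⟩ := hg
  exact Integrable.mono' ((E.int t ht).const_mul C) (slice_cont_x hc t).aestronglyMeasurable
    (Eventually.of_forall fun x => H t ht x)

lemma II_eq {g t} (ht : 0 ≤ t) (h : IIn g t) : II g t = ∫ τ in (0:ℝ)..t, ∫ x, g τ x := by
  unfold II
  unfold IIn at h
  rw [Measure.volume_eq_prod] at h ⊢
  rw [setIntegral_prod _ h, intervalIntegral.integral_of_le ht]
  simp

lemma II_mono {g h t} (hg : IIn g t) (hh : IIn h t)
    (H : ∀ s ∈ Ioc (0:ℝ) t, ∀ x, g s x ≤ h s x) : II g t ≤ II h t :=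
  setIntegral_mono_on hg hh (measurableSet_Ioc.prod MeasurableSet.univ)
    fun q hq => H q.1 hq.1 q.2
lemma II_nonneg {g t} 
    (H : ∀ s ∈ Ioc (0:ℝ) t, ∀ x, 0 ≤ g s x) : 0 ≤ II g t :=
  setIntegral_nonneg (measurableSet_Ioc.prod MeasurableSet.univ)
    fun q hq => H q.1 hq.1 q.2
lemma II_add {g h t} (hg : IIn g t) (hh : IIn h t) :
    II (fun s x => g s x + h s x) t = II g t + II h t := integral_add hg hh
lemma II_mul {g t} (c : ℝ) : II (fun s x => c * g s x) t = c * II g t :=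
  MeasureTheory.integral_const_mul c _
lemma IIn.add {g h t} (hg : IIn g t) (hh : IIn h t) : IIn (fun s x => g s x + h s x) t :=
  Integrable.add hg hh
lemma IIn.const_mul {g t} (hg : IIn g t) (c : ℝ) : IIn (fun s x => c * g s x) t :=
  Integrable.const_mul hg c

/-- Bound of a space-time integral by bounds of the spatial ones. -/
lemma II_le_of {g : ℝ → ℝ → ℝ} {t : ℝ} {k : ℝ → ℝ} (ht : 0 ≤ t) (hg : IIn g t)
    (hk : IntervalIntegrable k volume 0 t)
    (H : ∀ s ∈ Icc (0:ℝ) t, (∫ x, g s x) ≤ k s) : II g t ≤ ∫ s in (0:ℝ)..t, k s := by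
  rw [II_eq ht hg]
  refine intervalIntegral.integral_mono_on ht ?_ hk H
  unfold IIn IntegrableOn at hg
  rw [Measure.volume_eq_prod, ← Measure.prod_restrict, Measure.restrict_univ] at hg
  rw [intervalIntegrable_iff_integrableOn_Ioc_of_le ht]
  exact hg.integral_prod_left

/-- The balance law: `∂ₜF + ∂ₓG = H` integrated over `[0,t] × ℝ`. -/
lemma balance {T e} (E : Env T e) {F Ft G Gx H : ℝ → ℝ → ℝ}
    (hFt : ∀ t x, HasDerivAt (fun s => F s x) (Ft t x) t)
    (hGx : ∀ t x, HasDerivAt (G t) (Gx t x) x)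
    (cF : Continuous (fun q : ℝ × ℝ => F q.1 q.2))
    (cFt : Continuous (fun q : ℝ × ℝ => Ft q.1 q.2))
    (cG : Continuous (fun q : ℝ × ℝ => G q.1 q.2))
    (cGx : Continuous (fun q : ℝ × ℝ => Gx q.1 q.2))
    (cH : Continuous (fun q : ℝ × ℝ => H q.1 q.2))
    (hF : Dm2 T e F) (hG : Dm2 T e G) (hH : Dm2 T e H)
    (eq : ∀ t ∈ Icc (0:ℝ) T, ∀ x, Ft t x + Gx t x = H t x)
    {t : ℝ} (ht : t ∈ Icc (0:ℝ) T) :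
    (∫ x, F t x) - (∫ x, F 0 x) = II H t := by
  have h0 : (0:ℝ) ∈ Icc (0:ℝ) T := ⟨le_rfl, ht.1.trans ht.2⟩
  have iF := hF.int E cF ht
  have iF0 := hF.int E cF h0
  have iG := hG.iin E cG ht
  have iH := hH.iin E cH ht
  have intx : ∀ {g : ℝ → ℝ → ℝ}, IIn g t → Integrable (fun x => ∫ τ in (0:ℝ)..t, g τ x) := by
    intro g hg
    unfold IIn IntegrableOn at hg
    rw [Measure.volume_eq_prod, ← Measure.prod_restrict, Measure.restrict_univ] at hg
    simp_rw [intervalIntegral.integral_of_le ht.1]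
    exact hg.integral_prod_right
  have hd : ∀ x, HasDerivAt (fun x => ∫ τ in (0:ℝ)..t, G τ x) (∫ τ in (0:ℝ)..t, Gx τ x) x := by
    intro x
    have hK : IsCompact (Icc (0:ℝ) t ×ˢ Metric.closedBall x 1) :=
      isCompact_Icc.prod (isCompact_closedBall x 1)
    obtain ⟨C, hC⟩ := hK.exists_bound_of_continuousOn cGx.continuousOn
    refine (intervalIntegral.hasDerivAt_integral_of_dominated_loc_of_deriv_le
      (F' := fun x τ => Gx τ x) (bound := fun _ => C) (Metric.ball_mem_nhds x one_pos)
      (Eventually.of_forall fun y => (slice_cont_t cG y).aestronglyMeasurable)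
      ((slice_cont_t cG x).intervalIntegrable _ _)
      (slice_cont_t cGx x).aestronglyMeasurable ?_ (by simp) ?_).2
    · refine Eventually.of_forall fun τ hτ y hy => ?_
      rw [uIoc_of_le ht.1] at hτ
      exact hC (τ, y) ⟨⟨hτ.1.le, hτ.2⟩, Metric.ball_subset_closedBall hy⟩
    · exact Eventually.of_forall fun τ _ y _ => hGx τ y
  have hd' : ∀ x, (∫ τ in (0:ℝ)..t, Gx τ x) = (∫ τ in (0:ℝ)..t, H τ x) - (F t x - F 0 x) := by
    intro x
    rw [← intervalIntegral.integral_eq_sub_of_hasDerivAt (fun s _ => hFt s x)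
      ((slice_cont_t cFt x).intervalIntegrable _ _),
      ← intervalIntegral.integral_sub ((slice_cont_t cH x).intervalIntegrable _ _)
      ((slice_cont_t cFt x).intervalIntegrable _ _)]
    refine intervalIntegral.integral_congr fun s hs => ?_
    rw [uIcc_of_le ht.1] at hs
    have := eq s ⟨hs.1, hs.2.trans ht.2⟩ x
    linarith
  have hz := integral_eq_zero_of_hasDerivAt_of_integrable hd
    (by simp_rw [hd']; exact (intx iH).sub (iF.sub iF0)) (intx iG)
  simp_rw [hd'] at hz
  have iFs : Integrable (fun x => F t x - F 0 x) := iF.sub iF0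
  rw [MeasureTheory.integral_sub (intx iH) iFs, MeasureTheory.integral_sub iF iF0] at hz
  have : II H t = ∫ x, ∫ τ in (0:ℝ)..t, H τ x := by
    unfold II
    have iH' := iH
    unfold IIn IntegrableOn at iH'
    rw [Measure.volume_eq_prod, ← Measure.prod_restrict, Measure.restrict_univ] at iH' ⊢
    simp_rw [intervalIntegral.integral_of_le ht.1]
    exact integral_prod_symm _ iH'
  linarith

end EE

namespace EE

/-- The weight. -/
noncomputable def om (p v : ℝ) : ℝ := (1 + v ^ 2) ^ ((p - 1) / 2)

lemma om_pos (p v : ℝ) : 0 < om p v := Real.rpow_pos_of_pos (by positivity) _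
lemma om_le_one {p : ℝ} (hp : p < 1) (v : ℝ) : om p v ≤ 1 :=
  Real.rpow_le_one_of_one_le_of_nonpos (by nlinarith [sq_nonneg v]) (by linarith)
lemma om_sq (p v : ℝ) : om p v ^ 2 = (1 + v ^ 2) ^ (p - 1) := by
  unfold om
  rw [← Real.rpow_natCast, ← Real.rpow_mul (by positivity)]
  congr 1; push_cast; ring
lemma om_smooth (p : ℝ) : ContDiff ℝ (⊤ : ℕ∞) (om p) := by
  unfold om
  refine ContDiff.rpow_const_of_ne (by fun_prop) fun v => by positivity
lemma om_comp {p A a b c : ℝ} (hp0 : 0 < p) (hp : p < 1) (ha : |a| ≤ A) (hc : |c| ≤ |b|) :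
    om p b ≤ (2 + 2 * A ^ 2) * om p (a + c) := by
  have hA : a ^ 2 ≤ A ^ 2 := sq_le_sq' (by linarith [neg_abs_le a]) ((le_abs_self a).trans ha)
  have hcb : c ^ 2 ≤ b ^ 2 := sq_le_sq.2 hc
  set κ := 2 + 2 * A ^ 2 with hκ
  have hκ1 : 1 ≤ κ := by nlinarith [sq_nonneg A]
  have h1 : 1 + (a + c) ^ 2 ≤ κ * (1 + b ^ 2) := by
    nlinarith [sq_nonneg (a - c), sq_nonneg (A * b), sq_nonneg A]
  have h2 : (κ * (1 + b ^ 2)) ^ ((p - 1) / 2) ≤ (1 + (a + c) ^ 2) ^ ((p - 1) / 2) :=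
    Real.rpow_le_rpow_of_nonpos (by positivity) h1 (by linarith)
  rw [Real.mul_rpow (by positivity) (by positivity)] at h2
  have h3 : κ ^ (-1 : ℝ) ≤ κ ^ ((p - 1) / 2) :=
    Real.rpow_le_rpow_of_exponent_le hκ1 (by linarith)
  rw [Real.rpow_neg_one] at h3
  have h4 : κ⁻¹ * om p b ≤ om p (a + c) :=
    (mul_le_mul_of_nonneg_right h3 (om_pos p b).le).trans h2
  have hk : 0 < κ := by linarith
  calc om p b = κ * (κ⁻¹ * om p b) := by field_simp
    _ ≤ _ := mul_le_mul_of_nonneg_left h4 hk.le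
lemma om_comp' {p A a b : ℝ} (hp0 : 0 < p) (hp : p < 1) (ha : |a| ≤ A) :
    om p (a + b) ≤ (2 + 2 * A ^ 2) * om p b := by
  have := om_comp (A := A) (a := -a) (b := a + b) (c := a + b) hp0 hp (by rwa [abs_neg]) le_rfl
  simpa using this
lemma one_le_N {v N : ℝ} (h : (1 + v ^ 2) ^ ((1 : ℝ) / 2) ≤ N) : 1 ≤ N :=
  (Real.one_le_rpow (by nlinarith [sq_nonneg v]) (by norm_num)).trans h
lemma om_N {p v N : ℝ} (hp : p < 1) (h : (1 + v ^ 2) ^ ((1 : ℝ) / 2) ≤ N) :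
    1 ≤ N ^ (1 - p) * om p v := by
  have h1 : ((1 + v ^ 2) ^ ((1 : ℝ) / 2)) ^ (1 - p) ≤ N ^ (1 - p) :=
    Real.rpow_le_rpow (by positivity) h (by linarith)
  have h2 : ((1 + v ^ 2) ^ ((1 : ℝ) / 2)) ^ (1 - p) * om p v = 1 := by
    unfold om
    rw [← Real.rpow_mul (by positivity), ← Real.rpow_add (by positivity)]
    have : (1:ℝ) / 2 * (1 - p) + (p - 1) / 2 = 0 := by ring
    rw [this, Real.rpow_zero]
  exact h2.symm.le.trans (mul_le_mul_of_nonneg_right h1 (om_pos p v).le)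

lemma om_deriv {p : ℝ} (hp0 : 0 < p) (hp : p < 1) (v : ℝ) :
    |v * deriv (om p) v| ≤ om p v := by
  have h1 : HasDerivAt (fun v : ℝ => 1 + v ^ 2) (2 * v) v := by
    have := (hasDerivAt_pow 2 v).const_add 1
    simpa using this
  have h2 := h1.rpow_const (p := (p - 1) / 2) (Or.inl (by positivity))
  have h3 : deriv (om p) v = _ := h2.deriv
  rw [h3, Real.rpow_sub_one (by positivity)]
  have hom : 0 < (1 + v ^ 2) ^ ((p - 1) / 2) := om_pos p v
  have e : v * (2 * v * ((p - 1) / 2) * ((1 + v ^ 2) ^ ((p - 1) / 2) / (1 + v ^ 2))) =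
      -(((1 - p) * (v ^ 2 / (1 + v ^ 2))) * (1 + v ^ 2) ^ ((p - 1) / 2)) := by
    field_simp; ring
  have h5 : v ^ 2 / (1 + v ^ 2) ≤ 1 := by
    rw [div_le_one (by positivity)]; linarith
  have h6 : 0 ≤ v ^ 2 / (1 + v ^ 2) := by positivity
  rw [e, abs_neg, abs_of_nonneg (mul_nonneg (mul_nonneg (by linarith) h6) hom.le)]
  unfold om
  have : (1 - p) * (v ^ 2 / (1 + v ^ 2)) ≤ 1 := by nlinarith
  nlinarith

/-- The time weight. -/
noncomputable def kk (s : ℝ) : ℝ := (1 + s) ^ (-(9 : ℝ) / 8)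

lemma kk_pos {s : ℝ} (hs : 0 ≤ s) : 0 < kk s := Real.rpow_pos_of_pos (by positivity) _
lemma kk_le_one {s : ℝ} (hs : 0 ≤ s) : kk s ≤ 1 :=
  Real.rpow_le_one_of_one_le_of_nonpos (by linarith) (by norm_num)
lemma inv_le_one' {s : ℝ} (hs : 0 ≤ s) : (1 + s)⁻¹ ≤ 1 := inv_le_one_of_one_le₀ (by linarith)
lemma inv_sq_le_kk {s : ℝ} (hs : 0 ≤ s) : ((1 + s)⁻¹) ^ 2 ≤ kk s := by
  unfold kk
  rw [← Real.rpow_neg_one, ← Real.rpow_natCast, ← Real.rpow_mul (by positivity)]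
  exact Real.rpow_le_rpow_of_exponent_le (by linarith) (by norm_num)
lemma kk_int {t : ℝ} (ht : 0 ≤ t) : IntervalIntegrable kk volume 0 t := by
  refine ContinuousOn.intervalIntegrable ?_
  rw [uIcc_of_le ht]
  refine ContinuousOn.rpow_const (by fun_prop) fun s hs => Or.inl ?_
  have := hs.1
  positivity
lemma kk_integral {t : ℝ} (ht : 0 ≤ t) : (∫ s in (0:ℝ)..t, kk s) ≤ 8 := by
  have h : ∀ s ∈ uIcc 0 t, HasDerivAt (fun s : ℝ => -8 * (1 + s) ^ (-(1 : ℝ) / 8)) (kk s) s := by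
    intro s hs
    rw [uIcc_of_le ht] at hs
    have hs0 : 0 < 1 + s := by linarith [hs.1]
    have h1 : HasDerivAt (fun s : ℝ => 1 + s) 1 s := (hasDerivAt_id s).const_add 1
    have h2 := (h1.rpow_const (p := -(1:ℝ)/8) (Or.inl hs0.ne')).const_mul (-8)
    refine h2.congr_deriv ?_
    unfold kk
    have : -(1:ℝ) / 8 - 1 = -9 / 8 := by norm_num
    rw [this]; ring
  rw [intervalIntegral.integral_eq_sub_of_hasDerivAt h (kk_int ht)]
  have : 0 ≤ (1 + t) ^ (-(1 : ℝ) / 8) := by positivity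
  simp
  linarith

lemma L2_sq {g : ℝ → ℝ} {a : ℝ} (h : L2norm g ≤ a) : (∫ x, g x ^ 2) ≤ a ^ 2 := by
  have h0 : 0 ≤ ∫ x, g x ^ 2 := integral_nonneg fun x => sq_nonneg _
  unfold L2norm at h
  rw [← Real.sqrt_eq_rpow] at h
  calc _ = √(∫ x, g x ^ 2) ^ 2 := (Real.sq_sqrt h0).symm
    _ ≤ _ := pow_le_pow_left₀ (Real.sqrt_nonneg _) h 2
lemma L2_nonneg (g : ℝ → ℝ) : 0 ≤ L2norm g :=
  Real.rpow_nonneg (integral_nonneg fun _ => sq_nonneg _) _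

lemma tangent {g g' : ℝ → ℝ} (h : ∀ x, HasDerivAt g (g' x) x) (hm : Monotone g') (x y : ℝ) :
    g x + g' x * (y - x) ≤ g y := by
  rcases lt_trichotomy x y with hxy | rfl | hxy
  · obtain ⟨c, hc, he⟩ := exists_hasDerivAt_eq_slope g g' hxy
      (fun z _ => (h z).continuousAt.continuousWithinAt) fun z _ => h z
    have h1 := hm hc.1.le
    rw [he, le_div_iff₀ (by linarith)] at h1
    linarith
  · simp
  · obtain ⟨c, hc, he⟩ := exists_hasDerivAt_eq_slope g g' hxy
      (fun z _ => (h z).continuousAt.continuousWithinAt) fun z _ => h z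
    have h1 := hm hc.2.le
    rw [he, div_le_iff₀ (by linarith)] at h1
    linarith

lemma landau {g g' g'' : ℝ → ℝ} {L : ℝ} (h : ∀ x, HasDerivAt g (g' x) x)
    (h' : ∀ x, HasDerivAt g' (g'' x) x) (h0 : ∀ x, 0 ≤ g x) (hL : ∀ x, |g'' x| ≤ L) (x : ℝ) :
    g' x ^ 2 ≤ 2 * L * g x := by
  have key : ∀ s : ℝ, 0 ≤ (L / 2) * (s * s) + g' x * s + g x := by
    intro s
    have hq : ∀ y, HasDerivAt (fun y => L / 2 * (y - x) ^ 2 - g y) (L * (y - x) - g' y) y := by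
      intro y
      have h1 := ((((hasDerivAt_id y).sub_const x).pow 2).const_mul (L / 2)).sub (h y)
      refine h1.congr_deriv ?_
      simp; ring
    have hq' : ∀ y, HasDerivAt (fun y => L * (y - x) - g' y) (L - g'' y) y := by
      intro y
      have h1 := (((hasDerivAt_id y).sub_const x).const_mul L).sub (h' y)
      refine h1.congr_deriv ?_
      simp
    have hm : Monotone (fun y => L * (y - x) - g' y) := by
      refine monotone_of_deriv_nonneg (fun y => (hq' y).differentiableAt) fun y => ?_
      rw [(hq' y).deriv]
      linarith [(abs_le.1 (hL y)).2]
    have := tangent hq hm x (x + s)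
    have h2 := h0 (x + s)
    simp at this
    nlinarith
  have := discrim_le_zero key
  unfold discrim at this
  linarith

lemma integrable_of_deriv_nonneg {G g : ℝ → ℝ} {a b : ℝ} (h : ∀ x, HasDerivAt G (g x) x)
    (hc : Continuous g) (h0 : ∀ x, 0 ≤ g x) (hG : ∀ x, a < G x ∧ G x < b) : Integrable g := by
  refine integrable_of_intervalIntegral_norm_bounded (b - a) (a := fun n : ℕ => -(n:ℝ))
    (b := fun n : ℕ => (n:ℝ)) (l := atTop) (fun n => hc.integrableOn_Ioc)
    (tendsto_neg_atTop_atBot.comp tendsto_natCast_atTop_atTop) tendsto_natCast_atTop_atTop ?_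
  refine Eventually.of_forall fun n => ?_
  simp_rw [Real.norm_eq_abs, fun x => abs_of_nonneg (h0 x)]
  rw [intervalIntegral.integral_eq_sub_of_hasDerivAt (fun s _ => h s) (hc.intervalIntegrable _ _)]
  linarith [(hG n).2, (hG (-n)).1]

lemma absorb {T A : ℝ} {E : ℝ → ℝ} (hb : ∃ B, ∀ t ∈ Icc (0:ℝ) T, E t ≤ B)
    (h : ∀ S, (∀ t ∈ Icc (0:ℝ) T, E t ≤ S) → ∀ t ∈ Icc (0:ℝ) T, E t ≤ A + S / 2) :
    ∀ t ∈ Icc (0:ℝ) T, E t ≤ 2 * A := by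
  intro t ht
  obtain ⟨B, hB⟩ := hb
  have hbd : BddAbove (Set.image E (Icc 0 T)) := ⟨B, by rintro _ ⟨s, hs, rfl⟩; exact hB s hs⟩
  have hS : ∀ s ∈ Icc (0:ℝ) T, E s ≤ sSup (Set.image E (Icc 0 T)) := fun s hs =>
    le_csSup hbd ⟨s, hs, rfl⟩
  have h1 : sSup (Set.image E (Icc 0 T)) ≤ A + sSup (Set.image E (Icc 0 T)) / 2 :=
    csSup_le ⟨_, t, ht, rfl⟩ (by rintro _ ⟨s, hs, rfl⟩; exact h _ hS s hs)
  linarith [hS t ht]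

/-- Constants for a smooth flux on a compact range. -/
lemma flux_consts {f : ℝ → ℝ} (hf : ContDiff ℝ (⊤ : ℕ∞) f) (K : ℝ) :
    ∃ L : ℝ, 0 < L ∧ (∀ v, |v| ≤ K → |deriv f v| ≤ L) ∧ (∀ v, |v| ≤ K → |deriv (deriv f) v| ≤ L) ∧
      ∀ v w, |v| ≤ K → |w| ≤ K → |deriv f v - deriv f w| ≤ L * |v - w| := by
  have h1 : ContDiff ℝ (⊤ : ℕ∞) (deriv f) := ((contDiff_infty_iff_deriv).1 hf).2
  have h2 : ContDiff ℝ (⊤ : ℕ∞) (deriv (deriv f)) := ((contDiff_infty_iff_deriv).1 h1).2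
  obtain ⟨L1, hL1⟩ := (isCompact_Icc (a := -K) (b := K)).exists_bound_of_continuousOn
    h1.continuous.continuousOn
  obtain ⟨L2, hL2⟩ := (isCompact_Icc (a := -K) (b := K)).exists_bound_of_continuousOn
    h2.continuous.continuousOn
  have b2 : ∀ v, |v| ≤ K → |deriv (deriv f) v| ≤ |L1| + |L2| + 1 := fun v hv => by
    have := hL2 v (abs_le.1 hv)
    rw [Real.norm_eq_abs] at this
    linarith [le_abs_self L2, abs_nonneg L1]
  refine ⟨|L1| + |L2| + 1, by positivity, fun v hv => ?_, b2, fun v w hv hw => ?_⟩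
  · have := hL1 v (abs_le.1 hv)
    rw [Real.norm_eq_abs] at this
    linarith [le_abs_self L1, abs_nonneg L2]
  · exact (convex_Icc (-K) K).norm_image_sub_le_of_norm_deriv_le
      (fun x _ => (h1.differentiable (by simp)) x) (fun x hx => b2 x (abs_le.2 hx))
      (abs_le.1 hw) (abs_le.1 hv)

lemma smd {f : ℝ → ℝ} (hf : ContDiff ℝ (⊤ : ℕ∞) f) : ContDiff ℝ (⊤ : ℕ∞) (deriv f) :=
  ((contDiff_infty_iff_deriv).1 hf).2
lemma hd {f : ℝ → ℝ} (hf : ContDiff ℝ (⊤ : ℕ∞) f) (x : ℝ) : HasDerivAt f (deriv f x) x :=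
  ((hf.differentiable (by simp)) x).hasDerivAt

end EE

namespace EE

/-- All the hypotheses of the theorem (those that are used). -/
structure Data (p c₁ c₂ : ℝ) (f : ℝ → ℝ) (um up CU M T : ℝ) (σ : ℝ → ℝ) (U φ : ℝ → ℝ → ℝ) :
    Prop where
  hp0 : 0 < p
  hp1 : p < 1
  hc1 : 0 < c₁
  hc12 : c₁ ≤ c₂
  hf : ContDiff ℝ (⊤ : ℕ∞) f
  hconv : ∀ u : ℝ, 0 < deriv (deriv f) u
  hCU : 0 < CU
  hM : 0 < M
  hσ : ContDiff ℝ (⊤ : ℕ∞) σ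
  hσ0 : σ 0 = 0
  hσ' : ∀ v : ℝ, c₁ * om p v ≤ deriv σ v ∧ deriv σ v ≤ c₂ * om p v
  sU : Sm U
  eqU : ∀ t : ℝ, 0 ≤ t → ∀ x : ℝ, Dt U t x + deriv (fun y => f (U t y)) x = 0
  rU : ∀ t : ℝ, 0 ≤ t → ∀ x : ℝ, um < U t x ∧ U t x < up
  pU : ∀ t : ℝ, 0 ≤ t → ∀ x : ℝ, 0 < Dx U t x
  bU : ∀ t : ℝ, 0 ≤ t → ∀ x : ℝ, Dx U t x ≤ CU * (1 + t)⁻¹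
  l2Ux : ∀ t : ℝ, 0 ≤ t → L2norm (Dx U t) ≤ CU * (1 + t) ^ (-(1 : ℝ) / 2)
  l2Uxx : ∀ t : ℝ, 0 ≤ t → ∀ x : ℝ, L2norm (Dx (Dx U) t) + |Dx (Dx U) t x| ≤ CU * kk t
  l2Uxt : ∀ t : ℝ, 0 ≤ t → ∀ x : ℝ, L2norm (Dt (Dx U) t) + |Dt (Dx U) t x| ≤ CU * (1 + t)⁻¹
  hT : 0 < T
  sφ : Sm φ
  eqφ : ∀ t ∈ Icc (0 : ℝ) T, ∀ x : ℝ,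
        Dt φ t x
          + deriv (fun y => f (U t y + φ t y) - f (U t y)) x
          - deriv (fun y => σ (Dx U t y + Dx φ t y) - σ (Dx U t y)) x
        = deriv (fun y => σ (Dx U t y)) x
  bφ : ∃ B : ℝ, ∀ t ∈ Icc (0 : ℝ) T, ∀ x : ℝ,
        |φ t x| + |Dx φ t x| + |Dx (Dx φ) t x|
          + |Dx (Dx (Dx φ)) t x| + |Dt (Dx φ) t x| ≤ B
  iφ : ∀ t ∈ Icc (0 : ℝ) T,
        Integrable (fun x : ℝ => (φ t x) ^ 2) ∧
        Integrable (fun x : ℝ => (Dx φ t x) ^ 2) ∧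
        Integrable (fun x : ℝ => (Dx (Dx φ) t x) ^ 2) ∧
        Integrable (fun x : ℝ => (Dx (Dx (Dx φ)) t x) ^ 2) ∧
        Integrable (fun x : ℝ => (Dt (Dx φ) t x) ^ 2)
  ubφ : ∃ B : ℝ, ∀ t ∈ Icc (0 : ℝ) T,
        (∫ x : ℝ, (φ t x) ^ 2) + (∫ x : ℝ, (Dx φ t x) ^ 2)
          + (∫ x : ℝ, (Dx (Dx φ) t x) ^ 2)
          + (∫ x : ℝ, (Dx (Dx (Dx φ)) t x) ^ 2)
          + (∫ x : ℝ, (Dt (Dx φ) t x) ^ 2) ≤ B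
  initBd : L2norm (φ 0) + L2norm (Dx φ 0) + L2norm (Dx (Dx φ) 0) + (⨆ x : ℝ, |φ 0 x|) ≤ M

/-- The full solution. -/
def uu (U φ : ℝ → ℝ → ℝ) : ℝ → ℝ → ℝ := fun t x => U t x + φ t x
/-- The stress. -/
noncomputable def ww (σ : ℝ → ℝ) (u : ℝ → ℝ → ℝ) : ℝ → ℝ → ℝ := fun t x => σ (Dx u t x)

/-- The envelope. -/
noncomputable def env (U φ : ℝ → ℝ → ℝ) : ℝ → ℝ → ℝ := fun t x =>
  √(φ t x ^ 2 + Dx φ t x ^ 2 + Dx (Dx φ) t x ^ 2 + Dt (Dx φ) t x ^ 2 + Dx U t x ^ 2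
    + Dx (Dx U) t x ^ 2)

lemma int_add {g h : ℝ → ℝ} (hg : Integrable g) (hh : Integrable h) :
    Integrable (fun x => g x + h x) := hg.add hh
lemma Dx_add {g k : ℝ → ℝ → ℝ} (hg : Sm g) (hk : Sm k) :
    Dx (fun t x => g t x + k t x) = fun t x => Dx g t x + Dx k t x := by
  funext t x
  exact ((hg.hx t x).add (hk.hx t x)).deriv
lemma Dt_add {g k : ℝ → ℝ → ℝ} (hg : Sm g) (hk : Sm k) :
    Dt (fun t x => g t x + k t x) = fun t x => Dt g t x + Dt k t x := by
  funext t x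
  exact ((hg.ht t x).add (hk.ht t x)).deriv
lemma Dx_comp {F : ℝ → ℝ} (hF : ContDiff ℝ (⊤ : ℕ∞) F) {g : ℝ → ℝ → ℝ} (hg : Sm g) :
    Dx (fun t x => F (g t x)) = fun t x => deriv F (g t x) * Dx g t x := by
  funext t x
  exact ((hd hF (g t x)).comp x (hg.hx t x)).deriv
lemma Dt_comp {F : ℝ → ℝ} (hF : ContDiff ℝ (⊤ : ℕ∞) F) {g : ℝ → ℝ → ℝ} (hg : Sm g) :
    Dt (fun t x => F (g t x)) = fun t x => deriv F (g t x) * Dt g t x := by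
  funext t x
  exact ((hd hF (g t x)).comp t (hg.ht t x)).deriv
lemma Dx_mul {g k : ℝ → ℝ → ℝ} (hg : Sm g) (hk : Sm k) :
    Dx (fun t x => g t x * k t x) = fun t x => Dx g t x * k t x + g t x * Dx k t x := by
  funext t x
  exact ((hg.hx t x).mul (hk.hx t x)).deriv
lemma Dt_mul {g k : ℝ → ℝ → ℝ} (hg : Sm g) (hk : Sm k) :
    Dt (fun t x => g t x * k t x) = fun t x => Dt g t x * k t x + g t x * Dt k t x := by
  funext t x
  exact ((hg.ht t x).mul (hk.ht t x)).deriv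

namespace Data
variable {p c₁ c₂ : ℝ} {f : ℝ → ℝ} {um up CU M T : ℝ} {σ : ℝ → ℝ} {U φ : ℝ → ℝ → ℝ}

lemma su (D : Data p c₁ c₂ f um up CU M T σ U φ) : Sm (uu U φ) := D.sU.add D.sφ
lemma sw (D : Data p c₁ c₂ f um up CU M T σ U φ) : Sm (ww σ (uu U φ)) := D.su.dx.comp D.hσ
lemma dxu (D : Data p c₁ c₂ f um up CU M T σ U φ) : Dx (uu U φ) = fun t x => Dx U t x + Dx φ t x := Dx_add D.sU D.sφ
lemma dtu (D : Data p c₁ c₂ f um up CU M T σ U φ) : Dt (uu U φ) = fun t x => Dt U t x + Dt φ t x := Dt_add D.sU D.sφ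
lemma dxxu (D : Data p c₁ c₂ f um up CU M T σ U φ) : Dx (Dx (uu U φ)) = fun t x => Dx (Dx U) t x + Dx (Dx φ) t x := by
  rw [D.dxu]; exact Dx_add D.sU.dx D.sφ.dx
lemma dxxxu (D : Data p c₁ c₂ f um up CU M T σ U φ) : Dx (Dx (Dx (uu U φ))) = fun t x => Dx (Dx (Dx U)) t x + Dx (Dx (Dx φ)) t x := by
  rw [D.dxxu]; exact Dx_add D.sU.dx.dx D.sφ.dx.dx
lemma dtxu (D : Data p c₁ c₂ f um up CU M T σ U φ) : Dt (Dx (uu U φ)) = fun t x => Dt (Dx U) t x + Dt (Dx φ) t x := by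
  rw [D.dxu]; exact Dt_add D.sU.dx D.sφ.dx
lemma dxw (D : Data p c₁ c₂ f um up CU M T σ U φ) : Dx (ww σ (uu U φ)) = fun t x => deriv σ (Dx (uu U φ) t x) * Dx (Dx (uu U φ)) t x :=
  Dx_comp D.hσ D.su.dx
lemma dtw (D : Data p c₁ c₂ f um up CU M T σ U φ) : Dt (ww σ (uu U φ)) = fun t x => deriv σ (Dx (uu U φ) t x) * Dt (Dx (uu U φ)) t x :=
  Dt_comp D.hσ D.su.dx
lemma dxxw (D : Data p c₁ c₂ f um up CU M T σ U φ) : Dx (Dx (ww σ (uu U φ))) = fun t x =>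
    deriv (deriv σ) (Dx (uu U φ) t x) * Dx (Dx (uu U φ)) t x * Dx (Dx (uu U φ)) t x
      + deriv σ (Dx (uu U φ) t x) * Dx (Dx (Dx (uu U φ))) t x := by
  rw [D.dxw, Dx_mul (D.su.dx.comp (smd D.hσ)) D.su.dx.dx, Dx_comp (smd D.hσ) D.su.dx]

lemma eqU' (D : Data p c₁ c₂ f um up CU M T σ U φ) {t : ℝ} (ht : 0 ≤ t) (x : ℝ) : Dt U t x = - (deriv f (U t x) * Dx U t x) := by
  have h1 := D.eqU t ht x
  have h2 : deriv (fun y => f (U t y)) x = deriv f (U t x) * Dx U t x :=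
    congrFun (congrFun (Dx_comp D.hf D.sU) t) x
  rw [h2] at h1
  linarith

lemma eqUx (D : Data p c₁ c₂ f um up CU M T σ U φ) {t : ℝ} (ht : 0 ≤ t) (x : ℝ) : Dt (Dx U) t x =
    - (deriv (deriv f) (U t x) * Dx U t x * Dx U t x + deriv f (U t x) * Dx (Dx U) t x) := by
  rw [D.sU.comm]
  have h2 : Dt U t = fun y => - (deriv f (U t y) * Dx U t y) := by
    funext y; exact D.eqU' ht y
  have h3 := D.sU.dt.hx t x
  rw [h2] at h3
  have h4 := (((hd (smd D.hf) (U t x)).comp x (D.sU.hx t x)).mul (D.sU.dx.hx t x)).neg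
  exact h3.unique h4

lemma eqn (D : Data p c₁ c₂ f um up CU M T σ U φ) {t : ℝ} (ht : t ∈ Icc (0:ℝ) T) (x : ℝ) :
    Dt (uu U φ) t x + deriv f (uu U φ t x) * Dx (uu U φ) t x = Dx (ww σ (uu U φ)) t x := by
  have h1 := D.eqφ t ht x
  have h2 := D.eqU' ht.1 x
  have a1 := ((hd D.hf (uu U φ t x)).comp x (D.su.hx t x))
  have a2 := ((hd D.hf (U t x)).comp x (D.sU.hx t x))
  have a3 := D.sw.hx t x
  have a4 := (D.sU.dx.comp D.hσ).hx t x
  have e1 : deriv (fun y => f (U t y + φ t y) - f (U t y)) x = _ := (a1.sub a2).deriv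
  have e2 : deriv (fun y => σ (Dx U t y + Dx φ t y) - σ (Dx U t y)) x =
      Dx (ww σ (uu U φ)) t x - Dx (fun t x => σ (Dx U t x)) t x := by
    have := (a3.sub a4).deriv
    unfold ww at this
    simp only [D.dxu] at this
    unfold ww
    simp only [D.dxu]
    exact this
  have e3 : deriv (fun y => σ (Dx U t y)) x = Dx (fun t x => σ (Dx U t x)) t x := rfl
  rw [e1, e2, e3] at h1
  rw [D.dtu]
  simp only
  linarith

/-- The `φ` form of the equation. -/
lemma eqn' (D : Data p c₁ c₂ f um up CU M T σ U φ) {t : ℝ} (ht : t ∈ Icc (0:ℝ) T) (x : ℝ) :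
    Dt φ t x = Dx (ww σ (uu U φ)) t x - deriv f (uu U φ t x) * Dx φ t x
      - (deriv f (uu U φ t x) - deriv f (U t x)) * Dx U t x := by
  have h1 := D.eqn ht x
  have h2 := D.eqU' ht.1 x
  rw [D.dtu, D.dxu] at h1
  simp only at h1
  linarith

lemma eqnx (D : Data p c₁ c₂ f um up CU M T σ U φ) {t : ℝ} (ht : t ∈ Icc (0:ℝ) T) (x : ℝ) :
    Dx (Dx (ww σ (uu U φ))) t x = Dt (Dx (uu U φ)) t x
      + (deriv (deriv f) (uu U φ t x) * Dx (uu U φ) t x * Dx (uu U φ) t x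
      + deriv f (uu U φ t x) * Dx (Dx (uu U φ)) t x) := by
  rw [D.su.comm]
  have h2 : Dx (ww σ (uu U φ)) t = fun y =>
      Dt (uu U φ) t y + (deriv f (uu U φ t y) * Dx (uu U φ) t y) := by
    funext y; exact (D.eqn ht y).symm
  have h3 := D.sw.dx.hx t x
  rw [h2] at h3
  have h4 := (D.su.dt.hx t x).add
    (((hd (smd D.hf) (uu U φ t x)).comp x (D.su.hx t x)).mul (D.su.dx.hx t x))
  exact h3.unique h4

/-! Boundedness -/
lemma bd_of (D : Data p c₁ c₂ f um up CU M T σ U φ) {g : ℝ → ℝ → ℝ} (h : ∀ t x, |g t x| ≤ |φ t x| + |Dx φ t x| + |Dx (Dx φ) t x|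
          + |Dx (Dx (Dx φ)) t x| + |Dt (Dx φ) t x|) : Bd T g := by
  obtain ⟨B, hB⟩ := D.bφ
  have h0 : (0:ℝ) ∈ Icc (0:ℝ) T := ⟨le_rfl, D.hT.le⟩
  exact ⟨B, (abs_nonneg _).trans ((h 0 0).trans (hB 0 h0 0)), fun t ht x =>
    (h t x).trans (hB t ht x)⟩
lemma b_φ (D : Data p c₁ c₂ f um up CU M T σ U φ) : Bd T φ := D.bd_of fun t x => by
  linarith [abs_nonneg (Dx φ t x), abs_nonneg (Dx (Dx φ) t x), abs_nonneg (Dx (Dx (Dx φ)) t x),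
    abs_nonneg (Dt (Dx φ) t x)]
lemma b_φx (D : Data p c₁ c₂ f um up CU M T σ U φ) : Bd T (Dx φ) := D.bd_of fun t x => by
  linarith [abs_nonneg (φ t x), abs_nonneg (Dx (Dx φ) t x), abs_nonneg (Dx (Dx (Dx φ)) t x),
    abs_nonneg (Dt (Dx φ) t x)]
lemma b_φxx (D : Data p c₁ c₂ f um up CU M T σ U φ) : Bd T (Dx (Dx φ)) := D.bd_of fun t x => by
  linarith [abs_nonneg (φ t x), abs_nonneg (Dx φ t x), abs_nonneg (Dx (Dx (Dx φ)) t x),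
    abs_nonneg (Dt (Dx φ) t x)]
lemma b_φxxx (D : Data p c₁ c₂ f um up CU M T σ U φ) : Bd T (Dx (Dx (Dx φ))) := D.bd_of fun t x => by
  linarith [abs_nonneg (φ t x), abs_nonneg (Dx φ t x), abs_nonneg (Dx (Dx φ) t x),
    abs_nonneg (Dt (Dx φ) t x)]
lemma b_φxt (D : Data p c₁ c₂ f um up CU M T σ U φ) : Bd T (Dt (Dx φ)) := D.bd_of fun t x => by
  linarith [abs_nonneg (φ t x), abs_nonneg (Dx φ t x), abs_nonneg (Dx (Dx φ) t x),
    abs_nonneg (Dx (Dx (Dx φ)) t x)]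
lemma absU (D : Data p c₁ c₂ f um up CU M T σ U φ) {t : ℝ} (ht : 0 ≤ t) (x : ℝ) : |U t x| ≤ |um| + |up| := by
  have h := D.rU t ht x
  rw [abs_le]
  constructor
  · linarith [neg_abs_le um, abs_nonneg up]
  · linarith [le_abs_self up, abs_nonneg um]
lemma b_U (D : Data p c₁ c₂ f um up CU M T σ U φ) : Bd T U := ⟨|um| + |up|, by positivity, fun _ ht x => D.absU ht.1 x⟩
lemma absUx (D : Data p c₁ c₂ f um up CU M T σ U φ) {t : ℝ} (ht : 0 ≤ t) (x : ℝ) : |Dx U t x| ≤ CU * (1 + t)⁻¹ := by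
  rw [abs_of_pos (D.pU t ht x)]; exact D.bU t ht x
lemma absUx' (D : Data p c₁ c₂ f um up CU M T σ U φ) {t : ℝ} (ht : 0 ≤ t) (x : ℝ) : |Dx U t x| ≤ CU :=
  (D.absUx ht x).trans (mul_le_of_le_one_right D.hCU.le (inv_le_one' ht))
lemma b_Ux (D : Data p c₁ c₂ f um up CU M T σ U φ) : Bd T (Dx U) := ⟨CU, D.hCU.le, fun _ ht x => D.absUx' ht.1 x⟩
lemma b_Uxx (D : Data p c₁ c₂ f um up CU M T σ U φ) : Bd T (Dx (Dx U)) := ⟨CU, D.hCU.le, fun t ht x => by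
  have := D.l2Uxx t ht.1 x
  have h2 := mul_le_of_le_one_right D.hCU.le (kk_le_one ht.1)
  linarith [L2_nonneg (Dx (Dx U) t)]⟩
lemma b_Uxt (D : Data p c₁ c₂ f um up CU M T σ U φ) : Bd T (Dt (Dx U)) := ⟨CU, D.hCU.le, fun t ht x => by
  have := D.l2Uxt t ht.1 x
  have h2 := mul_le_of_le_one_right D.hCU.le (inv_le_one' ht.1)
  linarith [L2_nonneg (Dt (Dx U) t)]⟩
lemma b_u (D : Data p c₁ c₂ f um up CU M T σ U φ) : Bd T (uu U φ) := D.b_U.add D.b_φ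
lemma b_ux (D : Data p c₁ c₂ f um up CU M T σ U φ) : Bd T (Dx (uu U φ)) := by rw [D.dxu]; exact D.b_Ux.add D.b_φx
lemma b_uxx (D : Data p c₁ c₂ f um up CU M T σ U φ) : Bd T (Dx (Dx (uu U φ))) := by rw [D.dxxu]; exact D.b_Uxx.add D.b_φxx
lemma b_uxt (D : Data p c₁ c₂ f um up CU M T σ U φ) : Bd T (Dt (Dx (uu U φ))) := by rw [D.dtxu]; exact D.b_Uxt.add D.b_φxt
lemma b_f' (D : Data p c₁ c₂ f um up CU M T σ U φ) : Bd T (fun t x => deriv f (uu U φ t x)) := D.b_u.comp (smd D.hf).continuous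
lemma b_f'' (D : Data p c₁ c₂ f um up CU M T σ U φ) : Bd T (fun t x => deriv (deriv f) (uu U φ t x)) :=
  D.b_u.comp (smd (smd D.hf)).continuous
lemma b_σ' (D : Data p c₁ c₂ f um up CU M T σ U φ) : Bd T (fun t x => deriv σ (Dx (uu U φ) t x)) := D.b_ux.comp (smd D.hσ).continuous
lemma σ'_pos (D : Data p c₁ c₂ f um up CU M T σ U φ) (v : ℝ) : 0 < deriv σ v :=
  (mul_pos D.hc1 (om_pos p v)).trans_le (D.hσ' v).1
lemma σ'_le (D : Data p c₁ c₂ f um up CU M T σ U φ) (v : ℝ) : deriv σ v ≤ c₂ :=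
  (D.hσ' v).2.trans (mul_le_of_le_one_right (D.hc1.le.trans D.hc12) (om_le_one D.hp1 v))

lemma b_Uxxx (D : Data p c₁ c₂ f um up CU M T σ U φ) : Bd T (Dx (Dx (Dx U))) := by
  have hw : Bd T (Dx (Dx (ww σ (uu U φ)))) :=
    (D.b_uxt.add (((D.b_f''.mul D.b_ux).mul D.b_ux).add (D.b_f'.mul D.b_uxx))).congr
      fun t ht x => D.eqnx ht x
  have hinv : Bd T (fun t x => (deriv σ (Dx (uu U φ) t x))⁻¹) :=
    D.b_ux.comp (F := fun v => (deriv σ v)⁻¹)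
      ((smd D.hσ).continuous.inv₀ fun v => (D.σ'_pos v).ne')
  have hσ'' : Bd T (fun t x => deriv (deriv σ) (Dx (uu U φ) t x)) :=
    D.b_ux.comp (smd (smd D.hσ)).continuous
  have h1 := (hinv.mul (hw.add (((hσ''.mul D.b_uxx).mul D.b_uxx).neg))).add D.b_φxxx.neg
  refine h1.congr fun t ht x => ?_
  rw [D.dxxw, D.dxxxu]
  have := (D.σ'_pos (Dx (uu U φ) t x)).ne'
  simp only
  field_simp
  ring

/-! Integrability of the rarefaction wave -/
lemma int_Ux (D : Data p c₁ c₂ f um up CU M T σ U φ) {t : ℝ} (ht : 0 ≤ t) : Integrable (Dx U t) :=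
  integrable_of_deriv_nonneg (D.sU.hx t) (slice_cont_x D.sU.dx.cont t)
    (fun x => (D.pU t ht x).le) (D.rU t ht)
lemma int_Ux2 (D : Data p c₁ c₂ f um up CU M T σ U φ) {t : ℝ} (ht : 0 ≤ t) : Integrable (fun x => Dx U t x ^ 2) := by
  refine ((D.int_Ux ht).const_mul CU).mono' 
    ((slice_cont_x D.sU.dx.cont t).pow 2).aestronglyMeasurable (Eventually.of_forall fun x => ?_)
  have h1 := D.absUx' ht x
  have h2 := D.pU t ht x
  rw [abs_of_pos h2] at h1
  rw [Real.norm_eq_abs, abs_of_nonneg (sq_nonneg _)]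
  nlinarith
lemma int_Uxx2 (D : Data p c₁ c₂ f um up CU M T σ U φ) {t : ℝ} (ht : t ∈ Icc 0 T) : Integrable (fun x => Dx (Dx U) t x ^ 2) := by
  obtain ⟨L, hL, H⟩ := D.b_Uxxx
  refine ((D.int_Ux ht.1).const_mul (2 * L)).mono' 
    ((slice_cont_x D.sU.dx.dx.cont t).pow 2).aestronglyMeasurable (Eventually.of_forall fun x => ?_)
  rw [Real.norm_eq_abs, abs_of_nonneg (sq_nonneg _)]
  exact landau (D.sU.dx.hx t) (D.sU.dx.dx.hx t) (fun x => (D.pU t ht.1 x).le) (H t ht) x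
lemma Ux2_le (D : Data p c₁ c₂ f um up CU M T σ U φ) {t : ℝ} (ht : 0 ≤ t) : (∫ x, Dx U t x ^ 2) ≤ CU ^ 2 := by
  have h1 : CU * (1 + t) ^ (-(1 : ℝ) / 2) ≤ CU := mul_le_of_le_one_right D.hCU.le
    (Real.rpow_le_one_of_one_le_of_nonpos (by linarith) (by norm_num))
  exact L2_sq ((D.l2Ux t ht).trans h1)
lemma Uxx2_le (D : Data p c₁ c₂ f um up CU M T σ U φ) {t : ℝ} (ht : 0 ≤ t) : (∫ x, Dx (Dx U) t x ^ 2) ≤ CU ^ 2 * kk t ^ 2 := by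
  have h := D.l2Uxx t ht 0
  rw [← mul_pow]
  exact L2_sq (by linarith [abs_nonneg (Dx (Dx U) t 0)])
lemma Uxt2_le (D : Data p c₁ c₂ f um up CU M T σ U φ) {t : ℝ} (ht : 0 ≤ t) : (∫ x, Dt (Dx U) t x ^ 2) ≤ CU ^ 2 * kk t := by
  have h := D.l2Uxt t ht 0
  have h1 := L2_sq (g := Dt (Dx U) t) (a := CU * (1 + t)⁻¹)
    (by linarith [abs_nonneg (Dt (Dx U) t 0)])
  rw [mul_pow] at h1
  exact h1.trans (mul_le_mul_of_nonneg_left (inv_sq_le_kk ht) (sq_nonneg _))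

lemma env_sq (D : Data p c₁ c₂ f um up CU M T σ U φ) (t x : ℝ) : env U φ t x ^ 2 = φ t x ^ 2 + Dx φ t x ^ 2 + Dx (Dx φ) t x ^ 2
    + Dt (Dx φ) t x ^ 2 + Dx U t x ^ 2 + Dx (Dx U) t x ^ 2 :=
  Real.sq_sqrt (by positivity)

lemma envE (D : Data p c₁ c₂ f um up CU M T σ U φ) : Env T (env U φ) := by
  refine ⟨?_, fun t ht => ?_, ?_⟩
  · have h1 := D.sφ.cont
    have h2 := D.sφ.dx.cont
    have h3 := D.sφ.dx.dx.cont
    have h4 := D.sφ.dx.dt.cont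
    have h5 := D.sU.dx.cont
    have h6 := D.sU.dx.dx.cont
    unfold env
    fun_prop
  · simp_rw [D.env_sq]
    obtain ⟨i1, i2, i3, i4, i5⟩ := D.iφ t ht
    exact ((((i1.add i2).add i3).add i5).add (D.int_Ux2 ht.1)).add (D.int_Uxx2 ht)
  · obtain ⟨B, hB⟩ := D.ubφ
    refine ⟨B + CU ^ 2 + CU ^ 2, fun t ht => ?_⟩
    simp_rw [D.env_sq]
    obtain ⟨i1, i2, i3, i4, i5⟩ := D.iφ t ht
    have j1 := int_add i1 i2
    have j2 := int_add j1 i3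
    have j3 := int_add j2 i5
    have j4 := int_add j3 (D.int_Ux2 ht.1)
    rw [MeasureTheory.integral_add j4 (D.int_Uxx2 ht), MeasureTheory.integral_add j3 (D.int_Ux2 ht.1),
      MeasureTheory.integral_add j2 i5, MeasureTheory.integral_add j1 i3,
      MeasureTheory.integral_add i1 i2]
    have h1 := hB t ht
    have h2 := D.Ux2_le ht.1
    have h3 := D.Uxx2_le ht.1
    have h4 : CU ^ 2 * kk t ^ 2 ≤ CU ^ 2 := mul_le_of_le_one_right (sq_nonneg _)
      (pow_le_one₀ (kk_pos ht.1).le (kk_le_one ht.1))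
    have h5 : 0 ≤ ∫ x : ℝ, (Dx (Dx (Dx φ)) t x) ^ 2 := integral_nonneg fun x => sq_nonneg _
    linarith

lemma dm_of (D : Data p c₁ c₂ f um up CU M T σ U φ) {g : ℝ → ℝ → ℝ} (h : ∀ t x, g t x ^ 2 ≤ env U φ t x ^ 2) : Dm T (env U φ) g :=
  ⟨1, zero_le_one, fun t _ x => by
    rw [one_mul]; exact abs_le_of_sq_le_sq (h t x) (Real.sqrt_nonneg _)⟩
lemma d_φ (D : Data p c₁ c₂ f um up CU M T σ U φ) : Dm T (env U φ) φ := D.dm_of fun t x => by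
  rw [D.env_sq]; nlinarith [sq_nonneg (Dx φ t x), sq_nonneg (Dx (Dx φ) t x), sq_nonneg (Dt (Dx φ) t x), sq_nonneg (Dx U t x), sq_nonneg (Dx (Dx U) t x)]
lemma d_φx (D : Data p c₁ c₂ f um up CU M T σ U φ) : Dm T (env U φ) (Dx φ) := D.dm_of fun t x => by
  rw [D.env_sq]; nlinarith [sq_nonneg (φ t x), sq_nonneg (Dx (Dx φ) t x), sq_nonneg (Dt (Dx φ) t x), sq_nonneg (Dx U t x), sq_nonneg (Dx (Dx U) t x)]
lemma d_φxx (D : Data p c₁ c₂ f um up CU M T σ U φ) : Dm T (env U φ) (Dx (Dx φ)) := D.dm_of fun t x => by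
  rw [D.env_sq]; nlinarith [sq_nonneg (φ t x), sq_nonneg (Dx φ t x), sq_nonneg (Dt (Dx φ) t x), sq_nonneg (Dx U t x), sq_nonneg (Dx (Dx U) t x)]
lemma d_φxt (D : Data p c₁ c₂ f um up CU M T σ U φ) : Dm T (env U φ) (Dt (Dx φ)) := D.dm_of fun t x => by
  rw [D.env_sq]; nlinarith [sq_nonneg (φ t x), sq_nonneg (Dx φ t x), sq_nonneg (Dx (Dx φ) t x), sq_nonneg (Dx U t x), sq_nonneg (Dx (Dx U) t x)]
lemma d_Ux (D : Data p c₁ c₂ f um up CU M T σ U φ) : Dm T (env U φ) (Dx U) := D.dm_of fun t x => by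
  rw [D.env_sq]; nlinarith [sq_nonneg (φ t x), sq_nonneg (Dx φ t x), sq_nonneg (Dx (Dx φ) t x), sq_nonneg (Dt (Dx φ) t x), sq_nonneg (Dx (Dx U) t x)]
lemma d_Uxx (D : Data p c₁ c₂ f um up CU M T σ U φ) : Dm T (env U φ) (Dx (Dx U)) := D.dm_of fun t x => by
  rw [D.env_sq]; nlinarith [sq_nonneg (φ t x), sq_nonneg (Dx φ t x), sq_nonneg (Dx (Dx φ) t x), sq_nonneg (Dt (Dx φ) t x), sq_nonneg (Dx U t x)]
lemma d_Uxt (D : Data p c₁ c₂ f um up CU M T σ U φ) : Dm T (env U φ) (Dt (Dx U)) := by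
  have a : Bd T (fun t x => deriv f (U t x)) := D.b_U.comp (smd D.hf).continuous
  have b : Bd T (fun t x => deriv (deriv f) (U t x)) := D.b_U.comp (smd (smd D.hf)).continuous
  exact ((D.d_Ux.bd_mul (b.mul D.b_Ux)).add (D.d_Uxx.bd_mul a)).neg.congr
    fun t ht x => D.eqUx ht.1 x
lemma d_ux (D : Data p c₁ c₂ f um up CU M T σ U φ) : Dm T (env U φ) (Dx (uu U φ)) := by rw [D.dxu]; exact D.d_Ux.add D.d_φx
lemma d_uxx (D : Data p c₁ c₂ f um up CU M T σ U φ) : Dm T (env U φ) (Dx (Dx (uu U φ))) := by rw [D.dxxu]; exact D.d_Uxx.add D.d_φxx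
lemma d_uxt (D : Data p c₁ c₂ f um up CU M T σ U φ) : Dm T (env U φ) (Dt (Dx (uu U φ))) := by rw [D.dtxu]; exact D.d_Uxt.add D.d_φxt
lemma d_wx (D : Data p c₁ c₂ f um up CU M T σ U φ) : Dm T (env U φ) (Dx (ww σ (uu U φ))) := by rw [D.dxw]; exact D.d_uxx.bd_mul D.b_σ'
lemma d_wt (D : Data p c₁ c₂ f um up CU M T σ U φ) : Dm T (env U φ) (Dt (ww σ (uu U φ))) := by rw [D.dtw]; exact D.d_uxt.bd_mul D.b_σ'
lemma d_wxx (D : Data p c₁ c₂ f um up CU M T σ U φ) : Dm T (env U φ) (Dx (Dx (ww σ (uu U φ)))) :=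
  (D.d_uxt.add ((D.d_ux.bd_mul (D.b_f''.mul D.b_ux)).add (D.d_uxx.bd_mul D.b_f'))).congr
    fun t ht x => D.eqnx ht x
lemma d_φt (D : Data p c₁ c₂ f um up CU M T σ U φ) : Dm T (env U φ) (Dt φ) := by
  have a : Bd T (fun t x => deriv f (U t x)) := D.b_U.comp (smd D.hf).continuous
  refine ((D.d_wx.add (D.d_φx.bd_mul D.b_f').neg).add
    ((D.d_Ux.bd_mul (D.b_f'.add a.neg)).neg)).congr fun t ht x => ?_
  rw [D.eqn' ht]; ring

end Data
end EE

namespace EE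

lemma hasDerivAt_max_pow (n : ℕ) (r : ℝ) :
    HasDerivAt (fun r : ℝ => max r 0 ^ (n + 2)) ((n + 2 : ℕ) * max r 0 ^ (n + 1)) r := by
  rcases lt_trichotomy r 0 with h | rfl | h
  · have : (fun r : ℝ => max r 0 ^ (n + 2)) =ᶠ[nhds r] fun _ => 0 := by
      filter_upwards [gt_mem_nhds h] with s hs
      rw [max_eq_right hs.le]; simp
    rw [max_eq_right h.le]
    simpa using (hasDerivAt_const r (0:ℝ)).congr_of_eventuallyEq this
  · have h1 : (fun r : ℝ => max r 0 ^ (n + 2)) =O[nhds 0] fun r => ‖r - 0‖ ^ (n + 2) := by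
      refine Asymptotics.IsBigO.of_bound 1 (Eventually.of_forall fun s => ?_)
      simp only [sub_zero, norm_pow, Real.norm_eq_abs, abs_abs, one_mul]
      refine pow_le_pow_left₀ (abs_nonneg _) ?_ _
      rw [abs_of_nonneg (le_max_right _ _)]
      exact max_le (le_abs_self s) (abs_nonneg s)
    have h2 := (h1.hasFDerivAt (by omega)).hasDerivAt
    simpa using h2
  · have : (fun r : ℝ => max r 0 ^ (n + 2)) =ᶠ[nhds r] fun r => r ^ (n + 2) := by
      filter_upwards [lt_mem_nhds h] with s hs
      rw [max_eq_left hs.le]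
    rw [max_eq_left h.le]
    exact (hasDerivAt_pow (n + 2) r).congr_of_eventuallyEq this

/-- Truncation used for the maximum principle. -/
noncomputable def mm (K s : ℝ) : ℝ := max (s ^ 2 - K ^ 2) 0

lemma mm_cont (K : ℝ) : Continuous (mm K) := by unfold mm; fun_prop
lemma mm_nonneg (K s : ℝ) : 0 ≤ mm K s := le_max_right _ _
lemma hasDerivAt_mm3 (K s : ℝ) : HasDerivAt (fun s => mm K s ^ 3) (6 * s * mm K s ^ 2) s := by
  have h1 : HasDerivAt (fun s : ℝ => s ^ 2 - K ^ 2) (2 * s) s := by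
    simpa using (hasDerivAt_pow 2 s).sub_const (K ^ 2)
  refine ((hasDerivAt_max_pow 1 (s ^ 2 - K ^ 2)).comp s h1).congr_deriv ?_
  unfold mm; push_cast; ring
lemma hasDerivAt_mm2 (K s : ℝ) : HasDerivAt (fun s => mm K s ^ 2) (4 * s * mm K s) s := by
  have h1 : HasDerivAt (fun s : ℝ => s ^ 2 - K ^ 2) (2 * s) s := by
    simpa using (hasDerivAt_pow 2 s).sub_const (K ^ 2)
  refine ((hasDerivAt_max_pow 0 (s ^ 2 - K ^ 2)).comp s h1).congr_deriv ?_
  unfold mm; push_cast; ring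
lemma hasDerivAt_g1 (K s : ℝ) : HasDerivAt (fun s => 6 * s * mm K s ^ 2)
    (6 * mm K s ^ 2 + 24 * s ^ 2 * mm K s) s := by
  refine ((((hasDerivAt_id s).const_mul 6)).mul (hasDerivAt_mm2 K s)).congr_deriv ?_
  simp; ring
lemma mm_mono {K r s : ℝ} (h : |r| ≤ |s|) : mm K r ≤ mm K s :=
  max_le_max_right _ (by linarith [sq_le_sq.2 h])
lemma hasDerivAt_prim {g : ℝ → ℝ} (hg : Continuous g) (s : ℝ) :
    HasDerivAt (fun s => ∫ r in (0:ℝ)..s, g r) (g s) s :=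
  intervalIntegral.integral_hasDerivAt_right (hg.intervalIntegrable _ _)
    hg.aestronglyMeasurable.stronglyMeasurableAtFilter hg.continuousAt

lemma lip_of {F : ℝ → ℝ} (hF : ContDiff ℝ (⊤ : ℕ∞) F) (B : ℝ) : ∃ L, 0 ≤ L ∧
    ∀ a b, |a| ≤ B → |b| ≤ B → |F b - F a| ≤ L * |b - a| := by
  obtain ⟨L, hL, h1, -, -⟩ := flux_consts hF B
  refine ⟨L, hL.le, fun a b ha hb => ?_⟩
  exact (convex_Icc (-B) B).norm_image_sub_le_of_norm_deriv_le
      (fun x _ => (hF.differentiable (by simp)) x) (fun x hx => h1 x (abs_le.2 hx))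
      (abs_le.1 ha) (abs_le.1 hb)

lemma quad_of {F : ℝ → ℝ} (hF : ContDiff ℝ (⊤ : ℕ∞) F) (B : ℝ) : ∃ L, 0 ≤ L ∧
    ∀ a b, |a| ≤ B → |b| ≤ B → |F b - F a - deriv F a * (b - a)| ≤ L * (b - a) ^ 2 := by
  obtain ⟨L, hL, h1⟩ := lip_of (smd hF) B
  refine ⟨L, hL, fun a b ha hb => ?_⟩
  have hsub : uIcc a b ⊆ Icc (-B) B := uIcc_subset_Icc (abs_le.1 ha) (abs_le.1 hb)
  have := (convex_uIcc a b).norm_image_sub_le_of_norm_hasDerivWithin_le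
    (f := fun s => F s - deriv F a * s) (f' := fun s => deriv F s - deriv F a)
    (C := L * |b - a|) (x := a) (y := b)
    (fun s _ => by
      have := (hd hF s).sub ((hasDerivAt_id s).const_mul (deriv F a))
      simp only [mul_one] at this
      exact this.hasDerivWithinAt)
    (fun s hs => by
      refine (h1 a s ha (abs_le.2 (hsub hs))).trans (mul_le_mul_of_nonneg_left ?_ hL)
      exact abs_sub_left_of_mem_uIcc hs)
    left_mem_uIcc right_mem_uIcc
  simp only [Real.norm_eq_abs] at this
  have e : F b - F a - deriv F a * (b - a) = F b - deriv F a * b - (F a - deriv F a * a) := by ring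
  rw [e]
  calc _ ≤ _ := this
    _ = L * (b - a) ^ 2 := by rw [mul_assoc, ← pow_two, sq_abs]

lemma Bd.both {T : ℝ} {g h : ℝ → ℝ → ℝ} (hg : Bd T g) (hh : Bd T h) :
    ∃ B, 0 ≤ B ∧ ∀ t ∈ Icc (0:ℝ) T, ∀ x, |g t x| ≤ B ∧ |h t x| ≤ B := by
  obtain ⟨C, hC, H⟩ := hg
  obtain ⟨C', hC', H'⟩ := hh
  exact ⟨C + C', by positivity, fun t ht x =>
    ⟨by linarith [H t ht x], by linarith [H' t ht x]⟩⟩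

lemma Dm.lip {T : ℝ} {e g h : ℝ → ℝ → ℝ} (hg : Bd T g) (hh : Bd T h)
    (hd : Dm T e (fun t x => h t x - g t x)) {F : ℝ → ℝ} (hF : ContDiff ℝ (⊤ : ℕ∞) F) :
    Dm T e (fun t x => F (h t x) - F (g t x)) := by
  obtain ⟨B, hB, H⟩ := hg.both hh
  obtain ⟨L, hL, H'⟩ := lip_of hF B
  refine (hd.bd_mul (Bd.const L)).mono fun t ht x => ?_
  rw [abs_mul, abs_of_nonneg hL]
  exact H' _ _ (H t ht x).1 (H t ht x).2

lemma Dm2.quad {T : ℝ} {e g h : ℝ → ℝ → ℝ} (hg : Bd T g) (hh : Bd T h)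
    (hd : Dm T e (fun t x => h t x - g t x)) {F : ℝ → ℝ} (hF : ContDiff ℝ (⊤ : ℕ∞) F) :
    Dm2 T e (fun t x => F (h t x) - F (g t x) - deriv F (g t x) * (h t x - g t x)) := by
  obtain ⟨B, hB, H⟩ := hg.both hh
  obtain ⟨L, hL, H'⟩ := quad_of hF B
  refine (hd.sq.bd_mul (Bd.const L)).mono fun t ht x => ?_
  exact (H' _ _ (H t ht x).1 (H t ht x).2).trans (le_abs_self _)

namespace Data
variable {p c₁ c₂ : ℝ} {f : ℝ → ℝ} {um up CU M T : ℝ} {σ : ℝ → ℝ} {U φ : ℝ → ℝ → ℝ}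

lemma h0T (D : Data p c₁ c₂ f um up CU M T σ U φ) : (0:ℝ) ∈ Icc (0:ℝ) T := ⟨le_rfl, D.hT.le⟩

lemma init_all (D : Data p c₁ c₂ f um up CU M T σ U φ) : (∫ x, φ 0 x ^ 2) ≤ M ^ 2 ∧ (∫ x, Dx φ 0 x ^ 2) ≤ M ^ 2 ∧
    (∫ x, Dx (Dx φ) 0 x ^ 2) ≤ M ^ 2 ∧ ∀ x, |φ 0 x| ≤ M := by
  have h := D.initBd
  have h1 := L2_nonneg (φ 0)
  have h2 := L2_nonneg (Dx φ 0)
  have h3 := L2_nonneg (Dx (Dx φ) 0)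
  have h4 : ∀ x, |φ 0 x| ≤ ⨆ x : ℝ, |φ 0 x| := by
    obtain ⟨B, hB, H⟩ := D.b_φ
    refine fun x => le_ciSup (f := fun x => |φ 0 x|) ⟨B, ?_⟩ x
    rintro _ ⟨y, rfl⟩
    exact H 0 D.h0T y
  have h5 := (abs_nonneg (φ 0 0)).trans (h4 0)
  exact ⟨L2_sq (by linarith), L2_sq (by linarith), L2_sq (by linarith),
    fun x => (h4 x).trans (by linarith)⟩

lemma σ_sign (D : Data p c₁ c₂ f um up CU M T σ U φ) (v : ℝ) : 0 ≤ v * σ v := by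
  have hm : StrictMono σ := strictMono_of_deriv_pos D.σ'_pos
  rcases le_total 0 v with h | h
  · exact mul_nonneg h (by rw [← D.hσ0]; exact hm.monotone h)
  · exact mul_nonneg_of_nonpos_of_nonpos h (by rw [← D.hσ0]; exact hm.monotone h)

/-- Maximum principle. -/
lemma max_principle (D : Data p c₁ c₂ f um up CU M T σ U φ) {t : ℝ} (ht : t ∈ Icc (0:ℝ) T) (x : ℝ) : |uu U φ t x| ≤ |um| + |up| + M := by
  set K := |um| + |up| + M with hK
  have hK0 : 0 ≤ K := by have := D.hM; positivity
  set u := uu U φ with hu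
  set w := ww σ u with hw
  have cu := D.su.cont
  have cux := D.su.dx.cont
  have cut := D.su.dt.cont
  have cw := D.sw.cont
  have cwx := D.sw.dx.cont
  have cm := mm_cont K
  have cf' := (smd D.hf).continuous
  rw [← hu] at cu cux cut cw cwx
  rw [← hw] at cw cwx
  have cg1 : Continuous (fun s => 6 * s * mm K s ^ 2) := by fun_prop
  have cQ' : Continuous (fun s => 6 * s * mm K s ^ 2 * deriv f s) := by fun_prop
  have hQd := hasDerivAt_prim cQ'
  set Q : ℝ → ℝ := fun s => ∫ r in (0:ℝ)..s, 6 * r * mm K r ^ 2 * deriv f r with hQ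
  have cQ : Continuous Q := continuous_iff_continuousAt.2 fun s => (hQd s).continuousAt
  have bm : Bd T (fun t x => mm K (u t x)) := D.b_u.comp cm
  have dm : Dm T (env U φ) (fun t x => mm K (u t x)) := by
    obtain ⟨B, hB, HB⟩ := D.b_φ
    refine (D.d_φ.bd_mul (Bd.const (2 * K + B))).mono fun t ht x => ?_
    rw [abs_of_nonneg (mm_nonneg _ _), abs_mul, abs_of_nonneg (by positivity)]
    refine max_le ?_ (by positivity)
    have h1 : |U t x| ≤ K := by linarith [D.absU ht.1 x, D.hM]
    have h2 := HB t ht x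
    have h3 : U t x ^ 2 ≤ K ^ 2 := sq_le_sq' (by linarith [neg_abs_le (U t x)])
      ((le_abs_self _).trans h1)
    have h4 : U t x * φ t x ≤ K * |φ t x| := by
      calc _ ≤ |U t x * φ t x| := le_abs_self _
        _ = |U t x| * |φ t x| := abs_mul _ _
        _ ≤ _ := mul_le_mul_of_nonneg_right h1 (abs_nonneg _)
    have h5 : φ t x ^ 2 ≤ B * |φ t x| := by
      rw [← sq_abs]; nlinarith [abs_nonneg (φ t x)]
    simp only [hu, uu]
    nlinarith
  have dm2 := dm.sq
  have bw : Bd T w := D.b_ux.comp D.hσ.continuous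
  have dQ : Dm2 T (env U φ) (fun t x => Q (u t x)) := by
    obtain ⟨B, hB, HB⟩ := D.b_u
    obtain ⟨L, hL, H1, -, -⟩ := flux_consts D.hf B
    refine (dm2.bd_mul (Bd.const (6 * B * L * B))).mono fun t ht x => ?_
    have hb := HB t ht x
    rw [← hu] at hb
    have := intervalIntegral.norm_integral_le_of_norm_le_const (a := 0) (b := u t x)
      (f := fun r => 6 * r * mm K r ^ 2 * deriv f r) (C := 6 * B * mm K (u t x) ^ 2 * L)
      (fun r hr => by
        have hr' : |r| ≤ |u t x| := by
          have := abs_sub_left_of_mem_uIcc (uIoc_subset_uIcc hr)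
          simpa using this
        have hm := mm_mono (K := K) hr'
        have hm0 := mm_nonneg K r
        rw [Real.norm_eq_abs, abs_mul, abs_mul, abs_mul, abs_of_nonneg (sq_nonneg (mm K r))]
        have e : |(6:ℝ)| = 6 := by norm_num
        rw [e]
        have h1 := H1 r (hr'.trans hb)
        have h2 := hr'.trans hb
        gcongr)
    have h3 : (0:ℝ) ≤ mm K (u t x) ^ 2 := sq_nonneg _
    rw [Real.norm_eq_abs] at this
    refine (this.trans ?_).trans (le_abs_self _)
    rw [sub_zero]
    calc _ ≤ 6 * B * mm K (u t x) ^ 2 * L * B := by gcongr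
      _ = _ := by ring
  have bal := balance D.envE
    (F := fun t x => mm K (u t x) ^ 3)
    (Ft := fun t x => 6 * u t x * mm K (u t x) ^ 2 * Dt u t x)
    (G := fun t x => Q (u t x) - 6 * u t x * mm K (u t x) ^ 2 * w t x)
    (Gx := fun t x => 6 * u t x * mm K (u t x) ^ 2 * deriv f (u t x) * Dx u t x -
      ((6 * mm K (u t x) ^ 2 + 24 * u t x ^ 2 * mm K (u t x)) * Dx u t x * w t x
        + 6 * u t x * mm K (u t x) ^ 2 * Dx w t x))
    (H := fun t x => -((6 * mm K (u t x) ^ 2 + 24 * u t x ^ 2 * mm K (u t x)) * Dx u t x * w t x))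
    (fun t x => (hasDerivAt_mm3 K (u t x)).comp t (D.su.ht t x))
    (fun t x => ((hQd (u t x)).comp x (D.su.hx t x)).sub
      (((hasDerivAt_g1 K (u t x)).comp x (D.su.hx t x)).mul (D.sw.hx t x)))
    (by fun_prop) (by fun_prop) (by fun_prop) (by fun_prop) (by fun_prop)
    ((dm2.mul_bd bm).congr fun t _ x => by ring)
    (dQ.add ((dm2.bd_mul ((D.b_u.mul bw).mul (Bd.const (-6)))).congr
      (g := fun t x => -(6 * u t x * mm K (u t x) ^ 2 * w t x)) fun t _ x => by
        simp only [hu]; ring))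
    (((dm.mul D.d_ux).mul_bd
      (((bm.mul (Bd.const (-6))).add ((D.b_u.mul D.b_u).mul (Bd.const (-24)))).mul bw)).congr
        fun t _ x => by simp only [hu]; ring)
    (fun t ht x => by
      have := D.eqn ht x
      rw [← hu, ← hw] at this
      rw [← this]; ring) ht
  have hF0 : (∫ x, mm K (u 0 x) ^ 3) = 0 := by
    have : ∀ x, mm K (u 0 x) ^ 3 = 0 := fun x => by
      have h1 := D.init_all.2.2.2 x
      have h2 := D.absU le_rfl x
      have h3 : |u 0 x| ≤ K := (abs_add_le _ _).trans (by linarith)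
      have h4 : u 0 x ^ 2 ≤ K ^ 2 := sq_le_sq' (by linarith [neg_abs_le (u 0 x)])
        ((le_abs_self _).trans h3)
      have : mm K (u 0 x) = 0 := max_eq_right (by linarith)
      rw [this]; norm_num
    simp_rw [this]; simp
  have hneg : II (fun t x => -((6 * mm K (u t x) ^ 2 + 24 * u t x ^ 2 * mm K (u t x)) *
      Dx u t x * w t x)) t ≤ 0 := by
    refine setIntegral_nonpos (measurableSet_Ioc.prod MeasurableSet.univ) fun q _ => ?_
    have h1 := D.σ_sign (Dx u q.1 q.2)
    have h2 := mm_nonneg K (u q.1 q.2)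
    show -((6 * mm K (u q.1 q.2) ^ 2 + 24 * u q.1 q.2 ^ 2 * mm K (u q.1 q.2)) *
      Dx u q.1 q.2 * w q.1 q.2) ≤ 0
    rw [mul_assoc]
    refine neg_nonpos.2 (mul_nonneg (by positivity) h1)
  have hle : (∫ x, mm K (u t x) ^ 3) ≤ 0 := by linarith
  have hnn : ∀ x, 0 ≤ mm K (u t x) ^ 3 := fun x => pow_nonneg (mm_nonneg _ _) 3
  have hz : (∫ x, mm K (u t x) ^ 3) = 0 := le_antisymm hle (integral_nonneg hnn)
  have hcont : Continuous (fun x => mm K (u t x) ^ 3) := (cm.comp (slice_cont_x cu t)).pow 3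
  have hInt : Integrable (fun x => mm K (u t x) ^ 3) :=
    (show Dm2 T (env U φ) (fun t x => mm K (u t x) ^ 3) from
      (dm2.mul_bd bm).congr fun t _ x => by ring).int D.envE (by fun_prop) ht
  have h1 := (integral_eq_zero_iff_of_nonneg hnn hInt).1 hz
  have h2 := (Continuous.ae_eq_iff_eq volume hcont continuous_const).1 h1
  have h3 : mm K (u t x) ^ 3 = 0 := congrFun h2 x
  have h4 : mm K (u t x) = 0 := by simpa using h3
  have h5 : u t x ^ 2 - K ^ 2 ≤ 0 := (le_max_left _ _).trans h4.le
  exact abs_le_of_sq_le_sq (by linarith) hK0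

end Data
end EE

namespace EE

lemma II_kk {g : ℝ → ℝ → ℝ} {t C : ℝ} (ht : 0 ≤ t) (hg : IIn g t) (hC : 0 ≤ C)
    (H : ∀ s ∈ Icc (0:ℝ) t, (∫ x, g s x) ≤ C * kk s) : II g t ≤ 8 * C := by
  have h1 := II_le_of (k := fun s => C * kk s) ht hg ((kk_int ht).const_mul C) H
  have h2 := kk_integral ht
  rw [intervalIntegral.integral_const_mul] at h1
  nlinarith

lemma mono_quad {g : ℝ → ℝ} (hg : ContDiff ℝ (⊤ : ℕ∞) g) {A v m : ℝ}
    (h : ∀ s, |s| ≤ |v| → m ≤ deriv g (A + s)) : m * v ^ 2 ≤ v * (g (A + v) - g A) := by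
  have key : ∀ x ∈ uIcc A (A + v), ∀ y ∈ uIcc A (A + v), x ≤ y → m * (y - x) ≤ g y - g x :=
    (convex_uIcc A (A + v)).mul_sub_le_image_sub_of_le_deriv hg.continuous.continuousOn
      (fun x _ => (hg.differentiable (by simp) x).differentiableWithinAt)
      (fun x hx => by
        have := abs_sub_left_of_mem_uIcc (interior_subset hx)
        have h2 := h (x - A) (by simpa using this)
        simpa using h2)
  rcases le_total 0 v with hv | hv
  · have := key A left_mem_uIcc (A + v) right_mem_uIcc (by linarith)
    nlinarith
  · have := key (A + v) right_mem_uIcc A left_mem_uIcc (by linarith)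
    nlinarith

/-- Lower coercivity constant. -/
noncomputable def aa (c₁ CU : ℝ) : ℝ := c₁ / (2 + 2 * CU ^ 2)
/-- First energy constant. -/
noncomputable def S1 (c₂ CU M : ℝ) : ℝ := 2 * (M ^ 2 + 128 * c₂ ^ 2 * CU ^ 2)

namespace Data
variable {p c₁ c₂ : ℝ} {f : ℝ → ℝ} {um up CU M T : ℝ} {σ : ℝ → ℝ} {U φ : ℝ → ℝ → ℝ}

lemma hc2 (D : Data p c₁ c₂ f um up CU M T σ U φ) : 0 < c₂ := D.hc1.trans_le D.hc12
lemma aa_pos (D : Data p c₁ c₂ f um up CU M T σ U φ) : 0 < aa c₁ CU := div_pos D.hc1 (by positivity)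

lemma σ'_ge' (D : Data p c₁ c₂ f um up CU M T σ U φ) {t : ℝ} (ht : 0 ≤ t) (x s : ℝ) (hs : |s| ≤ |Dx φ t x|) :
    aa c₁ CU * om p (Dx φ t x) ≤ deriv σ (Dx U t x + s) := by
  have h1 := om_comp (p := p) (A := CU) (a := Dx U t x) (b := Dx φ t x) (c := s)
    D.hp0 D.hp1 (D.absUx' ht x) hs
  have h2 := (D.hσ' (Dx U t x + s)).1
  refine le_trans ?_ h2
  have h3 : (0:ℝ) < 2 + 2 * CU ^ 2 := by positivity
  unfold aa
  rw [div_mul_eq_mul_div, div_le_iff₀ h3]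
  nlinarith [D.hc1]

lemma σ'_ge (D : Data p c₁ c₂ f um up CU M T σ U φ) {t : ℝ} (ht : 0 ≤ t) (x : ℝ) :
    aa c₁ CU * om p (Dx φ t x) ≤ deriv σ (Dx (uu U φ) t x) := by
  rw [D.dxu]; exact D.σ'_ge' ht x _ le_rfl

lemma σ'_le' (D : Data p c₁ c₂ f um up CU M T σ U φ) {t : ℝ} (ht : 0 ≤ t) (x : ℝ) :
    deriv σ (Dx (uu U φ) t x) ≤ c₂ * (2 + 2 * CU ^ 2) * om p (Dx φ t x) := by
  rw [D.dxu]
  have h1 := om_comp' (p := p) (A := CU) (a := Dx U t x) (b := Dx φ t x)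
    D.hp0 D.hp1 (D.absUx' ht x)
  refine (D.hσ' _).2.trans ?_
  rw [mul_assoc]
  exact mul_le_mul_of_nonneg_left h1 D.hc2.le

lemma f'_mono (D : Data p c₁ c₂ f um up CU M T σ U φ) : Monotone (deriv f) :=
  (strictMono_of_deriv_pos D.hconv).monotone

lemma com (D : Data p c₁ c₂ f um up CU M T σ U φ) : Continuous (fun q : ℝ × ℝ => om p (Dx φ q.1 q.2)) :=
  (om_smooth p).continuous.comp D.sφ.dx.cont
lemma b_om (D : Data p c₁ c₂ f um up CU M T σ U φ) : Bd T (fun t x => om p (Dx φ t x)) := D.b_φx.comp (om_smooth p).continuous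

lemma step1_bal (D : Data p c₁ c₂ f um up CU M T σ U φ) {t : ℝ} (ht : t ∈ Icc (0:ℝ) T) :
    (∫ x, φ t x ^ 2) / 2 - (∫ x, φ 0 x ^ 2) / 2 + aa c₁ CU * II (fun t x => om p (Dx φ t x) *
      Dx φ t x ^ 2) t ≤ II (fun t x => φ t x * (deriv σ (Dx U t x) * Dx (Dx U) t x)) t := by
  set u := uu U φ with hu
  set w := ww σ u with hw
  have cu := D.su.cont
  have cux := D.su.dx.cont
  have cw := D.sw.cont
  have cwx := D.sw.dx.cont
  have cU := D.sU.cont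
  have cUx := D.sU.dx.cont
  have cUxx := D.sU.dx.dx.cont
  have cφ := D.sφ.cont
  have cφx := D.sφ.dx.cont
  have cφt := D.sφ.dt.cont
  have cf := D.hf.continuous
  have cf' := (smd D.hf).continuous
  have cσ := D.hσ.continuous
  have cσ' := (smd D.hσ).continuous
  have com := D.com
  rw [← hu] at cu cux cw cwx
  rw [← hw] at cw cwx
  have hΦd := hasDerivAt_prim cf
  set Φ : ℝ → ℝ := fun s => ∫ r in (0:ℝ)..s, f r with hΦ
  have hΦ' : deriv Φ = f := funext fun s => (hΦd s).deriv
  have sΦ : ContDiff ℝ (⊤ : ℕ∞) Φ := by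
    rw [contDiff_infty_iff_deriv, hΦ']
    exact ⟨fun s => (hΦd s).differentiableAt, D.hf⟩
  have cΦ := sΦ.continuous
  have dd : Dm T (env U φ) (fun t x => u t x - U t x) :=
    D.d_φ.congr fun t _ x => by simp [hu, uu]
  have dσ : Dm T (env U φ) (fun t x => w t x - σ (Dx U t x)) := by
    refine Dm.lip D.b_Ux D.b_ux ?_ D.hσ
    rw [D.dxu]
    exact D.d_φx.congr fun t _ x => by ring
  have dH2 : Dm2 T (env U φ) (fun t x => φ t x * (deriv σ (Dx U t x) * Dx (Dx U) t x)) :=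
    D.d_φ.mul (D.d_Uxx.bd_mul (D.b_Ux.comp cσ'))
  have hmain : Dm2 T (env U φ) (fun t x => om p (Dx φ t x) * Dx φ t x ^ 2) :=
    D.d_φx.sq.bd_mul D.b_om
  have dbr : Dm2 T (env U φ) (fun t x => Dx U t x * (f (u t x) - f (U t x)
      - deriv f (U t x) * φ t x)) :=
    ((Dm2.quad D.b_U D.b_u dd D.hf).bd_mul D.b_Ux).congr fun t _ x => by
      simp only [hu, uu]; ring
  have dH : Dm2 T (env U φ) (fun t x => φ t x * (deriv σ (Dx U t x) * Dx (Dx U) t x)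
      - Dx φ t x * (w t x - σ (Dx U t x))
      - Dx U t x * (f (u t x) - f (U t x) - deriv f (U t x) * φ t x)) :=
    ((dH2.add (D.d_φx.mul dσ).neg).add dbr.neg).congr fun t _ x => by ring
  have bal := balance D.envE
    (F := fun t x => φ t x ^ 2 / 2)
    (Ft := fun t x => φ t x * Dt φ t x)
    (G := fun t x => φ t x * f (u t x) - Φ (u t x) + Φ (U t x) - φ t x * (w t x - σ (Dx U t x)))
    (Gx := fun t x => Dx φ t x * f (u t x) + φ t x * (deriv f (u t x) * Dx u t x)
      - f (u t x) * Dx u t x + f (U t x) * Dx U t x - (Dx φ t x * (w t x - σ (Dx U t x))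
        + φ t x * (Dx w t x - deriv σ (Dx U t x) * Dx (Dx U) t x)))
    (H := fun t x => φ t x * (deriv σ (Dx U t x) * Dx (Dx U) t x)
      - Dx φ t x * (w t x - σ (Dx U t x))
      - Dx U t x * (f (u t x) - f (U t x) - deriv f (U t x) * φ t x))
    (fun t x => by
      refine (((D.sφ.ht t x).pow 2).div_const 2).congr_deriv ?_
      push_cast; ring)
    (fun t x => (((D.sφ.hx t x).mul ((hd D.hf (u t x)).comp x (D.su.hx t x))).sub
      ((hΦd (u t x)).comp x (D.su.hx t x))).add ((hΦd (U t x)).comp x (D.sU.hx t x)) |>.sub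
      ((D.sφ.hx t x).mul ((D.sw.hx t x).sub ((hd D.hσ (Dx U t x)).comp x (D.sU.dx.hx t x)))))
    (by fun_prop) (by fun_prop) (by fun_prop) (by fun_prop) (by fun_prop)
    ((D.d_φ.sq.const_mul (1/2)).congr fun t _ x => by ring)
    ((((D.d_φ.mul (Dm.lip D.b_U D.b_u dd D.hf)).add (Dm2.quad D.b_U D.b_u dd sΦ).neg).add
      (D.d_φ.mul dσ).neg).congr fun t _ x => by
        rw [hΦ']; simp only [hu, uu]; ring)
    dH
    (fun t ht x => by
      have := D.eqn' ht x
      rw [← hu, ← hw] at this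
      have h2 : Dx u t x = Dx U t x + Dx φ t x := by rw [hu, D.dxu]
      rw [this, h2]; ring) ht
  have i1 : IIn (fun t x => om p (Dx φ t x) * Dx φ t x ^ 2) t :=
    hmain.iin D.envE (by fun_prop) ht
  have i2 : IIn (fun t x => φ t x * (deriv σ (Dx U t x) * Dx (Dx U) t x)) t :=
    dH2.iin D.envE (by fun_prop) ht
  have hle : II (fun t x => φ t x * (deriv σ (Dx U t x) * Dx (Dx U) t x)
      - Dx φ t x * (w t x - σ (Dx U t x))
      - Dx U t x * (f (u t x) - f (U t x) - deriv f (U t x) * φ t x)) t ≤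
      II (fun t x => φ t x * (deriv σ (Dx U t x) * Dx (Dx U) t x) +
        (-aa c₁ CU) * (om p (Dx φ t x) * Dx φ t x ^ 2)) t := by
    refine II_mono (dH.iin D.envE (by fun_prop) ht) (i2.add (i1.const_mul _)) fun s hs x => ?_
    have hs0 : 0 ≤ s := hs.1.le
    have h1 := mono_quad D.hσ (A := Dx U s x) (v := Dx φ s x) (D.σ'_ge' hs0 x)
    have h2 := tangent (hd D.hf) D.f'_mono (U s x) (u s x)
    have h3 := D.pU s hs0 x
    have e1 : w s x = σ (Dx U s x + Dx φ s x) := by simp only [hw, ww, hu, D.dxu]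
    have e2 : u s x - U s x = φ s x := by simp [hu, uu]
    rw [e2] at h2
    rw [e1]
    nlinarith [mul_nonneg h3.le (by linarith : 0 ≤ f (u s x) - f (U s x)
      - deriv f (U s x) * φ s x)]
  rw [II_add i2 (i1.const_mul _), II_mul, ← bal] at hle
  simp only [MeasureTheory.integral_div] at hle
  linarith

lemma step1_rhs (D : Data p c₁ c₂ f um up CU M T σ U φ) {S : ℝ} (hS : ∀ t ∈ Icc (0:ℝ) T, (∫ x, φ t x ^ 2) ≤ S)
    {t : ℝ} (ht : t ∈ Icc (0:ℝ) T) :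
    II (fun t x => φ t x * (deriv σ (Dx U t x) * Dx (Dx U) t x)) t
      ≤ S / 4 + 64 * c₂ ^ 2 * CU ^ 2 := by
  have hS0 : 0 ≤ S := le_trans (integral_nonneg fun x => sq_nonneg _) (hS t ht)
  have cUx := D.sU.dx.cont
  have cUxx := D.sU.dx.dx.cont
  have cφ := D.sφ.cont
  have cσ' := (smd D.hσ).continuous
  have dH2 : Dm2 T (env U φ) (fun t x => φ t x * (deriv σ (Dx U t x) * Dx (Dx U) t x)) :=
    D.d_φ.mul (D.d_Uxx.bd_mul (D.b_Ux.comp cσ'))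
  have := II_kk (C := S / 32 + 8 * c₂ ^ 2 * CU ^ 2) ht.1 (dH2.iin D.envE (by fun_prop) ht)
    (by positivity) (fun s hs => by
      have hs' : s ∈ Icc 0 T := ⟨hs.1, hs.2.trans ht.2⟩
      have hk := kk_pos hs.1
      have i1 := (D.iφ s hs').1
      have i2 := D.int_Uxx2 hs'
      calc (∫ x, φ s x * (deriv σ (Dx U s x) * Dx (Dx U) s x))
          ≤ ∫ x, (kk s / 32 * φ s x ^ 2 + 8 * c₂ ^ 2 / kk s * Dx (Dx U) s x ^ 2) := by
            refine integral_mono (dH2.int D.envE (by fun_prop) hs')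
              ((i1.const_mul _).add (i2.const_mul _)) fun x => ?_
            simp only
            have h1 := D.σ'_le (Dx U s x)
            have h2 := (D.σ'_pos (Dx U s x)).le
            have h3 : (deriv σ (Dx U s x) * Dx (Dx U) s x) ^ 2 ≤ c₂ ^ 2 * Dx (Dx U) s x ^ 2 := by
              rw [mul_pow]; gcongr
            set y := deriv σ (Dx U s x) * Dx (Dx U) s x
            have h4 : 8 * c₂ ^ 2 / kk s * Dx (Dx U) s x ^ 2 ≥ 8 / kk s * y ^ 2 := by
              have : 8 * c₂ ^ 2 / kk s * Dx (Dx U) s x ^ 2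
                = 8 / kk s * (c₂ ^ 2 * Dx (Dx U) s x ^ 2) := by ring
              rw [this]
              exact mul_le_mul_of_nonneg_left h3 (by positivity)
            have h5 : kk s / 32 * φ s x ^ 2 + 8 / kk s * y ^ 2 - φ s x * y
              = (kk s * φ s x - 16 * y) ^ 2 / (32 * kk s) := by field_simp; ring
            have h6 : 0 ≤ (kk s * φ s x - 16 * y) ^ 2 / (32 * kk s) := by positivity
            linarith
        _ = kk s / 32 * (∫ x, φ s x ^ 2) + 8 * c₂ ^ 2 / kk s * ∫ x, Dx (Dx U) s x ^ 2 := by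
            rw [MeasureTheory.integral_add (i1.const_mul _) (i2.const_mul _),
              MeasureTheory.integral_const_mul, MeasureTheory.integral_const_mul]
        _ ≤ kk s / 32 * S + 8 * c₂ ^ 2 / kk s * (CU ^ 2 * kk s ^ 2) := by
            have a := hS s hs'
            have b := D.Uxx2_le hs.1
            gcongr
        _ = (S / 32 + 8 * c₂ ^ 2 * CU ^ 2) * kk s := by field_simp)
  linarith

lemma step1 (D : Data p c₁ c₂ f um up CU M T σ U φ) {t : ℝ} (ht : t ∈ Icc (0:ℝ) T) : (∫ x, φ t x ^ 2) ≤ S1 c₂ CU M := by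
  refine absorb (T := T) (A := M ^ 2 + 128 * c₂ ^ 2 * CU ^ 2) (E := fun t => ∫ x, φ t x ^ 2) ?_
    (fun S hS t ht => ?_) t ht
  · obtain ⟨B, hB⟩ := D.ubφ
    refine ⟨B, fun t ht => ?_⟩
    have := hB t ht
    have h1 : 0 ≤ ∫ x : ℝ, (Dx φ t x) ^ 2 := integral_nonneg fun x => sq_nonneg _
    have h2 : 0 ≤ ∫ x : ℝ, (Dx (Dx φ) t x) ^ 2 := integral_nonneg fun x => sq_nonneg _
    have h3 : 0 ≤ ∫ x : ℝ, (Dx (Dx (Dx φ)) t x) ^ 2 := integral_nonneg fun x => sq_nonneg _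
    have h4 : 0 ≤ ∫ x : ℝ, (Dt (Dx φ) t x) ^ 2 := integral_nonneg fun x => sq_nonneg _
    linarith
  · have h1 := D.step1_bal ht
    have h2 := D.step1_rhs hS ht
    have h3 := D.init_all.1
    have h4 : 0 ≤ II (fun t x => om p (Dx φ t x) * Dx φ t x ^ 2) t :=
      II_nonneg fun s _ x => mul_nonneg (om_pos _ _).le (sq_nonneg _)
    have h5 := mul_nonneg D.aa_pos.le h4
    show (∫ x, φ t x ^ 2) ≤ _
    linarith

lemma step1' (D : Data p c₁ c₂ f um up CU M T σ U φ) {t : ℝ} (ht : t ∈ Icc (0:ℝ) T) :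
    aa c₁ CU * II (fun t x => om p (Dx φ t x) * Dx φ t x ^ 2) t ≤ S1 c₂ CU M := by
  have h1 := D.step1_bal ht
  have h2 := D.step1_rhs (fun t ht => D.step1 ht) ht
  have h3 := D.init_all.1
  have h4 : 0 ≤ ∫ x, φ t x ^ 2 := integral_nonneg fun x => sq_nonneg _
  have h5 : S1 c₂ CU M = 2 * (M ^ 2 + 128 * c₂ ^ 2 * CU ^ 2) := rfl
  nlinarith [sq_nonneg M, sq_nonneg (c₂ * CU)]

end Data
end EE

namespace EE

/-- Flux bounds. -/
def FC (f : ℝ → ℝ) (K L : ℝ) : Prop := 0 < L ∧ (∀ v, |v| ≤ K → |deriv f v| ≤ L) ∧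
  (∀ v, |v| ≤ K → |deriv (deriv f) v| ≤ L) ∧
      ∀ v w, |v| ≤ K → |w| ≤ K → |deriv f v - deriv f w| ≤ L * |v - w|

lemma young {a om Λ X P : ℝ} (ha : 0 < a) (ho : 0 < om) (h : 1 ≤ Λ * om) :
    X * P ≤ a * om / 4 * X ^ 2 + Λ * P ^ 2 / a := by
  have h1 : X * P ≤ a * om / 4 * X ^ 2 + P ^ 2 / (a * om) := by
    have e : a * om / 4 * X ^ 2 + P ^ 2 / (a * om) - X * P
      = (a * om * X - 2 * P) ^ 2 / (4 * (a * om)) := by field_simp; ring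
    have : 0 ≤ (a * om * X - 2 * P) ^ 2 / (4 * (a * om)) := by positivity
    linarith
  have h2 : P ^ 2 / (a * om) ≤ Λ * P ^ 2 / a := by
    rw [div_le_div_iff₀ (by positivity) ha]
    have : 0 ≤ P ^ 2 * a := by positivity
    nlinarith
  linarith

lemma sq_le_of_abs {y L z : ℝ} (h : |y| ≤ L * |z|) : y ^ 2 ≤ L ^ 2 * z ^ 2 := by
  rw [← sq_abs y, ← sq_abs z, ← mul_pow]
  exact pow_le_pow_left₀ (abs_nonneg _) h 2

lemma kk_sq {s : ℝ} (hs : 0 ≤ s) : kk s ^ 2 ≤ kk s := by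
  have h1 := kk_pos hs
  have h2 := kk_le_one hs
  nlinarith

/-- Second energy constant. -/
noncomputable def S2 (c₁ c₂ CU M L : ℝ) : ℝ := 4 / aa c₁ CU * (M ^ 2 / 2 + 8 * c₂ * CU ^ 2
  + L ^ 2 * S1 c₂ CU M / aa c₁ CU ^ 2 + 8 * L ^ 2 * CU ^ 2 * S1 c₂ CU M / aa c₁ CU)

namespace Data
variable {p c₁ c₂ : ℝ} {f : ℝ → ℝ} {um up CU M T : ℝ} {σ : ℝ → ℝ} {U φ : ℝ → ℝ → ℝ}

lemma S1_pos (D : Data p c₁ c₂ f um up CU M T σ U φ) : 0 < S1 c₂ CU M := by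
  have := D.hM; unfold S1; positivity

lemma Ux_sq_le (D : Data p c₁ c₂ f um up CU M T σ U φ) {t : ℝ} (ht : 0 ≤ t) (x : ℝ) : Dx U t x ^ 2 ≤ CU ^ 2 * kk t := by
  have h := D.absUx ht x
  calc Dx U t x ^ 2 = |Dx U t x| ^ 2 := (sq_abs _).symm
    _ ≤ (CU * (1 + t)⁻¹) ^ 2 := pow_le_pow_left₀ (abs_nonneg _) h 2
    _ = CU ^ 2 * ((1 + t)⁻¹) ^ 2 := mul_pow _ _ _
    _ ≤ _ := mul_le_mul_of_nonneg_left (inv_sq_le_kk ht) (sq_nonneg _)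

lemma iUxx (D : Data p c₁ c₂ f um up CU M T σ U φ) {t : ℝ} (ht : t ∈ Icc (0:ℝ) T) : IIn (fun t x => Dx (Dx U) t x ^ 2) t :=
  D.d_Uxx.sq.iin D.envE (D.sU.dx.dx.cont.pow 2) ht
lemma iUxt (D : Data p c₁ c₂ f um up CU M T σ U φ) {t : ℝ} (ht : t ∈ Icc (0:ℝ) T) : IIn (fun t x => Dt (Dx U) t x ^ 2) t :=
  D.d_Uxt.sq.iin D.envE (D.sU.dx.dt.cont.pow 2) ht
lemma dUx4 (D : Data p c₁ c₂ f um up CU M T σ U φ) : Dm2 T (env U φ) (fun t x => Dx U t x ^ 4) :=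
  (D.d_Ux.sq.mul_bd (D.b_Ux.mul D.b_Ux)).congr fun t _ x => by ring
lemma iUx4 (D : Data p c₁ c₂ f um up CU M T σ U φ) {t : ℝ} (ht : t ∈ Icc (0:ℝ) T) : IIn (fun t x => Dx U t x ^ 4) t :=
  D.dUx4.iin D.envE (D.sU.dx.cont.pow 4) ht
lemma dφU (D : Data p c₁ c₂ f um up CU M T σ U φ) : Dm2 T (env U φ) (fun t x => φ t x ^ 2 * Dx U t x ^ 2) :=
  (D.d_φ.sq.mul_bd (D.b_Ux.mul D.b_Ux)).congr fun t _ x => by ring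
lemma iφU (D : Data p c₁ c₂ f um up CU M T σ U φ) {t : ℝ} (ht : t ∈ Icc (0:ℝ) T) : IIn (fun t x => φ t x ^ 2 * Dx U t x ^ 2) t :=
  D.dφU.iin D.envE ((D.sφ.cont.pow 2).mul (D.sU.dx.cont.pow 2)) ht

lemma IUxx (D : Data p c₁ c₂ f um up CU M T σ U φ) {t : ℝ} (ht : t ∈ Icc (0:ℝ) T) : II (fun t x => Dx (Dx U) t x ^ 2) t ≤ 8 * CU ^ 2 :=
  II_kk ht.1 (D.iUxx ht) (sq_nonneg _) fun _ hs => (D.Uxx2_le hs.1).trans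
    (mul_le_mul_of_nonneg_left (kk_sq hs.1) (sq_nonneg _))
lemma IUxt (D : Data p c₁ c₂ f um up CU M T σ U φ) {t : ℝ} (ht : t ∈ Icc (0:ℝ) T) : II (fun t x => Dt (Dx U) t x ^ 2) t ≤ 8 * CU ^ 2 :=
  II_kk ht.1 (D.iUxt ht) (sq_nonneg _) fun _ hs => (D.Uxt2_le hs.1)
lemma IUx4 (D : Data p c₁ c₂ f um up CU M T σ U φ) {t : ℝ} (ht : t ∈ Icc (0:ℝ) T) : II (fun t x => Dx U t x ^ 4) t ≤ 8 * CU ^ 4 := by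
  refine II_kk ht.1 (D.iUx4 ht) (by positivity) fun s hs => ?_
  have hs' : s ∈ Icc 0 T := ⟨hs.1, hs.2.trans ht.2⟩
  have hk := kk_pos hs.1
  calc (∫ x, Dx U s x ^ 4) ≤ ∫ x, CU ^ 2 * kk s * Dx U s x ^ 2 := by
        refine integral_mono (D.dUx4.int D.envE (D.sU.dx.cont.pow 4) hs')
          ((D.int_Ux2 hs.1).const_mul _) fun x => ?_
        have := mul_le_mul_of_nonneg_right (D.Ux_sq_le hs.1 x) (sq_nonneg (Dx U s x))
        simp only
        nlinarith
    _ = CU ^ 2 * kk s * ∫ x, Dx U s x ^ 2 := MeasureTheory.integral_const_mul _ _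
    _ ≤ CU ^ 2 * kk s * CU ^ 2 := mul_le_mul_of_nonneg_left (D.Ux2_le hs.1) (by positivity)
    _ = _ := by ring
lemma IφU (D : Data p c₁ c₂ f um up CU M T σ U φ) {t : ℝ} (ht : t ∈ Icc (0:ℝ) T) : II (fun t x => φ t x ^ 2 * Dx U t x ^ 2) t
    ≤ 8 * (CU ^ 2 * S1 c₂ CU M) := by
  have hS := D.S1_pos
  refine II_kk ht.1 (D.iφU ht) (by positivity) fun s hs => ?_
  have hs' : s ∈ Icc 0 T := ⟨hs.1, hs.2.trans ht.2⟩
  have hk := kk_pos hs.1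
  calc (∫ x, φ s x ^ 2 * Dx U s x ^ 2) ≤ ∫ x, CU ^ 2 * kk s * φ s x ^ 2 := by
        refine integral_mono
          (D.dφU.int D.envE ((D.sφ.cont.pow 2).mul (D.sU.dx.cont.pow 2)) hs')
          ((D.iφ s hs').1.const_mul _) fun x => ?_
        have := mul_le_mul_of_nonneg_right (D.Ux_sq_le hs.1 x) (sq_nonneg (φ s x))
        simp only
        nlinarith
    _ = CU ^ 2 * kk s * ∫ x, φ s x ^ 2 := MeasureTheory.integral_const_mul _ _
    _ ≤ CU ^ 2 * kk s * S1 c₂ CU M := mul_le_mul_of_nonneg_left (D.step1 hs') (by positivity)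
    _ = _ := by ring

lemma dX (D : Data p c₁ c₂ f um up CU M T σ U φ) : Dm2 T (env U φ) (fun t x => om p (Dx φ t x) * Dx (Dx φ) t x ^ 2) :=
  D.d_φxx.sq.bd_mul D.b_om
lemma cX (D : Data p c₁ c₂ f um up CU M T σ U φ) : Continuous (fun q : ℝ × ℝ => om p (Dx φ q.1 q.2) * Dx (Dx φ) q.1 q.2 ^ 2) :=
  D.com.mul (D.sφ.dx.dx.cont.pow 2)
lemma d1 (D : Data p c₁ c₂ f um up CU M T σ U φ) : Dm2 T (env U φ) (fun t x => om p (Dx φ t x) * Dx φ t x ^ 2) :=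
  D.d_φx.sq.bd_mul D.b_om
lemma c1 (D : Data p c₁ c₂ f um up CU M T σ U φ) : Continuous (fun q : ℝ × ℝ => om p (Dx φ q.1 q.2) * Dx φ q.1 q.2 ^ 2) :=
  D.com.mul (D.sφ.dx.cont.pow 2)

lemma step2 (D : Data p c₁ c₂ f um up CU M T σ U φ) {L Λ : ℝ} (hL : FC f (|um| + |up| + M) L) (hΛ1 : 1 ≤ Λ)
    (hΛ : ∀ t ∈ Icc (0:ℝ) T, ∀ x, 1 ≤ Λ * om p (Dx φ t x)) {t : ℝ} (ht : t ∈ Icc (0:ℝ) T) :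
    II (fun t x => om p (Dx φ t x) * Dx (Dx φ) t x ^ 2) t ≤ S2 c₁ c₂ CU M L * Λ ^ 2 := by
  have cφx := D.sφ.dx.cont
  have cφt := D.sφ.dt.cont
  have cφxx := D.sφ.dx.dx.cont
  have cφxt := D.sφ.dx.dt.cont
  set a := aa c₁ CU with ha
  have ha0 : 0 < a := D.aa_pos
  have dH : Dm2 T (env U φ) (fun t x => - (Dx (Dx φ) t x * Dt φ t x)) :=
    (D.d_φxx.mul D.d_φt).neg
  have bal := balance D.envE
    (F := fun t x => Dx φ t x ^ 2 / 2)
    (Ft := fun t x => Dx φ t x * Dt (Dx φ) t x)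
    (G := fun t x => - (Dx φ t x * Dt φ t x))
    (Gx := fun t x => -(Dx (Dx φ) t x * Dt φ t x + Dx φ t x * Dt (Dx φ) t x))
    (H := fun t x => - (Dx (Dx φ) t x * Dt φ t x))
    (fun t x => by
      refine (((D.sφ.dx.ht t x).pow 2).div_const 2).congr_deriv ?_
      push_cast; ring)
    (fun t x => by
      rw [D.sφ.comm t x]
      exact ((D.sφ.dx.hx t x).mul (D.sφ.dt.hx t x)).neg)
    (by fun_prop) (by fun_prop) (by fun_prop) (by fun_prop) (by fun_prop)
    ((D.d_φx.sq.const_mul (1/2)).congr fun t _ x => by ring)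
    (D.d_φx.mul D.d_φt).neg dH (fun t ht x => by ring) ht
  have iX := D.dX.iin D.envE D.cX ht
  have i1 := D.d1.iin D.envE D.c1 ht
  have i2 := D.iUxx ht
  have i3 := D.iφU ht
  have hle : II (fun t x => - (Dx (Dx φ) t x * Dt φ t x)) t ≤
      II (fun t x => (-(a / 4)) * (om p (Dx φ t x) * Dx (Dx φ) t x ^ 2)
        + (c₂ * Dx (Dx U) t x ^ 2 + (L ^ 2 * Λ ^ 2 / a * (om p (Dx φ t x) * Dx φ t x ^ 2)
        + L ^ 2 * Λ / a * (φ t x ^ 2 * Dx U t x ^ 2)))) t := by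
    refine II_mono (dH.iin D.envE (by fun_prop) ht) ((iX.const_mul _).add
      ((i2.const_mul _).add ((i1.const_mul _).add (i3.const_mul _)))) fun s hs x => ?_
    have hs' : s ∈ Icc 0 T := ⟨hs.1.le, hs.2.trans ht.2⟩
    have e := D.eqn' hs' x
    have e2 : Dx (ww σ (uu U φ)) s x = deriv σ (Dx (uu U φ) s x) *
      (Dx (Dx U) s x + Dx (Dx φ) s x) := by rw [D.dxw, D.dxxu]
    have hu := D.max_principle hs' x
    have hU : |U s x| ≤ |um| + |up| + M := by linarith [D.absU hs.1.le x, D.hM]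
    have hP : |deriv f (uu U φ s x) * Dx φ s x| ≤ L * |Dx φ s x| := by
      rw [abs_mul]; exact mul_le_mul_of_nonneg_right (hL.2.1 _ hu) (abs_nonneg _)
    have hQ : |(deriv f (uu U φ s x) - deriv f (U s x)) * Dx U s x| ≤ L * |φ s x * Dx U s x| := by
      rw [abs_mul, abs_mul, ← mul_assoc]
      refine mul_le_mul_of_nonneg_right ?_ (abs_nonneg _)
      have := hL.2.2.2 _ _ hu hU
      have e3 : uu U φ s x - U s x = φ s x := by simp [uu]
      rwa [e3] at this
    have hs1 := D.σ'_ge hs.1.le x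
    have hs2 := D.σ'_le (Dx (uu U φ) s x)
    have ho := om_pos p (Dx φ s x)
    have hl := hΛ s hs' x
    rw [e, e2]
    set P := deriv f (uu U φ s x) * Dx φ s x
    set Q := (deriv f (uu U φ s x) - deriv f (U s x)) * Dx U s x
    set S := deriv σ (Dx (uu U φ) s x)
    set X := Dx (Dx φ) s x
    set Y := Dx (Dx U) s x
    set o := om p (Dx φ s x)
    have y1 := young (X := X) (P := P) ha0 ho hl
    have y2 := young (X := X) (P := Q) ha0 ho hl
    have z1 : Λ * P ^ 2 / a ≤ L ^ 2 * Λ ^ 2 / a * (o * Dx φ s x ^ 2) := by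
      have h1 := sq_le_of_abs hP
      have : L ^ 2 * Λ ^ 2 / a * (o * Dx φ s x ^ 2)
        = Λ * (L ^ 2 * Dx φ s x ^ 2 * (Λ * o)) / a := by ring
      rw [this]
      have h2 : L ^ 2 * Dx φ s x ^ 2 * 1 ≤ L ^ 2 * Dx φ s x ^ 2 * (Λ * o) :=
        mul_le_mul_of_nonneg_left hl (by positivity)
      have h3 : P ^ 2 ≤ L ^ 2 * Dx φ s x ^ 2 * (Λ * o) := by linarith
      gcongr
    have z2 : Λ * Q ^ 2 / a ≤ L ^ 2 * Λ / a * (φ s x ^ 2 * Dx U s x ^ 2) := by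
      have h1 := sq_le_of_abs hQ
      have : L ^ 2 * Λ / a * (φ s x ^ 2 * Dx U s x ^ 2)
        = Λ * (L ^ 2 * (φ s x * Dx U s x) ^ 2) / a := by ring
      rw [this]
      gcongr
    have z3 : -(S * (X * Y)) ≤ S * X ^ 2 / 4 + c₂ * Y ^ 2 := by
      have h1 : S * Y ^ 2 ≤ c₂ * Y ^ 2 := mul_le_mul_of_nonneg_right hs2 (sq_nonneg _)
      have h2 : 0 ≤ S := le_trans (by positivity) hs1
      nlinarith [mul_nonneg h2 (sq_nonneg (X / 2 + Y))]
    have z4 : a * o * X ^ 2 ≤ S * X ^ 2 := mul_le_mul_of_nonneg_right hs1 (sq_nonneg _)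
    linear_combination y1 + y2 + z1 + z2 + z3 + 3 / 4 * z4
  rw [II_add (iX.const_mul _) ((i2.const_mul _).add ((i1.const_mul _).add (i3.const_mul _))),
    II_add (i2.const_mul _) ((i1.const_mul _).add (i3.const_mul _)),
    II_add (i1.const_mul _) (i3.const_mul _), II_mul, II_mul, II_mul, II_mul, ← bal] at hle
  simp only [MeasureTheory.integral_div] at hle
  have h0 := D.init_all.2.1
  have h1 : 0 ≤ ∫ x, Dx φ t x ^ 2 := integral_nonneg fun x => sq_nonneg _
  have h2 := D.IUxx ht
  have h3 := D.step1' ht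
  have h4 := D.IφU ht
  have hS := D.S1_pos
  have hc := D.hc2
  have hL0 := hL.1
  set I1 := II (fun t x => om p (Dx φ t x) * Dx φ t x ^ 2) t
  set IX := II (fun t x => om p (Dx φ t x) * Dx (Dx φ) t x ^ 2) t
  set I2 := II (fun t x => Dx (Dx U) t x ^ 2) t
  set I3 := II (fun t x => φ t x ^ 2 * Dx U t x ^ 2) t
  set S := S1 c₂ CU M
  have h3' : I1 ≤ S / a := by rw [le_div_iff₀ ha0]; linarith
  have k1 : c₂ * I2 ≤ c₂ * (8 * CU ^ 2) := by gcongr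
  have k2 : L ^ 2 * Λ ^ 2 / a * I1 ≤ L ^ 2 * Λ ^ 2 / a * (S / a) := by gcongr
  have k3 : L ^ 2 * Λ / a * I3 ≤ L ^ 2 * Λ ^ 2 / a * (8 * (CU ^ 2 * S)) := by
    have : Λ ≤ Λ ^ 2 := by nlinarith
    calc L ^ 2 * Λ / a * I3 ≤ L ^ 2 * Λ / a * (8 * (CU ^ 2 * S)) := by gcongr
      _ ≤ _ := by gcongr
  have hΛ2 : 1 ≤ Λ ^ 2 := by nlinarith
  have k4 : M ^ 2 / 2 + c₂ * (8 * CU ^ 2) ≤ (M ^ 2 / 2 + c₂ * (8 * CU ^ 2)) * Λ ^ 2 :=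
    le_mul_of_one_le_right (by positivity) hΛ2
  have k5 : a / 4 * IX ≤ (M ^ 2 / 2 + c₂ * (8 * CU ^ 2)) * Λ ^ 2 +
    L ^ 2 * Λ ^ 2 / a * (S / a) + L ^ 2 * Λ ^ 2 / a * (8 * (CU ^ 2 * S)) := by linarith
  have k6 : IX = 4 / a * (a / 4 * IX) := by field_simp
  rw [k6]
  have k7 : S2 c₁ c₂ CU M L * Λ ^ 2 = 4 / a * ((M ^ 2 / 2 + c₂ * (8 * CU ^ 2)) * Λ ^ 2 +
    L ^ 2 * Λ ^ 2 / a * (S / a) + L ^ 2 * Λ ^ 2 / a * (8 * (CU ^ 2 * S))) := by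
    unfold S2; rw [← ha, show S1 c₂ CU M = S from rfl]; field_simp
  rw [k7]
  gcongr

lemma abs_φ (D : Data p c₁ c₂ f um up CU M T σ U φ) {t : ℝ} (ht : t ∈ Icc (0:ℝ) T) (x : ℝ) : |φ t x| ≤ 2 * (|um| + |up| + M) := by
  have h1 := D.max_principle ht x
  have h2 := D.absU ht.1 x
  have e : φ t x = uu U φ t x - U t x := by simp [uu]
  rw [e]
  have := abs_sub (uu U φ t x) (U t x)
  have := D.hM
  linarith [abs_nonneg um, abs_nonneg up]

lemma d4 (D : Data p c₁ c₂ f um up CU M T σ U φ) : Dm2 T (env U φ) (fun t x => om p (Dx φ t x) * Dx φ t x ^ 4) :=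
  (D.d_φx.sq.bd_mul ((D.b_om.mul D.b_φx).mul D.b_φx)).congr fun t _ x => by ring
lemma c4 (D : Data p c₁ c₂ f um up CU M T σ U φ) : Continuous (fun q : ℝ × ℝ => om p (Dx φ q.1 q.2) * Dx φ q.1 q.2 ^ 4) :=
  D.com.mul (D.sφ.dx.cont.pow 4)

lemma stepI (D : Data p c₁ c₂ f um up CU M T σ U φ) {t : ℝ} (ht : t ∈ Icc (0:ℝ) T) :
    II (fun t x => om p (Dx φ t x) * Dx φ t x ^ 4) t ≤
      16 * (2 * (|um| + |up| + M)) ^ 2 * II (fun t x => om p (Dx φ t x) * Dx (Dx φ) t x ^ 2) t := by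
  have cφ := D.sφ.cont
  have cφx := D.sφ.dx.cont
  have cφxx := D.sφ.dx.dx.cont
  have com := D.com
  have co := (om_smooth p).continuous
  have co' := (smd (om_smooth p)).continuous
  set K := 2 * (|um| + |up| + M) with hK
  set Gx : ℝ → ℝ → ℝ := fun t x => Dx φ t x * (Dx φ t x ^ 3 * om p (Dx φ t x)) + φ t x *
      (3 * Dx φ t x ^ 2 * Dx (Dx φ) t x * om p (Dx φ t x) +
        Dx φ t x ^ 3 * (deriv (om p) (Dx φ t x) * Dx (Dx φ) t x)) with hGx
  have b1 : Bd T (fun t x => deriv (om p) (Dx φ t x)) := D.b_φx.comp co'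
  have dG : Dm2 T (env U φ) Gx := by
    have a1 := D.d4
    have a2 := (D.d_φ.mul D.d_φx).mul_bd (((D.b_φx.mul D.b_φxx).mul D.b_om).mul (Bd.const 3))
    have a3 := (D.d_φ.mul D.d_φx).mul_bd (((D.b_φx.mul D.b_φx).mul b1).mul D.b_φxx)
    exact ((a1.add a2).add a3).congr fun t _ x => by simp only [hGx]; ring
  have bal := balance D.envE (F := fun _ _ => 0) (Ft := fun _ _ => 0)
    (G := fun t x => φ t x * (Dx φ t x ^ 3 * om p (Dx φ t x))) (Gx := Gx) (H := Gx)
    (fun t x => hasDerivAt_const _ _)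
    (fun t x => by
      refine ((D.sφ.hx t x).mul (((D.sφ.dx.hx t x).pow 3).mul
        ((hd (om_smooth p) (Dx φ t x)).comp x (D.sφ.dx.hx t x)))).congr_deriv ?_
      simp only [hGx, Function.comp]; push_cast; rfl)
    (by fun_prop) (by fun_prop) (by fun_prop) (by fun_prop) (by fun_prop)
    ((D.d_φ.sq.const_mul 0).congr fun t _ x => by ring)
    (((D.d_φ.mul D.d_φx).mul_bd ((D.b_φx.mul D.b_φx).mul D.b_om)).congr fun t _ x => by ring)
    dG (fun t _ x => by ring) ht
  have iX := D.dX.iin D.envE D.cX ht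
  have i4 := D.d4.iin D.envE D.c4 ht
  have hle : II (fun t x => 1 / 2 * (om p (Dx φ t x) * Dx φ t x ^ 4)
      + (-(8 * K ^ 2)) * (om p (Dx φ t x) * Dx (Dx φ) t x ^ 2)) t ≤ II Gx t := by
    refine II_mono ((i4.const_mul _).add (iX.const_mul _))
      (dG.iin D.envE (by fun_prop) ht) fun s hs x => ?_
    have hs' : s ∈ Icc 0 T := ⟨hs.1.le, hs.2.trans ht.2⟩
    have h1 := om_deriv D.hp0 D.hp1 (Dx φ s x)
    have h2 := D.abs_φ hs' x
    have ho := om_pos p (Dx φ s x)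
    simp only [hGx]
    rw [← hK] at h2
    set z := Dx φ s x
    set X := Dx (Dx φ) s x
    set o := om p z
    set d := z * deriv (om p) z with hd
    have e : z * (z ^ 3 * o) + φ s x * (3 * z ^ 2 * X * o + z ^ 3 * (deriv (om p) z * X))
      = o * z ^ 4 + z ^ 2 * (φ s x * X * (3 * o + d)) := by rw [hd]; ring
    have h3 : |φ s x * X * (3 * o + d)| ≤ K * |X| * (4 * o) := by
      rw [abs_mul, abs_mul]
      have : |3 * o + d| ≤ 4 * o := by
        refine (abs_add_le _ _).trans ?_
        rw [abs_of_pos (by positivity : 0 < 3 * o)]; linarith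
      have hK0 : 0 ≤ K := (abs_nonneg _).trans h2
      gcongr
    have h4 := (abs_le.1 h3).1
    have h5 := mul_le_mul_of_nonneg_left h4 (sq_nonneg z)
    rw [e]
    have h6 : 0 ≤ o * (z ^ 2 - 4 * (K * |X|)) ^ 2 := by positivity
    have h7 : |X| ^ 2 = X ^ 2 := sq_abs X
    linear_combination h5 + 1 / 2 * h6 + 8 * K ^ 2 * o * h7
  rw [II_add (i4.const_mul _) (iX.const_mul _), II_mul, II_mul, ← bal] at hle
  simp only [MeasureTheory.integral_zero, sub_zero] at hle
  linarith

end Data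
end EE

namespace EE

/-- Third energy constant. -/
noncomputable def S3 (c₁ c₂ CU M L K : ℝ) : ℝ := c₂ ^ 2 * (M ^ 2 + CU ^ 2)
  + aa c₁ CU / 2 * (8 * CU ^ 2) + c₂ * (2 + 2 * CU ^ 2) * (8 * L ^ 2 *
    (16 * (2 * K) ^ 2 * S2 c₁ c₂ CU M L + 8 * CU ^ 4)
    + 2 * L ^ 2 * (S2 c₁ c₂ CU M L + 8 * CU ^ 2))

lemma pt3 {S a b o V v q R : ℝ} (ha : 0 < a) (ho : 0 < o) (ho1 : o ≤ 1) (h1 : a * o ≤ S)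
    (h2 : S ≤ b * o) (hV : V = q + v) :
    -((V + R) * (S * V)) ≤ -(a / 4) * (o * v ^ 2) + a / 2 * q ^ 2 + b / 2 * (o * R ^ 2) := by
  have hS : 0 ≤ S := le_trans (by positivity) h1
  have e1 : -((V + R) * (S * V)) ≤ - (1 / 2) * (S * V ^ 2) + 1 / 2 * (S * R ^ 2) := by
    nlinarith [mul_nonneg hS (sq_nonneg (V + R))]
  have e2 : S * R ^ 2 ≤ b * o * R ^ 2 := mul_le_mul_of_nonneg_right h2 (sq_nonneg _)
  have e3 : a * o * V ^ 2 ≤ S * V ^ 2 := mul_le_mul_of_nonneg_right h1 (sq_nonneg _)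
  have e4 : v ^ 2 / 2 - q ^ 2 ≤ V ^ 2 := by rw [hV]; nlinarith [sq_nonneg (v + 2 * q)]
  have e5 : a * o * (v ^ 2 / 2 - q ^ 2) ≤ a * o * V ^ 2 :=
    mul_le_mul_of_nonneg_left e4 (by positivity)
  have e6 : a * q ^ 2 * o ≤ a * q ^ 2 := mul_le_of_le_one_right (by positivity) ho1
  linarith

lemma ptR {o L g2 g1 z y X Y : ℝ} (ho : 0 < o) (ho1 : o ≤ 1) (h2 : |g2| ≤ L) (h1 : |g1| ≤ L) :
    o * (g2 * (y + z) * (y + z) + g1 * (Y + X)) ^ 2 ≤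
      16 * L ^ 2 * (o * z ^ 4 + y ^ 4) + 4 * L ^ 2 * (o * X ^ 2 + Y ^ 2) := by
  have hL : 0 ≤ L := (abs_nonneg _).trans h1
  have s2 : g2 ^ 2 ≤ L ^ 2 := sq_le_sq' (by linarith [neg_abs_le g2]) ((le_abs_self _).trans h2)
  have s1 : g1 ^ 2 ≤ L ^ 2 := sq_le_sq' (by linarith [neg_abs_le g1]) ((le_abs_self _).trans h1)
  have e1 : (g2 * (y + z) * (y + z) + g1 * (Y + X)) ^ 2 ≤
      2 * (g2 ^ 2 * (y + z) ^ 4) + 2 * (g1 ^ 2 * (Y + X) ^ 2) := by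
    nlinarith [sq_nonneg (g2 * (y + z) * (y + z) - g1 * (Y + X))]
  have e2 : g2 ^ 2 * (y + z) ^ 4 ≤ L ^ 2 * (8 * (z ^ 4 + y ^ 4)) := by
    have : (y + z) ^ 4 ≤ 8 * (z ^ 4 + y ^ 4) := by
      have a1 : (y + z) ^ 2 ≤ 2 * (y ^ 2 + z ^ 2) := by nlinarith [sq_nonneg (y - z)]
      have a2 : ((y + z) ^ 2) ^ 2 ≤ (2 * (y ^ 2 + z ^ 2)) ^ 2 :=
        pow_le_pow_left₀ (sq_nonneg _) a1 2
      nlinarith [sq_nonneg (y ^ 2 - z ^ 2)]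
    gcongr
  have e3 : g1 ^ 2 * (Y + X) ^ 2 ≤ L ^ 2 * (2 * (X ^ 2 + Y ^ 2)) := by
    have : (Y + X) ^ 2 ≤ 2 * (X ^ 2 + Y ^ 2) := by nlinarith [sq_nonneg (X - Y)]
    gcongr
  have e4 : (g2 * (y + z) * (y + z) + g1 * (Y + X)) ^ 2 ≤
      16 * L ^ 2 * (z ^ 4 + y ^ 4) + 4 * L ^ 2 * (X ^ 2 + Y ^ 2) := by linarith
  have e5 := mul_le_mul_of_nonneg_left e4 ho.le
  have e6 : 16 * L ^ 2 * y ^ 4 * o ≤ 16 * L ^ 2 * y ^ 4 :=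
    mul_le_of_le_one_right (by positivity) ho1
  have e7 : 4 * L ^ 2 * Y ^ 2 * o ≤ 4 * L ^ 2 * Y ^ 2 :=
    mul_le_of_le_one_right (by positivity) ho1
  linarith

namespace Data
variable {p c₁ c₂ : ℝ} {f : ℝ → ℝ} {um up CU M T : ℝ} {σ : ℝ → ℝ} {U φ : ℝ → ℝ → ℝ}

lemma dV (D : Data p c₁ c₂ f um up CU M T σ U φ) : Dm2 T (env U φ) (fun t x => om p (Dx φ t x) * Dt (Dx φ) t x ^ 2) :=
  D.d_φxt.sq.bd_mul D.b_om
lemma cV (D : Data p c₁ c₂ f um up CU M T σ U φ) : Continuous (fun q : ℝ × ℝ => om p (Dx φ q.1 q.2) * Dt (Dx φ) q.1 q.2 ^ 2) :=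
  D.com.mul (D.sφ.dx.dt.cont.pow 2)
lemma dE (D : Data p c₁ c₂ f um up CU M T σ U φ) : Dm2 T (env U φ) (fun t x => om p (Dx φ t x) ^ 2 * Dx (Dx φ) t x ^ 2) :=
  (D.d_φxx.sq.bd_mul (D.b_om.mul D.b_om)).congr fun t _ x => by ring
lemma cE (D : Data p c₁ c₂ f um up CU M T σ U φ) : Continuous (fun q : ℝ × ℝ => om p (Dx φ q.1 q.2) ^ 2 * Dx (Dx φ) q.1 q.2 ^ 2) :=
  (D.com.pow 2).mul (D.sφ.dx.dx.cont.pow 2)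

lemma wx_init (D : Data p c₁ c₂ f um up CU M T σ U φ) : (∫ x, Dx (ww σ (uu U φ)) 0 x ^ 2) ≤ 2 * c₂ ^ 2 * (M ^ 2 + CU ^ 2) := by
  have i1 := (D.iφ 0 D.h0T).2.2.1
  have i2 := D.int_Uxx2 D.h0T
  have b1 := D.init_all.2.2.1
  have b2 := D.Uxx2_le le_rfl
  have b3 : CU ^ 2 * kk 0 ^ 2 ≤ CU ^ 2 := mul_le_of_le_one_right (sq_nonneg _)
      (pow_le_one₀ (kk_pos le_rfl).le (kk_le_one le_rfl))
  have i3 := i1.const_mul (2 * c₂ ^ 2)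
  have i4 := i2.const_mul (2 * c₂ ^ 2)
  calc (∫ x, Dx (ww σ (uu U φ)) 0 x ^ 2)
      ≤ ∫ x, (2 * c₂ ^ 2 * Dx (Dx φ) 0 x ^ 2 + 2 * c₂ ^ 2 * Dx (Dx U) 0 x ^ 2) := by
        refine integral_mono (D.d_wx.sq.int D.envE (D.sw.dx.cont.pow 2) D.h0T)
          (i3.add i4) fun x => ?_
        simp only [D.dxw, D.dxxu, mul_pow]
        have h1 := D.σ'_le (Dx (uu U φ) 0 x)
        have h2 := (D.σ'_pos (Dx (uu U φ) 0 x)).le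
        have h3 : (Dx (Dx U) 0 x + Dx (Dx φ) 0 x) ^ 2 ≤
          2 * (Dx (Dx φ) 0 x ^ 2 + Dx (Dx U) 0 x ^ 2) := by
          nlinarith [sq_nonneg (Dx (Dx U) 0 x - Dx (Dx φ) 0 x)]
        calc _ ≤ c₂ ^ 2 * (2 * (Dx (Dx φ) 0 x ^ 2 + Dx (Dx U) 0 x ^ 2)) := by gcongr
          _ = _ := by ring
    _ = 2 * c₂ ^ 2 * (∫ x, Dx (Dx φ) 0 x ^ 2) + 2 * c₂ ^ 2 * ∫ x, Dx (Dx U) 0 x ^ 2 := by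
        rw [MeasureTheory.integral_add i3 i4, MeasureTheory.integral_const_mul,
          MeasureTheory.integral_const_mul]
    _ ≤ 2 * c₂ ^ 2 * M ^ 2 + 2 * c₂ ^ 2 * CU ^ 2 := by
        have := b2.trans b3
        gcongr
    _ = _ := by ring

lemma wx_final (D : Data p c₁ c₂ f um up CU M T σ U φ) {t : ℝ} (ht : t ∈ Icc (0:ℝ) T) :
    aa c₁ CU ^ 2 * ((∫ x, om p (Dx φ t x) ^ 2 * Dx (Dx φ) t x ^ 2) / 2 - CU ^ 2)
      ≤ ∫ x, Dx (ww σ (uu U φ)) t x ^ 2 := by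
  have i1 := D.dE.int D.envE D.cE ht
  have i2 := D.int_Uxx2 ht
  have b2 := D.Uxx2_le ht.1
  have b3 : CU ^ 2 * kk t ^ 2 ≤ CU ^ 2 := mul_le_of_le_one_right (sq_nonneg _)
      (pow_le_one₀ (kk_pos ht.1).le (kk_le_one ht.1))
  have i3 := i1.const_mul (aa c₁ CU ^ 2 / 2)
  have i4 := i2.const_mul (aa c₁ CU ^ 2)
  calc _ ≤ aa c₁ CU ^ 2 / 2 * (∫ x, om p (Dx φ t x) ^ 2 * Dx (Dx φ) t x ^ 2)
        - aa c₁ CU ^ 2 * ∫ x, Dx (Dx U) t x ^ 2 := by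
        have := mul_le_mul_of_nonneg_left (b2.trans b3) (sq_nonneg (aa c₁ CU))
        linarith
    _ = ∫ x, (aa c₁ CU ^ 2 / 2 * (om p (Dx φ t x) ^ 2 * Dx (Dx φ) t x ^ 2)
        - aa c₁ CU ^ 2 * Dx (Dx U) t x ^ 2) := by
        rw [MeasureTheory.integral_sub i3 i4, MeasureTheory.integral_const_mul,
          MeasureTheory.integral_const_mul]
    _ ≤ _ := by
        refine integral_mono (i3.sub i4)
          (D.d_wx.sq.int D.envE (D.sw.dx.cont.pow 2) ht) fun x => ?_
        simp only [D.dxw, D.dxxu, mul_pow]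
        have h1 := D.σ'_ge ht.1 x
        have ho := om_pos p (Dx φ t x)
        have ho1 := om_le_one D.hp1 (Dx φ t x)
        have ha := D.aa_pos
        rw [D.dxu] at h1
        simp only [D.dxu] at h1 ⊢
        set o := om p (Dx φ t x)
        set a := aa c₁ CU
        set X := Dx (Dx φ) t x
        set Y := Dx (Dx U) t x
        set S := deriv σ (Dx U t x + Dx φ t x)
        have h2 : (a * o) ^ 2 ≤ S ^ 2 := pow_le_pow_left₀ (by positivity) h1 2
        have h3 : X ^ 2 / 2 - Y ^ 2 ≤ (Y + X) ^ 2 := by nlinarith [sq_nonneg (X + 2 * Y)]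
        have h4 := mul_le_mul_of_nonneg_left h3 (sq_nonneg (a * o))
        have h5 := mul_le_mul_of_nonneg_right h2 (sq_nonneg (Y + X))
        have h6 : o ^ 2 ≤ 1 := pow_le_one₀ ho.le ho1
        have h7 := mul_le_mul_of_nonneg_left h6 (by positivity : 0 ≤ a ^ 2 * Y ^ 2)
        linear_combination h4 + h5 + h7

lemma step3 (D : Data p c₁ c₂ f um up CU M T σ U φ) {L Λ : ℝ} (hL : FC f (|um| + |up| + M) L) (hΛ1 : 1 ≤ Λ)
    (hΛ : ∀ t ∈ Icc (0:ℝ) T, ∀ x, 1 ≤ Λ * om p (Dx φ t x)) {t : ℝ} (ht : t ∈ Icc (0:ℝ) T) :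
    (∫ x, Dx (ww σ (uu U φ)) t x ^ 2) / 2 + aa c₁ CU / 4 *
      II (fun t x => om p (Dx φ t x) * Dt (Dx φ) t x ^ 2) t
        ≤ S3 c₁ c₂ CU M L (|um| + |up| + M) * Λ ^ 2 := by
  have cwx := D.sw.dx.cont
  have cwt := D.sw.dt.cont
  have cwxx := D.sw.dx.dx.cont
  have cwxt := D.sw.dx.dt.cont
  set w := ww σ (uu U φ) with hw
  set K := |um| + |up| + M with hK
  set a := aa c₁ CU with ha
  set b := c₂ * (2 + 2 * CU ^ 2) with hb
  have ha0 : 0 < a := D.aa_pos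
  have hc := D.hc2
  have hb0 : 0 < b := by positivity
  have hL0 := hL.1
  have dH : Dm2 T (env U φ) (fun t x => - (Dx (Dx w) t x * Dt w t x)) :=
    (D.d_wxx.mul D.d_wt).neg
  have bal := balance D.envE
    (F := fun t x => Dx w t x ^ 2 / 2)
    (Ft := fun t x => Dx w t x * Dt (Dx w) t x)
    (G := fun t x => - (Dx w t x * Dt w t x))
    (Gx := fun t x => -(Dx (Dx w) t x * Dt w t x + Dx w t x * Dt (Dx w) t x))
    (H := fun t x => - (Dx (Dx w) t x * Dt w t x))
    (fun t x => by
      refine (((D.sw.dx.ht t x).pow 2).div_const 2).congr_deriv ?_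
      push_cast; ring)
    (fun t x => by
      rw [D.sw.comm t x]
      exact ((D.sw.dx.hx t x).mul (D.sw.dt.hx t x)).neg)
    (by fun_prop) (by fun_prop) (by fun_prop) (by fun_prop) (by fun_prop)
    ((D.d_wx.sq.const_mul (1/2)).congr fun t _ x => by ring)
    (D.d_wx.mul D.d_wt).neg dH (fun t ht x => by ring) ht
  have iV := D.dV.iin D.envE D.cV ht
  have iX := D.dX.iin D.envE D.cX ht
  have i4 := D.d4.iin D.envE D.c4 ht
  have j1 := D.iUxx ht
  have j2 := D.iUxt ht
  have j3 := D.iUx4 ht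
  have r1 := (i4.add j3).const_mul (8 * L ^ 2 * b)
  have r2 := (iX.add j1).const_mul (2 * L ^ 2 * b)
  have r3 := j2.const_mul (a / 2)
  have r4 := iV.const_mul (-(a / 4))
  have hle : II (fun t x => - (Dx (Dx w) t x * Dt w t x)) t ≤
      II (fun t x => -(a / 4) * (om p (Dx φ t x) * Dt (Dx φ) t x ^ 2)
        + (a / 2 * Dt (Dx U) t x ^ 2
          + (8 * L ^ 2 * b * (om p (Dx φ t x) * Dx φ t x ^ 4 + Dx U t x ^ 4)
          + 2 * L ^ 2 * b * (om p (Dx φ t x) * Dx (Dx φ) t x ^ 2 + Dx (Dx U) t x ^ 2)))) t := by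
    refine II_mono (dH.iin D.envE (by fun_prop) ht) (r4.add (r3.add (r1.add r2))) fun s hs x => ?_
    have hs' : s ∈ Icc 0 T := ⟨hs.1.le, hs.2.trans ht.2⟩
    have hu := D.max_principle hs' x
    have hs1 := D.σ'_ge hs.1.le x
    have hs2 := D.σ'_le' hs.1.le x
    have ho := om_pos p (Dx φ s x)
    have ho1 := om_le_one D.hp1 (Dx φ s x)
    have e1 := D.eqnx hs' x
    have e2 : Dt w s x = deriv σ (Dx (uu U φ) s x) * Dt (Dx (uu U φ)) s x := by rw [hw, D.dtw]
    have e3 : Dt (Dx (uu U φ)) s x = Dt (Dx U) s x + Dt (Dx φ) s x := by rw [D.dtxu]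
    have e4 : Dx (uu U φ) s x = Dx U s x + Dx φ s x := by rw [D.dxu]
    have e5 : Dx (Dx (uu U φ)) s x = Dx (Dx U) s x + Dx (Dx φ) s x := by rw [D.dxxu]
    rw [← hw] at e1
    rw [e1, e2]
    have q1 := pt3 (R := deriv (deriv f) (uu U φ s x) * Dx (uu U φ) s x * Dx (uu U φ) s x
      + deriv f (uu U φ s x) * Dx (Dx (uu U φ)) s x) ha0 ho ho1 hs1 hs2 e3
    refine q1.trans ?_
    rw [e4, e5]
    have q2 := ptR (z := Dx φ s x) (y := Dx U s x) (X := Dx (Dx φ) s x) (Y := Dx (Dx U) s x)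
      ho ho1 (hL.2.2.1 _ hu) (hL.2.1 _ hu)
    have q3 := mul_le_mul_of_nonneg_left q2 (by positivity : 0 ≤ b / 2)
    linear_combination q3
  rw [II_add r4 (r3.add (r1.add r2)), II_add r3 (r1.add r2), II_add r1 r2, II_mul, II_mul, II_mul,
    II_mul, II_add i4 j3, II_add iX j1, ← bal] at hle
  simp only [MeasureTheory.integral_div] at hle
  have g0 := D.wx_init
  rw [← hw] at g0
  have g1 := D.IUxx ht
  have g2 := D.IUxt ht
  have g3 := D.IUx4 ht
  have g4 := D.stepI ht
  have g5 := D.step2 hL hΛ1 hΛ ht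
  rw [← hK] at g4
  set I4 := II (fun t x => om p (Dx φ t x) * Dx φ t x ^ 4) t
  set IX := II (fun t x => om p (Dx φ t x) * Dx (Dx φ) t x ^ 2) t
  set IV := II (fun t x => om p (Dx φ t x) * Dt (Dx φ) t x ^ 2) t
  set I1 := II (fun t x => Dx (Dx U) t x ^ 2) t
  set I2 := II (fun t x => Dt (Dx U) t x ^ 2) t
  set I3 := II (fun t x => Dx U t x ^ 4) t
  have hS2 : S3 c₁ c₂ CU M L K = c₂ ^ 2 * (M ^ 2 + CU ^ 2)
    + a / 2 * (8 * CU ^ 2) + b * (8 * L ^ 2 *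
    (16 * (2 * K) ^ 2 * S2 c₁ c₂ CU M L + 8 * CU ^ 4)
    + 2 * L ^ 2 * (S2 c₁ c₂ CU M L + 8 * CU ^ 2)) := rfl
  set Z := S2 c₁ c₂ CU M L
  have hΛ2 : 1 ≤ Λ ^ 2 := by nlinarith
  have k0 : c₂ ^ 2 * (M ^ 2 + CU ^ 2) ≤ c₂ ^ 2 * (M ^ 2 + CU ^ 2) * Λ ^ 2 :=
    le_mul_of_one_le_right (by positivity) hΛ2
  have k1 : CU ^ 2 ≤ CU ^ 2 * Λ ^ 2 := le_mul_of_one_le_right (by positivity) hΛ2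
  have k2 : CU ^ 4 ≤ CU ^ 4 * Λ ^ 2 := le_mul_of_one_le_right (by positivity) hΛ2
  have l1 : a / 2 * I2 ≤ a / 2 * (8 * (CU ^ 2 * Λ ^ 2)) :=
    mul_le_mul_of_nonneg_left (by linarith) (by positivity)
  have m1 : 16 * (2 * K) ^ 2 * IX ≤ 16 * (2 * K) ^ 2 * (Z * Λ ^ 2) :=
    mul_le_mul_of_nonneg_left g5 (by positivity)
  have l2 : 8 * L ^ 2 * b * (I4 + I3) ≤
      8 * L ^ 2 * b * (16 * (2 * K) ^ 2 * (Z * Λ ^ 2) + 8 * (CU ^ 4 * Λ ^ 2)) :=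
    mul_le_mul_of_nonneg_left (by linarith) (by positivity)
  have l3 : 2 * L ^ 2 * b * (IX + I1) ≤ 2 * L ^ 2 * b * (Z * Λ ^ 2 + 8 * (CU ^ 2 * Λ ^ 2)) :=
    mul_le_mul_of_nonneg_left (by linarith) (by positivity)
  rw [hS2]
  linear_combination hle + 1 / 2 * g0 + k0 + l1 + l2 + l3

/-- The final estimate. -/
lemma final (D : Data p c₁ c₂ f um up CU M T σ U φ) {L Λ : ℝ} (hL : FC f (|um| + |up| + M) L) (hΛ1 : 1 ≤ Λ)
    (hΛ : ∀ t ∈ Icc (0:ℝ) T, ∀ x, 1 ≤ Λ * om p (Dx φ t x)) {t : ℝ} (ht : t ∈ Icc (0:ℝ) T) :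
    (∫ x, om p (Dx φ t x) ^ 2 * Dx (Dx φ) t x ^ 2)
      + (∫ τ in (0:ℝ)..t, ∫ x, om p (Dx φ τ x) * Dt (Dx φ) τ x ^ 2)
    ≤ (4 / aa c₁ CU ^ 2 * |S3 c₁ c₂ CU M L (|um| + |up| + M)| + 2 * CU ^ 2
      + 4 / aa c₁ CU * |S3 c₁ c₂ CU M L (|um| + |up| + M)|) * Λ ^ 3 := by
  have iV := D.dV.iin D.envE D.cV ht
  rw [← II_eq ht.1 iV]
  have h1 := D.step3 hL hΛ1 hΛ ht
  have h2 := D.wx_final ht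
  have ha := D.aa_pos
  set a := aa c₁ CU
  set Z := S3 c₁ c₂ CU M L (|um| + |up| + M)
  set E := ∫ x, om p (Dx φ t x) ^ 2 * Dx (Dx φ) t x ^ 2
  set W := ∫ x, Dx (ww σ (uu U φ)) t x ^ 2
  have hV0 : 0 ≤ II (fun t x => om p (Dx φ t x) * Dt (Dx φ) t x ^ 2) t :=
    II_nonneg fun s _ x => mul_nonneg (om_pos _ _).le (sq_nonneg _)
  have hW0 : 0 ≤ W := integral_nonneg fun x => sq_nonneg _
  set V := II (fun t x => om p (Dx φ t x) * Dt (Dx φ) t x ^ 2) t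
  have hΛ23 : Λ ^ 2 ≤ Λ ^ 3 := pow_le_pow_right₀ hΛ1 (by norm_num)
  have hΛ3 : 1 ≤ Λ ^ 3 := one_le_pow₀ hΛ1
  have hZ : Z * Λ ^ 2 ≤ |Z| * Λ ^ 3 := by
    have := le_abs_self Z
    gcongr
  have aV : 0 ≤ a / 4 * V := by positivity
  have v1 : V ≤ 4 / a * (|Z| * Λ ^ 3) := by
    have : V = 4 / a * (a / 4 * V) := by field_simp
    rw [this]
    refine mul_le_mul_of_nonneg_left ?_ (by positivity)
    linarith
  have v2 : E ≤ 4 / a ^ 2 * (|Z| * Λ ^ 3) + 2 * CU ^ 2 := by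
    have e : E = 4 / a ^ 2 * (a ^ 2 * (E / 2 - CU ^ 2) / 2) + 2 * CU ^ 2 := by field_simp; ring
    have : 4 / a ^ 2 * (a ^ 2 * (E / 2 - CU ^ 2) / 2) ≤ 4 / a ^ 2 * (|Z| * Λ ^ 3) := by
      refine mul_le_mul_of_nonneg_left ?_ (by positivity)
      linarith
    linarith
  have v3 : CU ^ 2 ≤ CU ^ 2 * Λ ^ 3 := le_mul_of_one_le_right (by positivity) hΛ3
  linear_combination v1 + v2 + 2 * v3

end Data
end EE

/-- Proposition 6.1 (second-derivative energy estimate): with `N` any bound for the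
weighted `L^∞` norm `sup (1+(∂ₓφ)²)^(1/2)` on `[0,T]×ℝ`, if
`‖φ(0)‖_{L²} + ‖∂ₓφ(0)‖_{L²} + ‖∂ₓ²φ(0)‖_{L²} + sup|φ(0)| ≤ M` then for all `t ∈ [0,T]`,
`∫ (1+(∂ₓφ(t))²)^(p-1) (∂ₓ²φ(t))² + ∫₀^t ∫ (1+(∂ₓφ)²)^((p-1)/2) (∂ₜ∂ₓφ)² ≤ C₀ N^(3(1-p))`,
with `C₀` depending only on `p, c₁, c₂, CU, um, up, f, M`. -/
theorem second_derivative_energy_estimate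
    (p c₁ c₂ : ℝ) (hp0 : 0 < p) (hp1 : p < 1) (hc1 : 0 < c₁) (hc12 : c₁ ≤ c₂)
    (f : ℝ → ℝ) (hf : ContDiff ℝ (⊤ : ℕ∞) f) (hconv : ∀ u : ℝ, 0 < deriv (deriv f) u)
    (um up CU : ℝ) (hu : um < up) (hCU : 0 < CU)
    (M : ℝ) (hM : 0 < M) :
    ∃ C₀ : ℝ, 0 < C₀ ∧
      ∀ σ : ℝ → ℝ, ContDiff ℝ (⊤ : ℕ∞) σ → σ 0 = 0 →
      (∀ v : ℝ, c₁ * (1 + v ^ 2) ^ ((p - 1) / 2) ≤ deriv σ v ∧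
        deriv σ v ≤ c₂ * (1 + v ^ 2) ^ ((p - 1) / 2)) →
      ∀ U : ℝ → ℝ → ℝ, ContDiff ℝ (⊤ : ℕ∞) (fun q : ℝ × ℝ => U q.1 q.2) →
      (∀ t : ℝ, 0 ≤ t → ∀ x : ℝ,
        deriv (fun s => U s x) t + deriv (fun y => f (U t y)) x = 0) →
      (∀ t : ℝ, 0 ≤ t → ∀ x : ℝ, um < U t x ∧ U t x < up) →
      (∀ t : ℝ, 0 ≤ t → ∀ x : ℝ, 0 < deriv (U t) x) →
      (∀ t : ℝ, 0 ≤ t → ∀ x : ℝ, deriv (U t) x ≤ CU * (1 + t)⁻¹) →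
      (∀ t : ℝ, 0 ≤ t → L2norm (deriv (U t)) ≤ CU * (1 + t) ^ (-(1 : ℝ) / 2)) →
      (∀ t : ℝ, 0 ≤ t → (∫ x : ℝ, |deriv (deriv (U t)) x|) ≤ CU * (1 + t)⁻¹) →
      (∀ t : ℝ, 0 ≤ t → ∀ x : ℝ,
        L2norm (deriv (deriv (U t))) + |deriv (deriv (U t)) x|
          ≤ CU * (1 + t) ^ (-(9 : ℝ) / 8)) →
      (∀ t : ℝ, 0 ≤ t →
        L2norm (deriv (deriv (deriv (U t)))) ≤ CU * (1 + t) ^ (-(9 : ℝ) / 8)) →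
      (∀ t : ℝ, 0 ≤ t → ∀ x : ℝ,
        L2norm (fun y => deriv (fun s => deriv (U s) y) t)
          + |deriv (fun s => deriv (U s) x) t| ≤ CU * (1 + t)⁻¹) →
      ∀ T : ℝ, 0 < T →
      ∀ φ : ℝ → ℝ → ℝ, ContDiff ℝ (⊤ : ℕ∞) (fun q : ℝ × ℝ => φ q.1 q.2) →
      (∀ t ∈ Icc (0 : ℝ) T, ∀ x : ℝ,
        deriv (fun s => φ s x) t
          + deriv (fun y => f (U t y + φ t y) - f (U t y)) x
          - deriv (fun y => σ (deriv (U t) y + deriv (φ t) y) - σ (deriv (U t) y)) x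
        = deriv (fun y => σ (deriv (U t) y)) x) →
      (∃ B : ℝ, ∀ t ∈ Icc (0 : ℝ) T, ∀ x : ℝ,
        |φ t x| + |deriv (φ t) x| + |deriv (deriv (φ t)) x|
          + |deriv (deriv (deriv (φ t))) x| + |deriv (fun s => deriv (φ s) x) t| ≤ B) →
      (∀ t ∈ Icc (0 : ℝ) T,
        Integrable (fun x : ℝ => (φ t x) ^ 2) ∧
        Integrable (fun x : ℝ => (deriv (φ t) x) ^ 2) ∧
        Integrable (fun x : ℝ => (deriv (deriv (φ t)) x) ^ 2) ∧
        Integrable (fun x : ℝ => (deriv (deriv (deriv (φ t))) x) ^ 2) ∧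
        Integrable (fun x : ℝ => (deriv (fun s => deriv (φ s) x) t) ^ 2)) →
      (∃ B : ℝ, ∀ t ∈ Icc (0 : ℝ) T,
        (∫ x : ℝ, (φ t x) ^ 2) + (∫ x : ℝ, (deriv (φ t) x) ^ 2)
          + (∫ x : ℝ, (deriv (deriv (φ t)) x) ^ 2)
          + (∫ x : ℝ, (deriv (deriv (deriv (φ t))) x) ^ 2)
          + (∫ x : ℝ, (deriv (fun s => deriv (φ s) x) t) ^ 2) ≤ B) →
      (∀ t ∈ Icc (0 : ℝ) T,
        Tendsto (φ t) atTop (nhds 0) ∧ Tendsto (φ t) atBot (nhds 0) ∧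
        Tendsto (deriv (φ t)) atTop (nhds 0) ∧ Tendsto (deriv (φ t)) atBot (nhds 0) ∧
        Tendsto (deriv (deriv (φ t))) atTop (nhds 0) ∧
        Tendsto (deriv (deriv (φ t))) atBot (nhds 0)) →
      L2norm (φ 0) + L2norm (deriv (φ 0)) + L2norm (deriv (deriv (φ 0)))
        + (⨆ x : ℝ, |φ 0 x|) ≤ M →
      ∀ N : ℝ,
      (∀ t ∈ Icc (0 : ℝ) T, ∀ x : ℝ, (1 + (deriv (φ t) x) ^ 2) ^ ((1 : ℝ) / 2) ≤ N) →
      ∀ t ∈ Icc (0 : ℝ) T,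
        (∫ x : ℝ, (1 + (deriv (φ t) x) ^ 2) ^ (p - 1) * (deriv (deriv (φ t)) x) ^ 2)
          + (∫ τ in (0:ℝ)..t, ∫ x : ℝ,
              (1 + (deriv (φ τ) x) ^ 2) ^ ((p - 1) / 2)
                * (deriv (fun s => deriv (φ s) x) τ) ^ 2)
        ≤ C₀ * N ^ (3 * (1 - p)) := by
  obtain ⟨L, hL⟩ := EE.flux_consts hf (|um| + |up| + M)
  have haa : 0 < EE.aa c₁ CU := div_pos hc1 (by positivity)
  refine ⟨4 / EE.aa c₁ CU ^ 2 * |EE.S3 c₁ c₂ CU M L (|um| + |up| + M)| + 2 * CU ^ 2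
    + 4 / EE.aa c₁ CU * |EE.S3 c₁ c₂ CU M L (|um| + |up| + M)|, ?_, ?_⟩
  rotate_left
  · intro σ hσ hσ0 hσd U sU eqU rU pU bU l2Ux _ l2Uxx _ l2Uxt T hT φ sφ eqφ bφ iφ ubφ _ initBd
      N hN t ht
    have D : EE.Data p c₁ c₂ f um up CU M T σ U φ :=
      ⟨hp0, hp1, hc1, hc12, hf, hconv, hCU, hM, hσ, hσ0, hσd, sU, eqU, rU, pU, bU, l2Ux, l2Uxx,
        l2Uxt, hT, sφ, eqφ, bφ, iφ, ubφ, initBd⟩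
    have hN1 : 1 ≤ N := EE.one_le_N (hN 0 ⟨le_rfl, hT.le⟩ 0)
    have hfin := D.final hL (Real.one_le_rpow hN1 (by linarith : 0 ≤ 1 - p))
      (fun t ht x => EE.om_N hp1 (hN t ht x)) ht
    have hpow : N ^ (3 * (1 - p)) = (N ^ (1 - p)) ^ 3 := by
      rw [mul_comm, Real.rpow_mul (by linarith)]
      exact_mod_cast Real.rpow_natCast (N ^ (1 - p)) 3
    rw [hpow]
    simp only [EE.om_sq] at hfin
    exact hfin
  · positivity
end

section
/- In the setting below, assume in addition 3/7 < p < 1. Then for every M > 0 there exists a constant C₀ > 0, depending only on p, c₁, c₂, C_U, u₋, u₊, f and M (and not on T), such that whenever ‖φ(0,·)‖_{L²} + ‖∂ₓφ(0,·)‖_{L²} + ‖∂ₓ²φ(0,·)‖_{L²} + sup_{x∈ℝ}|φ(0,x)| ≤ M, one has sup_{(t,x)∈[0,T]×ℝ} |∂ₓφ(t,x)| ≤ C₀. -/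
open MeasureTheory Filter Set intervalIntegral

/-- Second-derivative test: at a local maximum the second derivative is nonpositive. -/
lemma second_deriv_nonpos_of_isLocalMax {g : ℝ → ℝ} (hg : ContDiff ℝ (⊤ : ℕ∞) g) {x : ℝ}
    (h : IsLocalMax g x) : deriv (deriv g) x ≤ 0 := by
  by_contra! hpos
  have h1 : deriv g x = 0 := h.deriv_eq_zero
  have hc : ContinuousAt g x := hg.continuous.continuousAt
  have hmin := isLocalMin_of_deriv_deriv_pos hpos h1 hc
  have heq : g =ᶠ[nhds x] fun _ => g x := by
    filter_upwards [h, hmin] with y h1 h2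
    exact le_antisymm h1 h2
  have h3 : deriv g =ᶠ[nhds x] deriv (fun _ => g x) := heq.deriv
  have h4 := h3.deriv_eq
  simp at h4
  linarith

/-- Weak maximum principle on the strip `[0,T] × ℝ`. -/
lemma max_principle (G a b : ℝ → ℝ → ℝ) (T A B m : ℝ)
    (hG : ContDiff ℝ (⊤ : ℕ∞) (fun q : ℝ × ℝ => G q.1 q.2))
    (hB : ∀ t ∈ Icc (0 : ℝ) T, ∀ x, |G t x| ≤ B)
    (ha : ∀ t ∈ Icc (0 : ℝ) T, ∀ x, 0 ≤ a t x ∧ a t x ≤ A)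
    (hb : ∀ t ∈ Icc (0 : ℝ) T, ∀ x, |b t x| ≤ A)
    (heq : ∀ t ∈ Icc (0 : ℝ) T, ∀ x, deriv (fun s => G s x) t
      = a t x * deriv (deriv (G t)) x - b t x * deriv (G t) x)
    (h0 : ∀ x, G 0 x ≤ m) :
    ∀ t ∈ Icc (0 : ℝ) T, ∀ x, G t x ≤ m := by
  intro t₁ ht₁ x₁
  have hT : 0 ≤ T := ht₁.1.trans ht₁.2
  have hA : 0 ≤ A := (abs_nonneg _).trans (hb t₁ ht₁ x₁)
  set K : ℝ := 3 * A + 1 with hK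
  suffices H : ∀ ε > 0, G t₁ x₁ ≤ m + ε * (Real.exp (K * t₁) * (1 + x₁ ^ 2)) by
    apply le_of_forall_pos_le_add
    intro δ hδ
    have hp : 0 < Real.exp (K * t₁) * (1 + x₁ ^ 2) := by positivity
    have := H (δ / (Real.exp (K * t₁) * (1 + x₁ ^ 2))) (by positivity)
    rwa [div_mul_cancel₀ _ hp.ne'] at this
  intro ε hε
  by_contra! hcon
  let W : ℝ → ℝ → ℝ := fun t x => G t x - (m + ε * (Real.exp (K * t) * (1 + x ^ 2)))
  have hW : ContDiff ℝ (⊤ : ℕ∞) (fun q : ℝ × ℝ => W q.1 q.2) := by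
    apply hG.sub
    fun_prop
  have hWpos : 0 < W t₁ x₁ := by simp only [W]; linarith
  -- radius
  set R : ℝ := |x₁| + 1 + (B + |m|) / ε with hR
  have hB0 : 0 ≤ B := (abs_nonneg _).trans (hB t₁ ht₁ x₁)
  have hR1 : |x₁| < R := by
    have : 0 ≤ (B + |m|) / ε := by positivity
    linarith
  have hR1' : 1 ≤ R := by
    have : 0 ≤ (B + |m|) / ε := by positivity
    have := abs_nonneg x₁
    linarith
  have hfar : ∀ t ∈ Icc (0 : ℝ) T, ∀ x, R ≤ |x| → W t x ≤ 0 := by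
    intro t ht x hx
    have h1 : 1 ≤ Real.exp (K * t) := Real.one_le_exp (mul_nonneg (by positivity) ht.1)
    have h2 : R ≤ 1 + x ^ 2 := by
      have : x ^ 2 = |x| ^ 2 := (sq_abs x).symm
      nlinarith
    have h3 : (B + |m|) / ε ≤ R := by
      have := abs_nonneg x₁
      linarith
    have h4 : B + |m| ≤ ε * (Real.exp (K * t) * (1 + x ^ 2)) := by
      calc B + |m| = ε * (1 * ((B + |m|) / ε)) := by field_simp
        _ ≤ ε * (Real.exp (K * t) * (1 + x ^ 2)) := by
          gcongr
          linarith
    have h5 := le_abs_self (G t x)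
    have h6 := hB t ht x
    have h7 := neg_abs_le m
    simp only [W]
    linarith
  have hcomp : IsCompact (Icc (0 : ℝ) T ×ˢ Icc (-R) R) := isCompact_Icc.prod isCompact_Icc
  have hx₁m : x₁ ∈ Icc (-R) R := by
    have := abs_lt.1 hR1
    exact ⟨this.1.le, this.2.le⟩
  obtain ⟨⟨t₀, x₀⟩, hq, hmax⟩ := hcomp.exists_isMaxOn (f := fun q : ℝ × ℝ => W q.1 q.2)
    ⟨(t₁, x₁), ht₁, hx₁m⟩ hW.continuous.continuousOn
  have ht₀ : t₀ ∈ Icc (0 : ℝ) T := hq.1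
  have hx₀ : x₀ ∈ Icc (-R) R := hq.2
  have hmax' : ∀ t ∈ Icc (0 : ℝ) T, ∀ x ∈ Icc (-R) R, W t x ≤ W t₀ x₀ := by
    intro t ht x hx
    exact hmax (show ((t, x) : ℝ × ℝ) ∈ Icc (0 : ℝ) T ×ˢ Icc (-R) R from ⟨ht, hx⟩)
  have hW0 : 0 < W t₀ x₀ := hWpos.trans_le (hmax' _ ht₁ _ hx₁m)
  have hx₀' : |x₀| < R := by
    by_contra! h
    exact absurd (hfar t₀ ht₀ x₀ h) (not_le.2 hW0)
  have ht₀' : 0 < t₀ := by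
    rcases ht₀.1.eq_or_lt with h | h
    · exfalso
      have h1 := h0 x₀
      have h2 : 0 ≤ ε * (Real.exp (K * 0) * (1 + x₀ ^ 2)) := by positivity
      rw [← h] at hW0
      simp only [W] at hW0
      linarith
    · exact h
  -- spatial conditions
  have hGx : ContDiff ℝ (⊤ : ℕ∞) (G t₀) := hG.comp (contDiff_prodMk_right t₀)
  have hGt : ContDiff ℝ (⊤ : ℕ∞) (fun s => G s x₀) := hG.comp (contDiff_prodMk_left x₀)
  have hWx : ContDiff ℝ (⊤ : ℕ∞) (W t₀) := hW.comp (contDiff_prodMk_right t₀)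
  have hloc : IsLocalMax (W t₀) x₀ := by
    have : Ioo (-R) R ∈ nhds x₀ := Ioo_mem_nhds (abs_lt.1 hx₀').1 (abs_lt.1 hx₀').2
    filter_upwards [this] with y hy
    exact hmax' t₀ ht₀ y ⟨hy.1.le, hy.2.le⟩
  set E := Real.exp (K * t₀) with hE
  have hEpos : 0 < E := Real.exp_pos _
  have hd1 : ∀ y, deriv (W t₀) y = deriv (G t₀) y - ε * (E * (2 * y)) := by
    intro y
    have h1 : HasDerivAt (G t₀) (deriv (G t₀) y) y :=
      ((hGx.differentiable (by simp)) y).hasDerivAt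
    have h2 : HasDerivAt (fun y : ℝ => m + ε * (E * (1 + y ^ 2))) (ε * (E * (2 * y))) y := by
      have := ((((hasDerivAt_id y).pow 2).const_add 1).const_mul E).const_mul ε |>.const_add m
      simpa using this
    exact (h1.sub h2).deriv
  have hd2 : deriv (deriv (W t₀)) x₀ = deriv (deriv (G t₀)) x₀ - ε * (E * 2) := by
    have h0 : deriv (W t₀) = fun y => deriv (G t₀) y - ε * (E * (2 * y)) := funext hd1
    rw [h0]
    have hGx' : ContDiff ℝ (⊤ : ℕ∞) (deriv (G t₀)) := by
      apply ContDiff.deriv' 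
      exact hGx.of_le (by simp)
    have h1 : HasDerivAt (deriv (G t₀)) (deriv (deriv (G t₀)) x₀) x₀ :=
      ((hGx'.differentiable (by simp)) x₀).hasDerivAt
    have h2 : HasDerivAt (fun y : ℝ => ε * (E * (2 * y))) (ε * (E * 2)) x₀ := by
      have := (((hasDerivAt_id x₀).const_mul 2).const_mul E).const_mul ε
      simpa using this
    exact (h1.sub h2).deriv
  have hs1 : deriv (G t₀) x₀ = ε * (E * (2 * x₀)) := by
    have := hloc.deriv_eq_zero
    rw [hd1] at this
    linarith
  have hs2 : deriv (deriv (G t₀)) x₀ ≤ ε * (E * 2) := by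
    have := second_deriv_nonpos_of_isLocalMax hWx hloc
    rw [hd2] at this
    linarith
  -- time condition
  have hdt : HasDerivAt (fun s => W s x₀)
      (deriv (fun s => G s x₀) t₀ - ε * (K * E * (1 + x₀ ^ 2))) t₀ := by
    have h1 : HasDerivAt (fun s => G s x₀) (deriv (fun s => G s x₀) t₀) t₀ :=
      ((hGt.differentiable (by simp)) t₀).hasDerivAt
    have h2 : HasDerivAt (fun s : ℝ => m + ε * (Real.exp (K * s) * (1 + x₀ ^ 2)))
        (ε * (K * E * (1 + x₀ ^ 2))) t₀ := by
      have := (((((hasDerivAt_id t₀).const_mul K).exp).mul_const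
        (1 + x₀ ^ 2)).const_mul ε).const_add m
      have hv : Real.exp (K * id t₀) * (K * 1) * (1 + x₀ ^ 2) = K * E * (1 + x₀ ^ 2) := by
        rw [hE, id]
        ring
      rw [hv] at this
      exact this
    exact h1.sub h2
  have hst : 0 ≤ deriv (fun s => G s x₀) t₀ - ε * (K * E * (1 + x₀ ^ 2)) := by
    have hl := hdt.hasDerivWithinAt (s := Iio t₀)
    rw [hasDerivWithinAt_iff_tendsto_slope' (by simp)] at hl
    apply ge_of_tendsto hl
    have : Ioo 0 t₀ ∈ nhdsWithin t₀ (Iio t₀) := Ioo_mem_nhdsLT ht₀'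
    filter_upwards [this] with s hs
    rw [slope_def_field]
    apply div_nonneg_of_nonpos
    · have := hmax' s ⟨hs.1.le, hs.2.le.trans ht₀.2⟩ x₀ hx₀
      linarith
    · linarith [hs.2]
  rw [heq t₀ ht₀ x₀, hs1] at hst
  obtain ⟨ha0, ha1⟩ := ha t₀ ht₀ x₀
  have hb1 := hb t₀ ht₀ x₀
  have hεE : 0 < ε * E := by positivity
  have e1 : a t₀ x₀ * deriv (deriv (G t₀)) x₀ ≤ A * 2 * (ε * E) := by
    calc a t₀ x₀ * deriv (deriv (G t₀)) x₀ ≤ a t₀ x₀ * (ε * (E * 2)) := by gcongr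
      _ ≤ A * (ε * (E * 2)) := by gcongr
      _ = _ := by ring
  have e2 : -(b t₀ x₀ * (2 * x₀)) ≤ A * (1 + x₀ ^ 2) := by
    have : |b t₀ x₀ * (2 * x₀)| ≤ A * (1 + x₀ ^ 2) := by
      rw [abs_mul]
      have : |2 * x₀| ≤ 1 + x₀ ^ 2 := by
        rw [abs_le]; constructor <;> nlinarith [sq_nonneg (x₀ - 1), sq_nonneg (x₀ + 1)]
      gcongr
    exact (neg_le_abs _).trans this
  have e3 : A * 2 + A * (1 + x₀ ^ 2) < K * (1 + x₀ ^ 2) := by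
    rw [hK]
    nlinarith [sq_nonneg x₀, mul_nonneg hA (sq_nonneg x₀)]
  nlinarith [mul_le_mul_of_nonneg_left e2 hεE.le, mul_lt_mul_of_pos_left e3 hεE]

/-- Partial derivative in `x` of a smooth function of two variables is smooth. -/
lemma contDiff_deriv_snd {u : ℝ → ℝ → ℝ}
    (hu : ContDiff ℝ (⊤ : ℕ∞) (fun q : ℝ × ℝ => u q.1 q.2)) :
    ContDiff ℝ (⊤ : ℕ∞) (fun q : ℝ × ℝ => deriv (u q.1) q.2) := by
  have h1 : ContDiff ℝ (⊤ : ℕ∞) (fun q : ℝ × ℝ =>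
      fderiv ℝ (fun q : ℝ × ℝ => u q.1 q.2) q ((0, 1) : ℝ × ℝ)) :=
    (hu.fderiv_right (m := (⊤ : ℕ∞)) (by simp)).clm_apply contDiff_const
  convert h1 using 2 with q
  have h2 : HasFDerivAt (fun q : ℝ × ℝ => u q.1 q.2)
    (fderiv ℝ (fun q : ℝ × ℝ => u q.1 q.2) (q.1, q.2)) (q.1, q.2) :=
    ((hu.differentiable (by simp)) q).hasFDerivAt
  have h3 : HasDerivAt (fun y : ℝ => ((q.1, y) : ℝ × ℝ)) ((0, 1) : ℝ × ℝ) q.2 :=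
    (hasDerivAt_const _ _).prodMk (hasDerivAt_id _)
  exact (h2.comp_hasDerivAt q.2 h3).deriv

/-- Time slice version of the chain rule for partial derivatives. -/
lemma partials_eq {V : ℝ × ℝ → ℝ} (hV : Differentiable ℝ V) (t x : ℝ) :
    deriv (fun y => V (t, y)) x = fderiv ℝ V (t, x) ((0, 1) : ℝ × ℝ) ∧
    deriv (fun s => V (s, x)) t = fderiv ℝ V (t, x) ((1, 0) : ℝ × ℝ) := by
  have h2 : HasFDerivAt V (fderiv ℝ V (t, x)) (t, x) := (hV (t, x)).hasFDerivAt
  constructor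
  · have h3 : HasDerivAt (fun y : ℝ => ((t, y) : ℝ × ℝ)) ((0, 1) : ℝ × ℝ) x :=
      (hasDerivAt_const _ _).prodMk (hasDerivAt_id _)
    exact (h2.comp_hasDerivAt x h3).deriv
  · have h3 : HasDerivAt (fun s : ℝ => ((s, x) : ℝ × ℝ)) ((1, 0) : ℝ × ℝ) t :=
      (hasDerivAt_id _).prodMk (hasDerivAt_const _ _)
    exact (h2.comp_hasDerivAt t h3).deriv

/-- Mixed partial derivatives of a smooth function commute. -/
lemma mixed_partials' {V : ℝ × ℝ → ℝ} (hV : ContDiff ℝ (⊤ : ℕ∞) V) (t x : ℝ) :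
    deriv (fun s => deriv (fun y => V (s, y)) x) t
      = deriv (fun y => deriv (fun s => V (s, y)) t) x := by
  have hVd : Differentiable ℝ V := hV.differentiable (by simp)
  have hDc : ContDiff ℝ (⊤ : ℕ∞) (fderiv ℝ V) := hV.fderiv_right (by simp)
  have h01 : Differentiable ℝ (fun q => fderiv ℝ V q ((0, 1) : ℝ × ℝ)) :=
    (hDc.clm_apply contDiff_const).differentiable (by simp)
  have h10 : Differentiable ℝ (fun q => fderiv ℝ V q ((1, 0) : ℝ × ℝ)) :=
    (hDc.clm_apply contDiff_const).differentiable (by simp)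
  have e1 : (fun s => deriv (fun y => V (s, y)) x)
      = fun s => fderiv ℝ V (s, x) ((0, 1) : ℝ × ℝ) := funext fun s => (partials_eq hVd s x).1
  have e2 : (fun y => deriv (fun s => V (s, y)) t)
      = fun y => fderiv ℝ V (t, y) ((1, 0) : ℝ × ℝ) := funext fun y => (partials_eq hVd t y).2
  have hsymm : IsSymmSndFDerivAt ℝ V (t, x) :=
    hV.contDiffAt.isSymmSndFDerivAt (by
      rw [minSmoothness_of_isRCLikeNormedField]
      exact WithTop.coe_le_coe.2 le_top)
  have hDd : DifferentiableAt ℝ (fderiv ℝ V) (t, x) := hDc.differentiable (by simp) _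
  rw [e1, e2, (partials_eq h01 t x).2, (partials_eq h10 t x).1]
  rw [fderiv_clm_apply hDd (differentiableAt_const _),
    fderiv_clm_apply hDd (differentiableAt_const _)]
  simpa using hsymm (1, 0) (0, 1)

lemma mixed_partials {u : ℝ → ℝ → ℝ}
    (hu : ContDiff ℝ (⊤ : ℕ∞) (fun q : ℝ × ℝ => u q.1 q.2)) (t x : ℝ) :
    deriv (fun s => deriv (u s) x) t = deriv (fun y => deriv (fun s => u s y) t) x :=
  mixed_partials' hu t x

/-- Mean value theorem based at the origin. -/
lemma mvt_origin {σ : ℝ → ℝ} (hσ : ContDiff ℝ (⊤ : ℕ∞) σ) (h0 : σ 0 = 0) (v : ℝ) :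
    ∃ ξ : ℝ, |ξ| ≤ |v| ∧ σ v = deriv σ ξ * v := by
  have hd : Differentiable ℝ σ := hσ.differentiable (by simp)
  rcases lt_trichotomy v 0 with h | h | h
  · obtain ⟨ξ, hξ, he⟩ := exists_deriv_eq_slope σ h hd.continuous.continuousOn
      hd.differentiableOn
    refine ⟨ξ, ?_, ?_⟩
    · rw [abs_of_neg hξ.2, abs_of_neg h]
      linarith [hξ.1]
    · rw [he, h0]
      have : v ≠ 0 := h.ne
      field_simp
      ring
  · exact ⟨0, by simp, by simp [h, h0]⟩
  · obtain ⟨ξ, hξ, he⟩ := exists_deriv_eq_slope σ h hd.continuous.continuousOn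
      hd.differentiableOn
    refine ⟨ξ, ?_, ?_⟩
    · rw [abs_of_pos hξ.1, abs_of_pos h]
      linarith [hξ.2]
    · rw [he, h0]
      have : v ≠ 0 := h.ne'
      field_simp
      ring

lemma sigma_deriv_bounds {p c₁ c₂ : ℝ} (hp1 : p < 1) (hc1 : 0 < c₁) (hc12 : c₁ ≤ c₂)
    {σ : ℝ → ℝ}
    (hb : ∀ v : ℝ, c₁ * (1 + v ^ 2) ^ ((p - 1) / 2) ≤ deriv σ v ∧
        deriv σ v ≤ c₂ * (1 + v ^ 2) ^ ((p - 1) / 2)) (v : ℝ) :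
    0 ≤ deriv σ v ∧ deriv σ v ≤ c₂ := by
  have h1 : 0 ≤ (1 + v ^ 2) ^ ((p - 1) / 2) := by positivity
  have h2 : (1 + v ^ 2) ^ ((p - 1) / 2) ≤ 1 :=
    Real.rpow_le_one_of_one_le_of_nonpos (by nlinarith) (by linarith)
  have hc2 : 0 < c₂ := hc1.trans_le hc12
  constructor
  · exact (mul_nonneg hc1.le h1).trans (hb v).1
  · exact (hb v).2.trans (by nlinarith)

lemma sigma_upper {p c₁ c₂ : ℝ} (hp1 : p < 1) (hc1 : 0 < c₁) (hc12 : c₁ ≤ c₂)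
    {σ : ℝ → ℝ} (hσ : ContDiff ℝ (⊤ : ℕ∞) σ) (h0 : σ 0 = 0)
    (hb : ∀ v : ℝ, c₁ * (1 + v ^ 2) ^ ((p - 1) / 2) ≤ deriv σ v ∧
        deriv σ v ≤ c₂ * (1 + v ^ 2) ^ ((p - 1) / 2)) (v : ℝ) :
    |σ v| ≤ c₂ * |v| := by
  obtain ⟨ξ, -, he⟩ := mvt_origin hσ h0 v
  obtain ⟨h1, h2⟩ := sigma_deriv_bounds hp1 hc1 hc12 hb ξ
  rw [he, abs_mul, abs_of_nonneg h1]
  gcongr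

/-- Coercivity of `σ`: a bound on `σ v` gives a bound on `v` (this uses `p > 0`). -/
lemma sigma_coercive {p c₁ c₂ : ℝ} (hp0 : 0 < p) (hp1 : p < 1) (hc1 : 0 < c₁) (hc12 : c₁ ≤ c₂)
    {σ : ℝ → ℝ} (hσ : ContDiff ℝ (⊤ : ℕ∞) σ) (h0 : σ 0 = 0)
    (hb : ∀ v : ℝ, c₁ * (1 + v ^ 2) ^ ((p - 1) / 2) ≤ deriv σ v ∧
        deriv σ v ≤ c₂ * (1 + v ^ 2) ^ ((p - 1) / 2)) (v m : ℝ) (hm : |σ v| ≤ m) :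
    |v| ≤ 1 + (m / (c₁ * 2 ^ ((p - 1) / 2))) ^ (1 / p) := by
  have hm0 : 0 ≤ m := (abs_nonneg _).trans hm
  by_cases hv : |v| ≤ 1
  · have : 0 ≤ (m / (c₁ * 2 ^ ((p - 1) / 2))) ^ (1 / p) := by positivity
    linarith
  push Not at hv
  have hv0 : 0 < |v| := by linarith
  obtain ⟨ξ, hξ, he⟩ := mvt_origin hσ h0 v
  obtain ⟨h1, h2⟩ := sigma_deriv_bounds hp1 hc1 hc12 hb ξ
  rw [he, abs_mul, abs_of_nonneg h1] at hm
  have hξ2 : ξ ^ 2 ≤ v ^ 2 := sq_le_sq.2 hξ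
  have hle : 1 + ξ ^ 2 ≤ 2 * |v| ^ 2 := by
    rw [sq_abs]
    have : 1 ≤ v ^ 2 := by rw [← sq_abs]; nlinarith
    linarith
  have h3 : (2 * |v| ^ 2) ^ ((p - 1) / 2) ≤ (1 + ξ ^ 2) ^ ((p - 1) / 2) :=
    Real.rpow_le_rpow_of_nonpos (by positivity) hle (by linarith)
  have h4 : (2 * |v| ^ 2) ^ ((p - 1) / 2) * |v| = 2 ^ ((p - 1) / 2) * |v| ^ p := by
    rw [Real.mul_rpow (by norm_num) (by positivity), mul_assoc]
    congr 1
    rw [← Real.rpow_natCast, ← Real.rpow_mul hv0.le]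
    nth_rewrite 2 [← Real.rpow_one |v|]
    rw [← Real.rpow_add hv0]
    congr 1
    push_cast
    ring
  have h5 : c₁ * 2 ^ ((p - 1) / 2) * |v| ^ p ≤ m := by
    calc c₁ * 2 ^ ((p - 1) / 2) * |v| ^ p
        = c₁ * (2 * |v| ^ 2) ^ ((p - 1) / 2) * |v| := by rw [mul_assoc, ← h4]; ring
      _ ≤ c₁ * (1 + ξ ^ 2) ^ ((p - 1) / 2) * |v| := by gcongr
      _ ≤ deriv σ ξ * |v| := by gcongr; exact (hb ξ).1
      _ ≤ m := hm
  have hk : 0 < c₁ * (2 : ℝ) ^ ((p - 1) / 2) := by positivity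
  have h6 : |v| ^ p ≤ m / (c₁ * 2 ^ ((p - 1) / 2)) := by
    rw [le_div_iff₀ hk]
    linarith
  have h7 : (|v| ^ p) ^ (1 / p) ≤ (m / (c₁ * 2 ^ ((p - 1) / 2))) ^ (1 / p) :=
    Real.rpow_le_rpow (by positivity) h6 (by positivity)
  rw [← Real.rpow_mul hv0.le, mul_one_div_cancel hp0.ne', Real.rpow_one] at h7
  linarith

/-- One dimensional Sobolev inequality. -/
lemma sobolev_sq {g : ℝ → ℝ} (hg : ContDiff ℝ (⊤ : ℕ∞) g)
    (h1 : Integrable (fun x => g x ^ 2)) (h2 : Integrable (fun x => deriv g x ^ 2))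
    (hlim : Tendsto g atBot (nhds 0)) (x : ℝ) :
    g x ^ 2 ≤ (∫ x, g x ^ 2) + ∫ x, deriv g x ^ 2 := by
  have hd : Differentiable ℝ g := hg.differentiable (by simp)
  have hgc : Continuous g := hg.continuous
  have hdc : Continuous (deriv g) := hg.continuous_deriv (by simp)
  have hsum : Integrable (fun x => g x ^ 2 + deriv g x ^ 2) := h1.add h2
  have hint : Integrable (fun x => 2 * g x * deriv g x) := by
    apply hsum.mono' (by fun_prop)
    refine Eventually.of_forall fun y => ?_
    rw [Real.norm_eq_abs, abs_le]
    constructor <;> nlinarith [sq_nonneg (g y - deriv g y), sq_nonneg (g y + deriv g y)]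
  have hder : ∀ y ∈ Iic x, HasDerivAt (fun y => g y ^ 2) (2 * g y * deriv g y) y := by
    intro y _
    simpa using (hd y).hasDerivAt.fun_pow 2
  have hFTC := integral_Iic_of_hasDerivAt_of_tendsto' hder hint.integrableOn
    (m := 0) (by simpa using hlim.pow 2)
  have hle : ∫ y in Iic x, 2 * g y * deriv g y ≤ ∫ y in Iic x, (g y ^ 2 + deriv g y ^ 2) := by
    apply setIntegral_mono hint.integrableOn hsum.integrableOn
    intro y
    simp only
    nlinarith [sq_nonneg (g y - deriv g y)]
  have hle2 : ∫ y in Iic x, (g y ^ 2 + deriv g y ^ 2) ≤ ∫ y, (g y ^ 2 + deriv g y ^ 2) :=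
    setIntegral_le_integral hsum (Eventually.of_forall fun y => by positivity)
  rw [integral_add h1 h2] at hle2
  linarith

/-- Gradient bound for the viscous conservation law `u_t + f(u)_x = σ(u_x)_x`: the function
`u` and the flux `σ(u_x) - f(u)` both satisfy a maximum principle. -/
lemma gradient_bound {p c₁ c₂ : ℝ} (hp0 : 0 < p) (hp1 : p < 1) (hc1 : 0 < c₁) (hc12 : c₁ ≤ c₂)
    {f : ℝ → ℝ} (hf : ContDiff ℝ (⊤ : ℕ∞) f)
    {σ : ℝ → ℝ} (hσ : ContDiff ℝ (⊤ : ℕ∞) σ) (h0 : σ 0 = 0)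
    (hb : ∀ v : ℝ, c₁ * (1 + v ^ 2) ^ ((p - 1) / 2) ≤ deriv σ v ∧
        deriv σ v ≤ c₂ * (1 + v ^ 2) ^ ((p - 1) / 2))
    {A₀ D Kf : ℝ} (hKf : ∀ z, |z| ≤ A₀ → |f z| ≤ Kf)
    {u : ℝ → ℝ → ℝ} (hu : ContDiff ℝ (⊤ : ℕ∞) (fun q : ℝ × ℝ => u q.1 q.2))
    {T B : ℝ} (hB : ∀ t ∈ Icc (0 : ℝ) T, ∀ x, |u t x| ≤ B ∧ |deriv (u t) x| ≤ B)
    (heq : ∀ t ∈ Icc (0 : ℝ) T, ∀ x, deriv (fun s => u s x) t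
      = deriv (fun y => σ (deriv (u t) y) - f (u t y)) x)
    (hu0 : ∀ x, |u 0 x| ≤ A₀) (hux0 : ∀ x, |deriv (u 0) x| ≤ D) :
    ∀ t ∈ Icc (0 : ℝ) T, ∀ x,
      |deriv (u t) x| ≤ 1 + ((c₂ * D + Kf + Kf) / (c₁ * 2 ^ ((p - 1) / 2))) ^ (1 / p) := by
  have hc2 : 0 < c₂ := hc1.trans_le hc12
  have hux : ContDiff ℝ (⊤ : ℕ∞) (fun q : ℝ × ℝ => deriv (u q.1) q.2) := contDiff_deriv_snd hu
  -- the flux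
  let F : ℝ → ℝ → ℝ := fun t x => σ (deriv (u t) x) - f (u t x)
  have hF : ContDiff ℝ (⊤ : ℕ∞) (fun q : ℝ × ℝ => F q.1 q.2) :=
    (hσ.comp hux).sub (hf.comp hu)
  have hfd : Differentiable ℝ f := hf.differentiable (by simp)
  have hσd : Differentiable ℝ σ := hσ.differentiable (by simp)
  have hu_x : ∀ t, ContDiff ℝ (⊤ : ℕ∞) (u t) := fun t => hu.comp (contDiff_prodMk_right t)
  have hux_x : ∀ t, ContDiff ℝ (⊤ : ℕ∞) (deriv (u t)) :=
    fun t => hux.comp (contDiff_prodMk_right t)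
  have hu_t : ∀ x, ContDiff ℝ (⊤ : ℕ∞) (fun s => u s x) :=
    fun x => hu.comp (contDiff_prodMk_left x)
  have hux_t : ∀ x, ContDiff ℝ (⊤ : ℕ∞) (fun s => deriv (u s) x) :=
    fun x => hux.comp (contDiff_prodMk_left x)
  -- bounds on coefficients
  obtain ⟨Kd, hKd⟩ : ∃ Kd, ∀ z ∈ Icc (-B) B, |deriv f z| ≤ Kd := by
    obtain ⟨C, hC⟩ := (isCompact_Icc (a := -B) (b := B)).exists_bound_of_continuousOn
      (hf.continuous_deriv (by simp)).continuousOn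
    exact ⟨C, hC⟩
  obtain ⟨Kb, hKb⟩ : ∃ Kb, ∀ z ∈ Icc (-B) B, |f z| ≤ Kb := by
    obtain ⟨C, hC⟩ := (isCompact_Icc (a := -B) (b := B)).exists_bound_of_continuousOn
      hf.continuous.continuousOn
    exact ⟨C, hC⟩
  have ha : ∀ t ∈ Icc (0 : ℝ) T, ∀ x, 0 ≤ deriv σ (deriv (u t) x) ∧
      deriv σ (deriv (u t) x) ≤ max c₂ Kd := fun t _ x =>
    ⟨(sigma_deriv_bounds hp1 hc1 hc12 hb _).1,
      (sigma_deriv_bounds hp1 hc1 hc12 hb _).2.trans (le_max_left _ _)⟩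
  have hbb : ∀ t ∈ Icc (0 : ℝ) T, ∀ x, |deriv f (u t x)| ≤ max c₂ Kd := fun t ht x =>
    (hKd _ (abs_le.1 (hB t ht x).1)).trans (le_max_right _ _)
  -- the equation for u
  have hFx : ∀ t x, deriv (F t) x
      = deriv σ (deriv (u t) x) * deriv (deriv (u t)) x - deriv f (u t x) * deriv (u t) x := by
    intro t x
    have h1 : HasDerivAt (deriv (u t)) (deriv (deriv (u t)) x) x :=
      ((hux_x t).differentiable (by simp) x).hasDerivAt
    have h2 : HasDerivAt (u t) (deriv (u t) x) x :=
      ((hu_x t).differentiable (by simp) x).hasDerivAt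
    exact (((hσd _).hasDerivAt.comp x h1).sub ((hfd _).hasDerivAt.comp x h2)).deriv
  have hequ : ∀ t ∈ Icc (0 : ℝ) T, ∀ x, deriv (fun s => u s x) t
      = deriv σ (deriv (u t) x) * deriv (deriv (u t)) x - deriv f (u t x) * deriv (u t) x := by
    intro t ht x
    rw [heq t ht x]
    exact hFx t x
  have heqF : ∀ t ∈ Icc (0 : ℝ) T, ∀ x, deriv (fun s => F s x) t
      = deriv σ (deriv (u t) x) * deriv (deriv (F t)) x - deriv f (u t x) * deriv (F t) x := by
    intro t ht x
    have h1 : HasDerivAt (fun s => deriv (u s) x) (deriv (fun s => deriv (u s) x) t) t :=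
      ((hux_t x).differentiable (by simp) t).hasDerivAt
    have h2 : HasDerivAt (fun s => u s x) (deriv (fun s => u s x) t) t :=
      ((hu_t x).differentiable (by simp) t).hasDerivAt
    have h3 : deriv (fun s => F s x) t
        = deriv σ (deriv (u t) x) * deriv (fun s => deriv (u s) x) t
          - deriv f (u t x) * deriv (fun s => u s x) t := by
      have h4 := (hσd (deriv (u t) x)).hasDerivAt.comp t h1
      have h5 := (hfd (u t x)).hasDerivAt.comp t h2
      exact (h4.sub h5).deriv
    have h6 : (fun y => deriv (fun s => u s y) t) = deriv (F t) := funext fun y => heq t ht y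
    rw [h3, mixed_partials hu, h6]
    have h7 : deriv (fun s => u s x) t = deriv (F t) x := heq t ht x
    rw [h7]
  -- negated equations
  have hneg : ∀ (G : ℝ → ℝ → ℝ) (m B' : ℝ),
      ContDiff ℝ (⊤ : ℕ∞) (fun q : ℝ × ℝ => G q.1 q.2) →
      (∀ t ∈ Icc (0 : ℝ) T, ∀ x, |G t x| ≤ B') →
      (∀ t ∈ Icc (0 : ℝ) T, ∀ x, deriv (fun s => G s x) t
        = deriv σ (deriv (u t) x) * deriv (deriv (G t)) x
          - deriv f (u t x) * deriv (G t) x) →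
      (∀ x, |G 0 x| ≤ m) → ∀ t ∈ Icc (0 : ℝ) T, ∀ x, |G t x| ≤ m := by
    intro G m B' hG hGB hGeq hG0 t ht x
    rw [abs_le]
    constructor
    · have := max_principle (fun t x => -G t x) (fun t x => deriv σ (deriv (u t) x))
        (fun t x => deriv f (u t x)) T (max c₂ Kd) B' m hG.neg
        (by simpa using hGB) ha hbb
        (by
          intro t ht x
          have e1 : deriv (fun y => -G t y) = fun y => -deriv (G t) y :=
            funext fun y => deriv.fun_neg
          have e2 : deriv (fun s => -G s x) t = -deriv (fun s => G s x) t := deriv.fun_neg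
          have e3 : deriv (fun y => -deriv (G t) y) x = -deriv (deriv (G t)) x := deriv.fun_neg
          rw [e2, e1, e3, hGeq t ht x]
          ring)
        (fun x => (neg_le_abs _).trans (hG0 x)) t ht x
      linarith
    · exact max_principle G (fun t x => deriv σ (deriv (u t) x))
        (fun t x => deriv f (u t x)) T (max c₂ Kd) B' m hG hGB ha hbb hGeq
        (fun x => (le_abs_self _).trans (hG0 x)) t ht x
  have hub := hneg u A₀ B hu (fun t ht x => (hB t ht x).1) hequ hu0
  have hFb := hneg F (c₂ * D + Kf) (c₂ * B + Kb) hF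
    (by
      intro t ht x
      have h1 := sigma_upper hp1 hc1 hc12 hσ h0 hb (deriv (u t) x)
      have h2 := hKb _ (abs_le.1 (hB t ht x).1)
      have h3 := abs_sub (σ (deriv (u t) x)) (f (u t x))
      have h4 := mul_le_mul_of_nonneg_left (hB t ht x).2 hc2.le
      simp only [F]
      linarith) heqF
    (by
      intro x
      have h1 := sigma_upper hp1 hc1 hc12 hσ h0 hb (deriv (u 0) x)
      have h2 := hKf _ (hu0 x)
      have h3 := abs_sub (σ (deriv (u 0) x)) (f (u 0 x))
      have h4 := mul_le_mul_of_nonneg_left (hux0 x) hc2.le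
      simp only [F]
      linarith)
  intro t ht x
  apply sigma_coercive hp0 hp1 hc1 hc12 hσ h0 hb
  have h1 : σ (deriv (u t) x) = F t x + f (u t x) := by simp [F]
  rw [h1]
  exact (abs_add_le _ _).trans (add_le_add (hFb t ht x) (hKf _ (hub t ht x)))

/-- Lemma 6.1 (uniform bound on `∂ₓφ` via the Kanel'-type argument, requiring
`3/7 < p < 1`): if `‖φ(0)‖_{L²} + ‖∂ₓφ(0)‖_{L²} + ‖∂ₓ²φ(0)‖_{L²} + sup|φ(0)| ≤ M` then
`|∂ₓφ(t,x)| ≤ C₀` on `[0,T]×ℝ`, with `C₀` depending only on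
`p, c₁, c₂, CU, um, up, f, M` (not on `T`). -/
theorem uniform_bound_on_derivative
    (p c₁ c₂ : ℝ) (hp0 : 0 < p) (hp1 : p < 1) (hp37 : 3 / 7 < p) (hc1 : 0 < c₁) (hc12 : c₁ ≤ c₂)
    (f : ℝ → ℝ) (hf : ContDiff ℝ (⊤ : ℕ∞) f) (hconv : ∀ u : ℝ, 0 < deriv (deriv f) u)
    (um up CU : ℝ) (hu : um < up) (hCU : 0 < CU)
    (M : ℝ) (hM : 0 < M) :
    ∃ C₀ : ℝ, 0 < C₀ ∧
      ∀ σ : ℝ → ℝ, ContDiff ℝ (⊤ : ℕ∞) σ → σ 0 = 0 →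
      (∀ v : ℝ, c₁ * (1 + v ^ 2) ^ ((p - 1) / 2) ≤ deriv σ v ∧
        deriv σ v ≤ c₂ * (1 + v ^ 2) ^ ((p - 1) / 2)) →
      ∀ U : ℝ → ℝ → ℝ, ContDiff ℝ (⊤ : ℕ∞) (fun q : ℝ × ℝ => U q.1 q.2) →
      (∀ t : ℝ, 0 ≤ t → ∀ x : ℝ,
        deriv (fun s => U s x) t + deriv (fun y => f (U t y)) x = 0) →
      (∀ t : ℝ, 0 ≤ t → ∀ x : ℝ, um < U t x ∧ U t x < up) →
      (∀ t : ℝ, 0 ≤ t → ∀ x : ℝ, 0 < deriv (U t) x) →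
      (∀ t : ℝ, 0 ≤ t → ∀ x : ℝ, deriv (U t) x ≤ CU * (1 + t)⁻¹) →
      (∀ t : ℝ, 0 ≤ t → L2norm (deriv (U t)) ≤ CU * (1 + t) ^ (-(1 : ℝ) / 2)) →
      (∀ t : ℝ, 0 ≤ t → (∫ x : ℝ, |deriv (deriv (U t)) x|) ≤ CU * (1 + t)⁻¹) →
      (∀ t : ℝ, 0 ≤ t → ∀ x : ℝ,
        L2norm (deriv (deriv (U t))) + |deriv (deriv (U t)) x|
          ≤ CU * (1 + t) ^ (-(9 : ℝ) / 8)) →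
      (∀ t : ℝ, 0 ≤ t →
        L2norm (deriv (deriv (deriv (U t)))) ≤ CU * (1 + t) ^ (-(9 : ℝ) / 8)) →
      (∀ t : ℝ, 0 ≤ t → ∀ x : ℝ,
        L2norm (fun y => deriv (fun s => deriv (U s) y) t)
          + |deriv (fun s => deriv (U s) x) t| ≤ CU * (1 + t)⁻¹) →
      ∀ T : ℝ, 0 < T →
      ∀ φ : ℝ → ℝ → ℝ, ContDiff ℝ (⊤ : ℕ∞) (fun q : ℝ × ℝ => φ q.1 q.2) →
      (∀ t ∈ Icc (0 : ℝ) T, ∀ x : ℝ,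
        deriv (fun s => φ s x) t
          + deriv (fun y => f (U t y + φ t y) - f (U t y)) x
          - deriv (fun y => σ (deriv (U t) y + deriv (φ t) y) - σ (deriv (U t) y)) x
        = deriv (fun y => σ (deriv (U t) y)) x) →
      (∃ B : ℝ, ∀ t ∈ Icc (0 : ℝ) T, ∀ x : ℝ,
        |φ t x| + |deriv (φ t) x| + |deriv (deriv (φ t)) x|
          + |deriv (deriv (deriv (φ t))) x| + |deriv (fun s => deriv (φ s) x) t| ≤ B) →
      (∀ t ∈ Icc (0 : ℝ) T,
        Integrable (fun x : ℝ => (φ t x) ^ 2) ∧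
        Integrable (fun x : ℝ => (deriv (φ t) x) ^ 2) ∧
        Integrable (fun x : ℝ => (deriv (deriv (φ t)) x) ^ 2) ∧
        Integrable (fun x : ℝ => (deriv (deriv (deriv (φ t))) x) ^ 2) ∧
        Integrable (fun x : ℝ => (deriv (fun s => deriv (φ s) x) t) ^ 2)) →
      (∃ B : ℝ, ∀ t ∈ Icc (0 : ℝ) T,
        (∫ x : ℝ, (φ t x) ^ 2) + (∫ x : ℝ, (deriv (φ t) x) ^ 2)
          + (∫ x : ℝ, (deriv (deriv (φ t)) x) ^ 2)
          + (∫ x : ℝ, (deriv (deriv (deriv (φ t))) x) ^ 2)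
          + (∫ x : ℝ, (deriv (fun s => deriv (φ s) x) t) ^ 2) ≤ B) →
      (∀ t ∈ Icc (0 : ℝ) T,
        Tendsto (φ t) atTop (nhds 0) ∧ Tendsto (φ t) atBot (nhds 0) ∧
        Tendsto (deriv (φ t)) atTop (nhds 0) ∧ Tendsto (deriv (φ t)) atBot (nhds 0) ∧
        Tendsto (deriv (deriv (φ t))) atTop (nhds 0) ∧
        Tendsto (deriv (deriv (φ t))) atBot (nhds 0)) →
      L2norm (φ 0) + L2norm (deriv (φ 0)) + L2norm (deriv (deriv (φ 0)))
        + (⨆ x : ℝ, |φ 0 x|) ≤ M →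
      ∀ t ∈ Icc (0 : ℝ) T, ∀ x : ℝ, |deriv (φ t) x| ≤ C₀ := by
  set A₀ : ℝ := |um| + |up| + M with hA₀
  set D : ℝ := CU + 2 * M with hD
  obtain ⟨Kf, hKf⟩ : ∃ Kf, ∀ z, |z| ≤ A₀ → |f z| ≤ Kf := by
    obtain ⟨C, hC⟩ := (isCompact_Icc (a := -A₀) (b := A₀)).exists_bound_of_continuousOn
      hf.continuous.continuousOn
    exact ⟨C, fun z hz => hC z (abs_le.1 hz)⟩
  have hKf0 : 0 ≤ Kf := (abs_nonneg _).trans (hKf 0 (by rw [abs_zero]; positivity))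
  have hc2 : 0 < c₂ := hc1.trans_le hc12
  refine ⟨1 + ((c₂ * D + Kf + Kf) / (c₁ * 2 ^ ((p - 1) / 2))) ^ (1 / p) + CU, by positivity, ?_⟩
  intro σ hσ hσ0 hσb U hU hUeq hUb hUpos hUx _ _ _ _ _ T hT φ hφ heq hbd hint _ hlim hinit t ht x
  obtain ⟨B, hB⟩ := hbd
  have h0T : (0 : ℝ) ∈ Icc (0 : ℝ) T := ⟨le_rfl, hT.le⟩
  have hU_x : ∀ t, ContDiff ℝ (⊤ : ℕ∞) (U t) := fun t => hU.comp (contDiff_prodMk_right t)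
  have hφ_x : ∀ t, ContDiff ℝ (⊤ : ℕ∞) (φ t) := fun t => hφ.comp (contDiff_prodMk_right t)
  have hU_t : ∀ x, ContDiff ℝ (⊤ : ℕ∞) (fun s => U s x) :=
    fun x => hU.comp (contDiff_prodMk_left x)
  have hφ_t : ∀ x, ContDiff ℝ (⊤ : ℕ∞) (fun s => φ s x) :=
    fun x => hφ.comp (contDiff_prodMk_left x)
  have hUx_x : ∀ t, ContDiff ℝ (⊤ : ℕ∞) (deriv (U t)) :=
    fun t => (contDiff_deriv_snd hU).comp (contDiff_prodMk_right t)
  have hφx_x : ∀ t, ContDiff ℝ (⊤ : ℕ∞) (deriv (φ t)) :=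
    fun t => (contDiff_deriv_snd hφ).comp (contDiff_prodMk_right t)
  have hfd : Differentiable ℝ f := hf.differentiable (by simp)
  have hσd : Differentiable ℝ σ := hσ.differentiable (by simp)
  let u : ℝ → ℝ → ℝ := fun t x => U t x + φ t x
  have hu : ContDiff ℝ (⊤ : ℕ∞) (fun q : ℝ × ℝ => u q.1 q.2) := hU.add hφ
  have hux : ∀ t, deriv (u t) = fun y => deriv (U t) y + deriv (φ t) y := by
    intro t
    funext y
    exact deriv_fun_add ((hU_x t).differentiable (by simp) y)
      ((hφ_x t).differentiable (by simp) y)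
  have hUx' : ∀ t ∈ Icc (0 : ℝ) T, ∀ x, |deriv (U t) x| ≤ CU := by
    intro t ht x
    rw [abs_of_pos (hUpos t ht.1 x)]
    refine (hUx t ht.1 x).trans ?_
    have : (1 + t)⁻¹ ≤ 1 := inv_le_one_of_one_le₀ (by linarith [ht.1])
    nlinarith
  have hUb' : ∀ t ∈ Icc (0 : ℝ) T, ∀ x, |U t x| ≤ |um| + |up| := by
    intro t ht x
    obtain ⟨h1, h2⟩ := hUb t ht.1 x
    rw [abs_le]
    constructor
    · linarith [neg_abs_le um, abs_nonneg up]
    · linarith [le_abs_self up, abs_nonneg um]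
  have hequ : ∀ t ∈ Icc (0 : ℝ) T, ∀ x, deriv (fun s => u s x) t
      = deriv (fun y => σ (deriv (u t) y) - f (u t y)) x := by
    intro t ht x
    have dU : DifferentiableAt ℝ (U t) x := (hU_x t).differentiable (by simp) x
    have dφ : DifferentiableAt ℝ (φ t) x := (hφ_x t).differentiable (by simp) x
    have dUx : DifferentiableAt ℝ (deriv (U t)) x := (hUx_x t).differentiable (by simp) x
    have dφx : DifferentiableAt ℝ (deriv (φ t)) x := (hφx_x t).differentiable (by simp) x
    have d1 : DifferentiableAt ℝ (fun y => f (U t y + φ t y)) x := (hfd _).fun_comp' x (dU.add dφ)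
    have d2 : DifferentiableAt ℝ (fun y => f (U t y)) x := (hfd _).fun_comp' x dU
    have d3 : DifferentiableAt ℝ (fun y => σ (deriv (U t) y + deriv (φ t) y)) x :=
      (hσd _).fun_comp' x (dUx.add dφx)
    have d4 : DifferentiableAt ℝ (fun y => σ (deriv (U t) y)) x := (hσd _).fun_comp' x dUx
    have e1 := heq t ht x
    rw [deriv_fun_sub d1 d2, deriv_fun_sub d3 d4] at e1
    have e2 := hUeq t ht.1 x
    have e3 : deriv (fun s => u s x) t = deriv (fun s => U s x) t + deriv (fun s => φ s x) t :=
      deriv_fun_add ((hU_t x).differentiable (by simp) t) ((hφ_t x).differentiable (by simp) t)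
    rw [hux t, e3]
    have e4 : deriv (fun y => σ (deriv (U t) y + deriv (φ t) y) - f (u t y)) x
        = deriv (fun y => σ (deriv (U t) y + deriv (φ t) y)) x
          - deriv (fun y => f (U t y + φ t y)) x := deriv_fun_sub d3 d1
    rw [e4]
    linarith
  have hBu : ∀ t ∈ Icc (0 : ℝ) T, ∀ x,
      |u t x| ≤ |um| + |up| + CU + B ∧ |deriv (u t) x| ≤ |um| + |up| + CU + B := by
    intro t ht x
    have h1 := hB t ht x
    have n1 := abs_nonneg (φ t x)
    have n2 := abs_nonneg (deriv (φ t) x)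
    have n3 := abs_nonneg (deriv (deriv (φ t)) x)
    have n4 := abs_nonneg (deriv (deriv (deriv (φ t))) x)
    have n5 := abs_nonneg (deriv (fun s => deriv (φ s) x) t)
    have n6 := abs_nonneg um
    have n7 := abs_nonneg up
    constructor
    · have h2 := abs_add_le (U t x) (φ t x)
      have h3 := hUb' t ht x
      simp only [u]
      linarith
    · rw [hux t]
      have h2 := abs_add_le (deriv (U t) x) (deriv (φ t) x)
      have h3 := hUx' t ht x
      simp only
      linarith
  -- initial data
  have hL2nn : ∀ g : ℝ → ℝ, 0 ≤ L2norm g := fun g =>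
    Real.rpow_nonneg (integral_nonneg fun x => sq_nonneg _) _
  have hL2sq : ∀ g : ℝ → ℝ, L2norm g ≤ M → ∫ x, g x ^ 2 ≤ M ^ 2 := by
    intro g hg
    have hI : 0 ≤ ∫ x, g x ^ 2 := integral_nonneg fun x => sq_nonneg _
    have h1 : L2norm g ^ 2 = ∫ x, g x ^ 2 := by
      unfold L2norm
      rw [← Real.sqrt_eq_rpow, Real.sq_sqrt hI]
    rw [← h1]
    exact pow_le_pow_left₀ (hL2nn g) hg 2
  have hsup0 : 0 ≤ ⨆ x : ℝ, |φ 0 x| := Real.iSup_nonneg fun x => abs_nonneg _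
  have hφ0 : ∀ x, |φ 0 x| ≤ M := by
    intro x
    have hbdd : BddAbove (range fun x : ℝ => |φ 0 x|) := by
      refine ⟨B, ?_⟩
      rintro _ ⟨y, rfl⟩
      have h1 := hB 0 h0T y
      have n2 := abs_nonneg (deriv (φ 0) y)
      have n3 := abs_nonneg (deriv (deriv (φ 0)) y)
      have n4 := abs_nonneg (deriv (deriv (deriv (φ 0))) y)
      have n5 := abs_nonneg (deriv (fun s => deriv (φ s) y) 0)
      simp only
      linarith
    have h1 := le_ciSup hbdd x
    linarith [hL2nn (φ 0), hL2nn (deriv (φ 0)), hL2nn (deriv (deriv (φ 0)))]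
  have hφx0 : ∀ x, |deriv (φ 0) x| ≤ 2 * M := by
    intro x
    obtain ⟨_, i1, i2, _, _⟩ := hint 0 h0T
    obtain ⟨_, _, _, l4, _, _⟩ := hlim 0 h0T
    have h1 := sobolev_sq (hφx_x 0) i1 i2 l4 x
    have h2 := hL2sq (deriv (φ 0))
      (by linarith [hL2nn (φ 0), hL2nn (deriv (φ 0)), hL2nn (deriv (deriv (φ 0)))])
    have h3 := hL2sq (deriv (deriv (φ 0)))
      (by linarith [hL2nn (φ 0), hL2nn (deriv (φ 0)), hL2nn (deriv (deriv (φ 0)))])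
    apply abs_le_of_sq_le_sq _ (by positivity)
    nlinarith
  have hu0 : ∀ x, |u 0 x| ≤ A₀ := fun x =>
    (abs_add_le _ _).trans (add_le_add (hUb' 0 h0T x) (hφ0 x))
  have hux0 : ∀ x, |deriv (u 0) x| ≤ D := by
    intro x
    rw [hux 0]
    exact (abs_add_le _ _).trans (add_le_add (hUx' 0 h0T x) (hφx0 x))
  have key := gradient_bound hp0 hp1 hc1 hc12 hf hσ hσ0 hσb hKf hu hBu hequ hu0 hux0 t ht x
  rw [hux t] at key
  have h1 : |deriv (φ t) x| ≤ |deriv (U t) x + deriv (φ t) x| + |deriv (U t) x| := by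
    have := abs_sub (deriv (U t) x + deriv (φ t) x) (deriv (U t) x)
    simpa using this
  have h2 := hUx' t ht x
  simp only at key
  linarith
end
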